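/- arXiv:1402.1228 — 4 statements merged into one kernel-verified Lean document; each statement's English description precedes it below -/
import Mathlib

section
/- Let p be a prime with p ≡ 1 (mod 8). Then there exist integers x, y with p = x² + 32y² if and only if (2/p)₄ = (p/2)₄. -/
/-!
Since `-2` is a square modulo `p`, Thue's lemma gives `p = a² + 2b²`. From `a² ≡ -2b² (mod p)`,
raising to the even power `(p - 1) / 4` gives `J(a | p) = 2 ^ ((p - 1) / 4) * J(b | p)`.
By reciprocity `J(b | p) = 1`, because `p ≡ a² (mod b)`, and `J(a | p) = J(2 | a)`, because
`p ≡ 2b² (mod a)`. So the quartic symbol of `2` is `J(2 | a) = (-1) ^ ((a² - 1) / 8)`. Modulo `4`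
one sees that `b = 2c`, so `(-1) ^ ((p - 1) / 8) = J(2 | a) * (-1) ^ c`. The two symbols therefore
agree exactly when `c` is even, for every representation `p = a² + 8c²`.
-/

open scoped NumberTheorySymbols

theorem thue_exists_abs_lt_cast_eq_mul {n X Y : ℕ} [NeZero n] (hn : n < X * Y) (k : ZMod n) :
    ∃ u v : ℤ, |u| < X ∧ |v| < Y ∧ (u ≠ 0 ∨ v ≠ 0) ∧ (u : ZMod n) = k * v := by
  have hcard : Fintype.card (ZMod n) < Fintype.card (Fin X × Fin Y) := by
    simpa [ZMod.card] using hn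
  obtain ⟨⟨s, t⟩, ⟨s', t'⟩, hne, heq⟩ := Fintype.exists_ne_map_eq_of_card_lt
    (fun z : Fin X × Fin Y ↦ ((z.1 : ℕ) : ZMod n) - k * ((z.2 : ℕ) : ZMod n)) hcard
  have hne' : (s : ℕ) ≠ s' ∨ (t : ℕ) ≠ t' := by
    simpa only [ne_eq, Prod.mk.injEq, Fin.ext_iff, not_and_or] using hne
  refine ⟨(s : ℕ) - (s' : ℕ), (t : ℕ) - (t' : ℕ), ?_, ?_, by omega, ?_⟩
  · rw [abs_lt]; omega
  · rw [abs_lt]; omega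
  · push_cast
    linear_combination heq

theorem exists_sq_le_dvd_sq_add_mul_sq {n : ℕ} [NeZero n] {d : ℤ}
    (h : IsSquare (-d : ZMod n)) :
    ∃ u v : ℤ, u ^ 2 ≤ n ∧ v ^ 2 ≤ n ∧ (u ≠ 0 ∨ v ≠ 0) ∧ (n : ℤ) ∣ u ^ 2 + d * v ^ 2 := by
  obtain ⟨k, hk⟩ := h
  obtain ⟨u, v, hu, hv, huv, hmod⟩ := thue_exists_abs_lt_cast_eq_mul n.lt_succ_sqrt k
  have sq_le {x : ℤ} (hx : |x| < (n.sqrt.succ : ℕ)) : x ^ 2 ≤ n := by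
    have : x.natAbs ≤ n.sqrt := by rw [Int.abs_eq_natAbs] at hx; omega
    rw [← Int.natAbs_sq]
    exact_mod_cast Nat.le_sqrt'.mp this
  refine ⟨u, v, sq_le hu, sq_le hv, huv, ?_⟩
  rw [← ZMod.intCast_zmod_eq_zero_iff_dvd]
  push_cast
  rw [hmod]
  linear_combination (-(v : ZMod n) ^ 2) * hk

theorem exists_eq_sq_add_two_mul_sq {n : ℕ} (h : IsSquare (-2 : ZMod n)) :
    ∃ a b : ℕ, n = a ^ 2 + 2 * b ^ 2 := by
  suffices ∃ a b : ℤ, (n : ℤ) = a ^ 2 + 2 * b ^ 2 by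
    obtain ⟨a, b, hab⟩ := this
    exact ⟨a.natAbs, b.natAbs, by zify; simpa only [sq_abs] using hab⟩
  rcases eq_or_ne n 0 with rfl | hn
  · exact ⟨0, 0, rfl⟩
  have : NeZero n := ⟨hn⟩
  obtain ⟨u, v, hu, hv, huv, w, hw⟩ := exists_sq_le_dvd_sq_add_mul_sq (d := 2) (mod_cast h)
  have hpos : 0 < u ^ 2 + 2 * v ^ 2 := by rcases huv with h | h <;> positivity
  have hw_pos : 0 < w := by nlinarith
  have hw_le : w ≤ 3 := by nlinarith
  obtain rfl | rfl | rfl : w = 1 ∨ w = 2 ∨ w = 3 := by omega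
  · exact ⟨u, v, by linarith⟩
  · have hu_even : Even (u ^ 2) := ⟨n - v ^ 2, by linarith⟩
    obtain ⟨r, rfl⟩ := (Int.even_pow.mp hu_even).1
    exact ⟨v, r, by linarith⟩
  · have hu_eq : u ^ 2 = n := by linarith
    exact ⟨u, 0, by rw [hu_eq]; ring⟩

theorem even_of_sq_add_two_mul_sq_mod_four_eq_one {a b : ℕ} (h : (a ^ 2 + 2 * b ^ 2) % 4 = 1) :
    Even b := by
  by_contra hb
  obtain ⟨s, rfl⟩ := Nat.not_even_iff_odd.mp hb
  obtain ⟨r, rfl | rfl⟩ := a.even_or_odd' <;> ring_nf at h <;> omega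

theorem exists_eq_sq_add_eight_mul_sq {n : ℕ} (hn : n % 4 = 1) (h : IsSquare (-2 : ZMod n)) :
    ∃ a c : ℕ, n = a ^ 2 + 8 * c ^ 2 := by
  obtain ⟨a, b, rfl⟩ := exists_eq_sq_add_two_mul_sq h
  obtain ⟨c, rfl⟩ := even_of_sq_add_two_mul_sq_mod_four_eq_one hn
  exact ⟨a, c, by ring⟩

theorem coprime_of_squarefree_sq_add_mul_sq {a b d : ℕ} (h : Squarefree (a ^ 2 + d * b ^ 2)) :
    a.Coprime b := by
  have hdvd : a.gcd b * a.gcd b ∣ a ^ 2 + d * b ^ 2 := by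
    rw [← sq]
    exact dvd_add (pow_dvd_pow_of_dvd (a.gcd_dvd_left b) 2)
      ((pow_dvd_pow_of_dvd (a.gcd_dvd_right b) 2).mul_left d)
  exact Nat.isUnit_iff.mp (h _ hdvd)

theorem jacobiSym_eq_of_modEq_mul_sq {n m : ℕ} {d b : ℤ} (hn : n % 4 = 1) (hm : Odd m)
    (hbm : IsCoprime b m) (h : n ≡ d * b ^ 2 [ZMOD m]) : J(m | n) = J(d | m) := by
  rw [← jacobiSym.quadratic_reciprocity_one_mod_four hn hm, jacobiSym.mod_left' h,
    jacobiSym.mul_left, jacobiSym.sq_one' (Int.isCoprime_iff_gcd_eq_one.mp hbm), mul_one]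

theorem jacobiSym_eq_one_of_modEq_sq {n m : ℕ} {b : ℤ} (hn : n % 8 = 1) (hbm : IsCoprime b m)
    (h : n ≡ b ^ 2 [ZMOD m]) : J(m | n) = 1 := by
  rcases eq_or_ne m 0 with rfl | hm
  · have hb : b ^ 2 = 1 := Int.isUnit_sq (isCoprime_zero_right.mp hbm)
    have hn_one : n = 1 := by
      rw [hb, Nat.cast_zero, Int.modEq_zero_iff] at h
      exact_mod_cast h
    rw [hn_one, jacobiSym.one_right]
  obtain ⟨k, d, hd, rfl⟩ := Nat.exists_eq_two_pow_mul_odd hm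
  push_cast at hbm h ⊢
  have htwo : J(2 | n) = 1 := by
    rw [jacobiSym.at_two (Nat.odd_iff.mpr (by omega)), ZMod.χ₈_nat_mod_eight, hn]
    rfl
  have hodd : J(d | n) = 1 := by
    have hmod : n ≡ 1 * b ^ 2 [ZMOD d] := by
      rw [one_mul]
      exact h.of_mul_left _
    rw [jacobiSym_eq_of_modEq_mul_sq (by omega) hd hbm.of_mul_right_right hmod, jacobiSym.one_left]
  rw [jacobiSym.mul_left, jacobiSym.pow_left, htwo, hodd, one_pow, one_mul]

theorem cast_jacobiSym_eq_pow {p : ℕ} [Fact p.Prime] (a : ℤ) :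
    (J(a | p) : ZMod p) = (a : ZMod p) ^ (p / 2) := by
  rw [← jacobiSym.legendreSym.to_jacobiSym, legendreSym.eq_pow]

theorem even_sq_sub_one_div_eight_iff {n : ℕ} (hn : Odd n) :
    Even ((n ^ 2 - 1) / 8) ↔ n % 8 = 1 ∨ n % 8 = 7 := by
  have hsq : n ^ 2 = 64 * (n / 8) ^ 2 + 16 * (n / 8) * (n % 8) + (n % 8) ^ 2 := by
    conv_lhs => rw [← Nat.div_add_mod n 8]
    ring
  rw [Nat.odd_iff] at hn
  have hr : n % 8 = 1 ∨ n % 8 = 3 ∨ n % 8 = 5 ∨ n % 8 = 7 := by omega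
  rw [Nat.even_iff]
  rcases hr with hr | hr | hr | hr <;> rw [hr] at hsq <;> omega

theorem jacobiSym_two_eq_neg_one_pow {n : ℕ} (hn : Odd n) :
    J(2 | n) = (-1) ^ ((n ^ 2 - 1) / 8) := by
  rw [jacobiSym.at_two hn, ZMod.χ₈_nat_eq_if_mod_eight, neg_one_pow_eq_ite,
    if_neg (Nat.odd_iff.mp hn ▸ one_ne_zero)]
  simp only [even_sq_sub_one_div_eight_iff hn]

theorem two_pow_sub_one_div_four_eq_jacobiSym {p a b : ℕ} [hp : Fact p.Prime] (hp8 : p % 8 = 1)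
    (h : p = a ^ 2 + 2 * b ^ 2) : (2 : ZMod p) ^ ((p - 1) / 4) = J(2 | a) := by
  have hab : a.Coprime b :=
    coprime_of_squarefree_sq_add_mul_sq (h ▸ hp.out.prime.squarefree)
  have ha : Odd a := by
    rw [← Nat.odd_pow_iff two_ne_zero, Nat.odd_iff]
    omega
  have hpZ : (p : ℤ) = a ^ 2 + 2 * b ^ 2 := by exact_mod_cast h
  have hJa : J(a | p) = J(2 | a) :=
    jacobiSym_eq_of_modEq_mul_sq (by omega) ha (Nat.isCoprime_iff_coprime.mpr hab.symm)
      (Int.modEq_iff_dvd.mpr ⟨-a, by rw [hpZ]; ring⟩)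
  have hJb : J(b | p) = 1 :=
    jacobiSym_eq_one_of_modEq_sq hp8 (Nat.isCoprime_iff_coprime.mpr hab)
      (Int.modEq_iff_dvd.mpr ⟨-(2 * b), by rw [hpZ]; ring⟩)
  have hmod : (a : ZMod p) ^ 2 = -(2 * (b : ZMod p) ^ 2) := by
    have hzero : (p : ZMod p) = a ^ 2 + 2 * b ^ 2 := by exact_mod_cast congrArg Nat.cast h
    rw [ZMod.natCast_self] at hzero
    linear_combination -hzero
  have heven : Even ((p - 1) / 4) := Nat.even_iff.mpr (by omega)
  have hhalf : p / 2 = 2 * ((p - 1) / 4) := by omega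
  calc (2 : ZMod p) ^ ((p - 1) / 4)
      = 2 ^ ((p - 1) / 4) * J(b | p) := by rw [hJb, Int.cast_one, mul_one]
    _ = (-(2 * (b : ZMod p) ^ 2)) ^ ((p - 1) / 4) := by
        rw [cast_jacobiSym_eq_pow, hhalf, pow_mul, heven.neg_pow, mul_pow, Int.cast_natCast]
    _ = J(a | p) := by
        rw [cast_jacobiSym_eq_pow, hhalf, pow_mul, Int.cast_natCast, hmod]
    _ = J(2 | a) := by rw [hJa]

theorem neg_one_pow_sub_one_div_eight_eq_jacobiSym_mul {n a c : ℕ} (ha : Odd a)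
    (h : n = a ^ 2 + 8 * c ^ 2) : (-1) ^ ((n - 1) / 8) = J(2 | a) * (-1) ^ c := by
  have hdvd := Nat.eight_dvd_sq_sub_one_of_odd ha
  have hpos : 0 < a ^ 2 := pow_pos ha.pos 2
  have hexp : (n - 1) / 8 = (a ^ 2 - 1) / 8 + c ^ 2 := by omega
  have hc : (-1 : ℤ) ^ c ^ 2 = (-1) ^ c := neg_one_pow_congr (Nat.even_pow' two_ne_zero)
  rw [hexp, pow_add, hc, jacobiSym_two_eq_neg_one_pow ha]

theorem two_pow_eq_neg_one_pow_iff_even {p a c : ℕ} [hp : Fact p.Prime] (hp8 : p % 8 = 1)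
    (h : p = a ^ 2 + 8 * c ^ 2) :
    (2 : ZMod p) ^ ((p - 1) / 4) = (-1) ^ ((p - 1) / 8) ↔ Even c := by
  have : Fact (2 < p) := ⟨by have := hp.out.two_le; omega⟩
  have ha : Odd a := by
    rw [← Nat.odd_pow_iff two_ne_zero, Nat.odd_iff]
    omega
  have htwo : (2 : ZMod p) ^ ((p - 1) / 4) = J(2 | a) :=
    two_pow_sub_one_div_four_eq_jacobiSym (b := 2 * c) hp8 (by rw [h]; ring)
  have hneg : (-1 : ZMod p) ^ ((p - 1) / 8) = J(2 | a) * (-1) ^ c := by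
    exact_mod_cast congrArg (Int.cast : ℤ → ZMod p)
      (neg_one_pow_sub_one_div_eight_eq_jacobiSym_mul ha h)
  have hne : (J(2 | a) : ZMod p) ≠ 0 := by
    rw [jacobiSym_two_eq_neg_one_pow ha]
    push_cast
    exact pow_ne_zero _ (neg_ne_zero.mpr one_ne_zero)
  rw [hneg, htwo, eq_comm, mul_eq_left₀ hne, neg_one_pow_eq_one_iff_even ZMod.neg_one_ne_one]

theorem statement_8 (p : ℕ) (hp : p.Prime) (hp8 : p % 8 = 1) :
    (∃ x y : ℤ, (p : ℤ) = x ^ 2 + 32 * y ^ 2) ↔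
      (2 : ZMod p) ^ ((p - 1) / 4) = (-1 : ZMod p) ^ ((p - 1) / 8) := by
  have := Fact.mk hp
  constructor
  · rintro ⟨x, y, hxy⟩
    refine (two_pow_eq_neg_one_pow_iff_even (a := x.natAbs) hp8 ?_).mpr (even_two_mul y.natAbs)
    zify
    rw [mul_pow, sq_abs, sq_abs, hxy]
    ring
  · intro hsymbols
    have hsq : IsSquare (-2 : ZMod p) :=
      (ZMod.exists_sq_eq_neg_two_iff (by omega)).mpr (Or.inl hp8)
    obtain ⟨a, c, hac⟩ := exists_eq_sq_add_eight_mul_sq (by omega) hsq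
    obtain ⟨y, rfl⟩ := (two_pow_eq_neg_one_pow_iff_even hp8 hac).mp hsymbols
    exact ⟨a, y, by rw [hac]; push_cast; ring⟩
end

section
/- Let p be a prime with p ≡ 1 (mod 8) and k = ℚ(√(2p), i). Then the 2-Sylow subgroup of Cl(k) is isomorphic to ℤ/2ℤ × ℤ/4ℤ if and only if either (2/p)₄ = (p/2)₄ = −1, or (2/p)₄ = −1 and (p/2)₄ = 1. -/
/- STATEMENT 9: For a prime p ≡ 1 (mod 8) and k = ℚ(√(2p), i), the 2-Sylow subgroup of
Cl(k) is isomorphic to ℤ/2 × ℤ/4 iff either (2/p)₄ = (p/2)₄ = −1, or (2/p)₄ = −1 and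
(p/2)₄ = 1. -/

open Complex NumberField IntermediateField nonZeroDivisors

noncomputable section

/-- k = ℚ(√(2p), i) as a subfield of ℂ. -/
def kfield (p : ℕ) : IntermediateField ℚ ℂ := ℚ⟮(Real.sqrt (2 * p) : ℂ), (Complex.I : ℂ)⟯

/-!
Let `θ² = ip`. As `(1 - i)θ` is a square root of `2p`, the ring of integers of `k` is `ℤ[i][θ]`, a
quadratic extension of the principal ideal domain `ℤ[i]` that is ramified exactly at `1 + i`, `π`
and `π̄`, where `p = ππ̄`. Genus theory over `ℤ[i]` determines the 2-part of its class group `C`.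

*Characters.* Reduction modulo `π` or `π̄` is a ring homomorphism `f : ℤ[i] → 𝔽_p`. Sending an ideal
prime to `p` to the quadratic character of the image under `f` of a generator of its relative norm
defines a character of `C`: units of `ℤ[i]` are squares modulo `p` as `8 ∣ p - 1`, and norms of
elements are squares modulo `θ`. By Dirichlet's theorem on primes in arithmetic progressions the two
characters are jointly surjective onto `{±1}²`.

*2-torsion.* A class of order dividing two is a product of classes of ramified primes and of the
ideal `𝔠 = (c, γ)`, `γ = (1 - i)x₀ + θ`, where `p = c² - 2x₀²`; here `𝔠² = (γ)` and `N(γ) = -ic²`.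
A minimal solution of the Pell equation for `2p` gives one further relation, so that `C[2]` has at
most four elements, among them the class of `𝔓 = (π, θ)`, which is not trivial. By counting, the
squares of `C` are the common kernel of the two characters.

*Values.* Both characters are trivial on `[𝔓]`, so `[𝔓]` is a square, and both take the value
`(c/p) = (2/p)₄` on `[𝔠]`. The key point is that the product of the two characters takes the value
`(2/p)₄` on every square root `W` of `[𝔓]`. Let `I ∈ W` and `I²𝔓 = (α)`, and let `τ` be the
automorphism over complex conjugation with `θ ↦ iθ`. Then `δ = α·τ(α)·γ/θ` generates the square of
`I·τ(I)·𝔠`, has an integer `U` as rational part, and has norm `m²` with `m = ±N(b)c`, where `b`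
generates the relative norm of `I`. By the explicit form of Hilbert 90, `2(m + U)` is a square up to
units and ramified primes; choosing the sign so that `m ≡ U mod p` yields `(m/p) = 1`, that is
`(N(b)/p) = (c/p)`.

If `(2/p)₄ = -1`, then no square root `W` of `[𝔓]` is a square and `[𝔠]` is not a square, so the
2-part is `⟨[𝔠]⟩ × ⟨W⟩ ≅ ℤ/2 × ℤ/4`. If `(2/p)₄ = 1`, the 2-part cannot be `ℤ/2 × ℤ/4`: either `[𝔓]`
is a fourth power, or all its square roots have characters `(-1, -1)`, which makes every 2-torsion
class a square.
-/

/-! ### Finite groups -/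

theorem nonempty_sylow_mulEquiv_of_mulEquiv {G H A : Type*} [Group G] [Group H] [Mul A] {p : ℕ}
    (e : G ≃* H) (h : ∀ P : Sylow p G, Nonempty (P ≃* A)) (Q : Sylow p H) :
    Nonempty (Q ≃* A) := by
  let P : Sylow p G := Q.comapOfInjective e.toMonoidHom e.injective
    (le_top.trans_eq (MonoidHom.range_eq_top_of_surjective e.toMonoidHom e.surjective).symm)
  have hmap : (P : Subgroup G).map e.toMonoidHom = Q :=
    Subgroup.map_comap_eq_self_of_surjective e.surjective _
  obtain ⟨f⟩ := h P
  exact ⟨(MulEquiv.subgroupCongr hmap).symm.trans ((e.subgroupMap P).symm.trans f)⟩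

section CommGroup

variable {C : Type*} [CommGroup C]

theorem mem_sylow_iff_exists_pow_eq_one {p : ℕ} (A : Sylow p C) {x : C} :
    x ∈ A ↔ ∃ k : ℕ, x ^ p ^ k = 1 := by
  constructor
  · intro hx
    obtain ⟨k, hk⟩ := A.isPGroup' ⟨x, hx⟩
    exact ⟨k, congrArg Subtype.val hk⟩
  · rintro ⟨k, hk⟩
    have hpg : IsPGroup p (Subgroup.zpowers x) := by
      rintro ⟨_, n, rfl⟩
      refine ⟨k, Subtype.ext ?_⟩
      rw [SubgroupClass.coe_pow, ← zpow_natCast, zpow_comm, zpow_natCast, hk, one_zpow]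
      rfl
    exact hpg.le_sylow_of_normal A (Subgroup.mem_zpowers x)

theorem range_powMonoidHom_eq_ker [Finite C] {E : Type*} [Group E] {n : ℕ}
    (hE : ∀ e : E, e ^ n = 1) {ψ : C →* E} (hψ : Function.Surjective ψ)
    (hcard : Nat.card (powMonoidHom n : C →* C).ker ≤ Nat.card E) :
    (powMonoidHom n : C →* C).range = ψ.ker := by
  have hle : (powMonoidHom n : C →* C).range ≤ ψ.ker := by
    rintro _ ⟨x, rfl⟩
    rw [MonoidHom.mem_ker, powMonoidHom_apply, map_pow, hE]
  refine Subgroup.eq_of_le_of_card_ge hle ?_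
  have hpow := Subgroup.card_mul_index (powMonoidHom n : C →* C).ker
  have hker := Subgroup.card_mul_index ψ.ker
  rw [Subgroup.index_ker] at hpow hker
  rw [MonoidHom.range_eq_top.2 hψ, Subgroup.card_top] at hker
  refine Nat.le_of_mul_le_mul_right ?_ (Nat.card_pos (α := (powMonoidHom n : C →* C).ker))
  calc Nat.card ψ.ker * Nat.card (powMonoidHom n : C →* C).ker
      ≤ Nat.card ψ.ker * Nat.card E := Nat.mul_le_mul_left _ hcard
    _ = Nat.card (powMonoidHom n : C →* C).range * Nat.card (powMonoidHom n : C →* C).ker := by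
      rw [hker, ← hpow, mul_comm]

theorem nonempty_mulEquiv_zmod_prod {H : Subgroup C} {x y : C}
    (hxy : Disjoint (Subgroup.zpowers x) (Subgroup.zpowers y))
    (hH : Subgroup.zpowers x ⊔ Subgroup.zpowers y = H) :
    Nonempty (H ≃* Multiplicative (ZMod (orderOf x) × ZMod (orderOf y))) := by
  let F := MonoidHom.noncommCoprod (Subgroup.zpowers x).subtype (Subgroup.zpowers y).subtype
    fun _ _ => Commute.all _ _
  have hF : Function.Injective F :=
    (MonoidHom.noncommCoprod_injective _ _ _).2
      ⟨Subtype.val_injective, Subtype.val_injective, by simpa⟩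
  have hrange : F.range = H := by
    rw [← hH, MonoidHom.noncommCoprod_range, Subgroup.range_subtype, Subgroup.range_subtype]
  let e (z : C) : Subgroup.zpowers z ≃* Multiplicative (ZMod (orderOf z)) :=
    (zmodMulEquivOfGenerator IsCyclic.exists_generator.choose_spec (Nat.card_zpowers z)).symm
  exact ⟨(MulEquiv.subgroupCongr hrange).symm.trans <| (MonoidHom.ofInjective hF).symm.trans <|
    ((e x).prodCongr (e y)).trans (MulEquiv.prodMultiplicative _ _).symm⟩

theorem card_ker_powMonoidHom_two_le {g h : C}
    (hgh : ∀ x : C, x ^ 2 = 1 → x = 1 ∨ x = h ∨ x = g ∨ x = g * h) :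
    Nat.card (powMonoidHom 2 : C →* C).ker ≤ 4 := by
  classical
  have hsub : ((powMonoidHom 2 : C →* C).ker : Set C) ⊆ ({1, h, g, g * h} : Finset C) := by
    intro x hx
    simpa using hgh x hx
  calc Nat.card (powMonoidHom 2 : C →* C).ker
      ≤ (({1, h, g, g * h} : Finset C) : Set C).ncard :=
        Set.ncard_le_ncard hsub (Finset.finite_toSet _)
    _ ≤ 4 := by rw [Set.ncard_coe_finset]; exact Finset.card_le_four

theorem surjective_prod_of_map_eq_neg_one {χ₁ χ₂ : C →* ℤˣ} (hx : ∃ x, χ₁ x = -1 ∧ χ₂ x = -1)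
    (hy : ∃ y, χ₁ y * χ₂ y = -1) : Function.Surjective (χ₁.prod χ₂) := by
  obtain ⟨x, hx₁, hx₂⟩ := hx
  obtain ⟨y, hy⟩ := hy
  have hmap : ∀ i j : Fin 2, χ₁.prod χ₂ (x ^ (i : ℕ) * y ^ (j : ℕ)) =
      ((-1) ^ (i : ℕ) * χ₁ y ^ (j : ℕ), (-1) ^ (i : ℕ) * χ₂ y ^ (j : ℕ)) := by
    simp [hx₁, hx₂]
  have hcover : ∀ u v : ℤˣ, u * v = -1 → ∀ e : ℤˣ × ℤˣ, ∃ i j : Fin 2,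
      ((-1) ^ (i : ℕ) * u ^ (j : ℕ), (-1) ^ (i : ℕ) * v ^ (j : ℕ)) = e := by decide
  intro e
  obtain ⟨i, j, hij⟩ := hcover _ _ hy e
  exact ⟨x ^ (i : ℕ) * y ^ (j : ℕ), (hmap i j).trans hij⟩

theorem exists_sq_eq_iff_of_surjective_prod [Finite C] {χ₁ χ₂ : C →* ℤˣ}
    (hχ : Function.Surjective (χ₁.prod χ₂)) {g h : C}
    (hgh : ∀ x : C, x ^ 2 = 1 → x = 1 ∨ x = h ∨ x = g ∨ x = g * h) (x : C) :
    (∃ y, y ^ 2 = x) ↔ χ₁ x = 1 ∧ χ₂ x = 1 := by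
  have hrange := range_powMonoidHom_eq_ker (by decide : ∀ e : ℤˣ × ℤˣ, e ^ 2 = 1) hχ
    (by simpa [Nat.card_eq_fintype_card] using card_ker_powMonoidHom_two_le hgh)
  have hx := SetLike.ext_iff.1 hrange x
  simpa only [MonoidHom.mem_range, powMonoidHom_apply, MonoidHom.mem_ker, MonoidHom.prod_apply,
    Prod.mk_eq_one] using hx

section TwoSylow

variable {χ₁ χ₂ : C →* ℤˣ} {g P : C}

theorem not_nonempty_sylow_mulEquiv_zmod_prod (A : Sylow 2 C)
    (hsq : ∀ x : C, (∃ y, y ^ 2 = x) ↔ χ₁ x = 1 ∧ χ₂ x = 1)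
    (hP : P ^ 2 = 1) (hP1 : P ≠ 1) (hχP : χ₁ P = 1 ∧ χ₂ P = 1)
    (hroot : ∀ W : C, W ^ 2 = P → χ₁ W * χ₂ W = 1) :
    ¬ Nonempty (A ≃* Multiplicative (ZMod 2 × ZMod 4)) := by
  rintro ⟨e⟩
  have hA4 : ∀ x ∈ A, x ^ 4 = 1 := by
    intro x hx
    have hpow : ∀ m : Multiplicative (ZMod 2 × ZMod 4), m ^ 4 = 1 :=
      (by decide : ∀ m : ZMod 2 × ZMod 4, 4 • m = 0)
    have h1 : (⟨x, hx⟩ : A) ^ 4 = 1 := e.injective (by rw [map_pow, map_one, hpow])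
    exact congrArg Subtype.val h1
  have hmem : ∀ {x : C} (k : ℕ), x ^ 2 ^ k = 1 → x ∈ A := fun k hk =>
    (mem_sylow_iff_exists_pow_eq_one A).2 ⟨k, hk⟩
  obtain ⟨W, hW⟩ := (hsq P).2 hχP
  have hχroot : ∀ V : C, V ^ 2 = P → χ₁ V = -1 ∧ χ₂ V = -1 := by
    intro V hV
    have hne : ¬ (χ₁ V = 1 ∧ χ₂ V = 1) := by
      rw [← hsq]
      rintro ⟨U, rfl⟩
      rw [← pow_mul] at hV
      refine hP1 (hV ▸ hA4 U (hmem 3 ?_))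
      rw [show 2 ^ 3 = 2 * 2 * 2 from rfl, pow_mul, hV, hP]
    have hdec : ∀ u v : ℤˣ, u * v = 1 → ¬ (u = 1 ∧ v = 1) → u = -1 ∧ v = -1 := by decide
    exact hdec _ _ (hroot V hV) hne
  obtain ⟨t, ht⟩ := e.surjective (Multiplicative.ofAdd (1, 0))
  have ht2 : (t : C) ^ 2 = 1 := by
    have h1 : t ^ 2 = 1 := e.injective (by rw [map_pow, map_one, ht]; decide)
    exact congrArg Subtype.val h1
  have htsq : ∃ y, y ^ 2 = (t : C) := by
    have htW := hχroot (t * W) (by rw [mul_pow, ht2, one_mul, hW])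
    simpa only [hsq, map_mul, hχroot W hW, mul_eq_right] using htW
  obtain ⟨y, hy⟩ := htsq
  have hyA : y ∈ A := hmem 2 (by rw [show 2 ^ 2 = 2 * 2 from rfl, pow_mul, hy, ht2])
  have hnsq : ∀ m : Multiplicative (ZMod 2 × ZMod 4), m ^ 2 ≠ Multiplicative.ofAdd (1, 0) :=
    (by decide : ∀ m : ZMod 2 × ZMod 4, 2 • m ≠ (1, 0))
  refine hnsq (e ⟨y, hyA⟩) ?_
  rw [← map_pow, ← ht]
  exact congrArg e (Subtype.ext hy)

theorem eq_or_eq_mul_of_sq_eq_one (hχP : χ₁ P = 1)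
    (hg : ∀ x : C, x ^ 2 = 1 → x = 1 ∨ x = P ∨ x = g ∨ x = g * P) (hP : P ^ 2 = 1)
    {c : C} (hc : c ^ 2 = 1) (hχc : χ₁ c = -1) {x : C} (hx : x ^ 2 = 1) :
    (x = 1 ∨ x = P) ∨ (x = c ∨ x = c * P) ∧ χ₁ x = -1 := by
  have hP' : P * P = 1 := by rw [← sq, hP]
  have hχ : ∀ {y}, y = c ∨ y = c * P → χ₁ y = -1 := by
    rintro _ (rfl | rfl)
    · exact hχc
    · rw [map_mul, hχc, hχP, mul_one]
  have hne : ¬ (χ₁ c = 1) := by rw [hχc]; decide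
  rcases hg c hc with rfl | rfl | rfl | rfl
  · exact absurd (map_one χ₁) hne
  · exact absurd hχP hne
  all_goals
    rcases hg x hx with h | h | h | h
    · exact Or.inl (Or.inl h)
    · exact Or.inl (Or.inr h)
    · exact Or.inr ⟨by simp [h, mul_assoc, hP'], hχ (by simp [h, mul_assoc, hP'])⟩
    · exact Or.inr ⟨by simp [h], hχ (by simp [h])⟩

theorem pow_four_eq_one_of_pow_two_pow_eq_one
    (hsq : ∀ x : C, (∃ y, y ^ 2 = x) ↔ χ₁ x = 1 ∧ χ₂ x = 1)
    (hneg : ∀ x : C, x ^ 2 = 1 → (x = 1 ∨ x = P) ∨ χ₁ x = -1)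
    (hroot : ∀ W : C, W ^ 2 = P → χ₁ W * χ₂ W = -1) {x : C} {k : ℕ} (hx : x ^ 2 ^ k = 1) :
    x ^ 4 = 1 := by
  have hstep : ∀ y : C, y ^ 8 = 1 → y ^ 4 = 1 := by
    intro y hy
    have hχ (z : C) : χ₁ (z ^ 2) = 1 ∧ χ₂ (z ^ 2) = 1 := (hsq _).1 ⟨z, rfl⟩
    have hy4 : y ^ 4 = (y ^ 2) ^ 2 := by rw [← pow_mul]
    rcases hneg (y ^ 4) (by rw [← pow_mul, hy]) with (h | h) | h
    · exact h
    · have h1 := hroot (y ^ 2) (by rw [← hy4, h])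
      rw [(hχ y).1, (hχ y).2] at h1
      exact absurd h1 (by decide)
    · rw [hy4, (hχ _).1] at h
      exact absurd h (by decide)
  induction k generalizing x with
  | zero => rw [← pow_one x, ← pow_zero 2, hx, one_pow]
  | succ k ih =>
    refine hstep x ?_
    have h1 := ih (x := x ^ 2) (by rw [← pow_mul, ← pow_succ', hx])
    rwa [← pow_mul] at h1

theorem disjoint_zpowers_of_map_eq_neg_one (hP : P ^ 2 = 1) (hP1 : P ≠ 1) (hχP : χ₁ P = 1)
    {c W : C} (hc : c ^ 2 = 1) (hχc : χ₁ c = -1) (hW : W ^ 2 = P) :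
    Disjoint (Subgroup.zpowers c) (Subgroup.zpowers W) := by
  have hodd {y : C} (hy : y ^ 2 = 1) (n : ℤ) : y ^ (2 * n) = 1 := by
    rw [zpow_mul, show y ^ (2 : ℤ) = 1 from mod_cast hy, one_zpow]
  have hWeven (n : ℤ) : W ^ (2 * n) = P ^ n := by
    rw [zpow_mul, show W ^ (2 : ℤ) = P from mod_cast hW]
  have hcW : c ∉ Subgroup.zpowers W := by
    intro hmem
    obtain ⟨n, hn⟩ := Subgroup.mem_zpowers_iff.1 hmem
    rcases Int.even_or_odd' n with ⟨m, rfl | rfl⟩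
    · rw [← hn, hWeven, map_zpow, hχP, one_zpow] at hχc
      exact absurd hχc (by decide)
    · have h1 : P ^ (2 * m + 1) = 1 := by rw [← hWeven, mul_comm, zpow_mul, hn]; exact mod_cast hc
      rw [zpow_add, hodd hP, one_mul, zpow_one] at h1
      exact hP1 h1
  rw [Subgroup.disjoint_def]
  intro y hyc hyW
  obtain ⟨n, rfl⟩ := Subgroup.mem_zpowers_iff.1 hyc
  rcases Int.even_or_odd' n with ⟨m, rfl | rfl⟩
  · exact hodd hc m
  · rw [zpow_add, hodd hc, one_mul, zpow_one] at hyW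
    exact absurd hyW hcW

theorem nonempty_sylow_mulEquiv_zmod_prod (A : Sylow 2 C)
    (hsq : ∀ x : C, (∃ y, y ^ 2 = x) ↔ χ₁ x = 1 ∧ χ₂ x = 1)
    (hg : ∀ x : C, x ^ 2 = 1 → x = 1 ∨ x = P ∨ x = g ∨ x = g * P)
    (hP : P ^ 2 = 1) (hP1 : P ≠ 1) (hχP : χ₁ P = 1 ∧ χ₂ P = 1)
    (hroot : ∀ W : C, W ^ 2 = P → χ₁ W * χ₂ W = -1) (hc : ∃ c, c ^ 2 = 1 ∧ χ₁ c = -1) :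
    Nonempty (A ≃* Multiplicative (ZMod 2 × ZMod 4)) := by
  obtain ⟨c, hc, hχc⟩ := hc
  obtain ⟨W, hW⟩ := (hsq P).2 hχP
  have htors := fun {x : C} => eq_or_eq_mul_of_sq_eq_one (x := x) hχP.1 hg hP hc hχc
  have hW4 : W ^ 4 = 1 := by rw [show 4 = 2 * 2 from rfl, pow_mul, hW, hP]
  have hordc : orderOf c = 2 :=
    orderOf_eq_prime hc fun h => absurd (hχc.symm.trans (h ▸ map_one χ₁)) (by decide)
  have hordW : orderOf W = 4 := orderOf_eq_prime_pow (p := 2) (n := 1) (by simpa [hW]) hW4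
  have hsup : Subgroup.zpowers c ⊔ Subgroup.zpowers W = A := by
    have hcmem := Subgroup.mem_sup_left (T := Subgroup.zpowers W) (Subgroup.mem_zpowers c)
    have hWmem := Subgroup.mem_sup_right (S := Subgroup.zpowers c) (Subgroup.mem_zpowers W)
    have hPmem := hW ▸ pow_mem hWmem 2
    have hle {x : C} (hx : x ^ 2 = 1) : x ∈ Subgroup.zpowers c ⊔ Subgroup.zpowers W := by
      rcases htors hx with (rfl | rfl) | ⟨rfl | rfl, -⟩
      exacts [one_mem _, hPmem, hcmem, mul_mem hcmem hPmem]
    refine le_antisymm (sup_le ?_ ?_) fun x hx => ?_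
    · exact Subgroup.zpowers_le.2 ((mem_sylow_iff_exists_pow_eq_one A).2 ⟨1, hc⟩)
    · exact Subgroup.zpowers_le.2 ((mem_sylow_iff_exists_pow_eq_one A).2 ⟨2, hW4⟩)
    · obtain ⟨k, hk⟩ := (mem_sylow_iff_exists_pow_eq_one A).1 hx
      have hx4 := pow_four_eq_one_of_pow_two_pow_eq_one hsq
        (fun x hx => (htors hx).imp_right And.right) hroot hk
      rcases htors (x := x ^ 2) (by rw [← pow_mul, hx4]) with (h | h) | ⟨-, h⟩
      · exact hle h
      · rw [← div_mul_cancel x W]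
        exact mul_mem (hle (by rw [div_pow, h, hW, div_self'])) hWmem
      · rw [((hsq _).1 ⟨x, rfl⟩).1] at h
        exact absurd h (by decide)
  have hequiv := nonempty_mulEquiv_zmod_prod
    (disjoint_zpowers_of_map_eq_neg_one hP hP1 hχP.1 hc hχc hW) hsup
  rwa [hordc, hordW] at hequiv

theorem sylow_two_mulEquiv_iff [Finite C] {s : ℤˣ} (hboth : ∃ x, χ₁ x = -1 ∧ χ₂ x = -1)
    (hprod : ∃ y, χ₁ y * χ₂ y = -1) (hP : P ^ 2 = 1) (hP1 : P ≠ 1) (hχP : χ₁ P = 1 ∧ χ₂ P = 1)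
    (hg : ∀ x : C, x ^ 2 = 1 → x = 1 ∨ x = P ∨ x = g ∨ x = g * P)
    (hroot : ∀ W : C, W ^ 2 = P → χ₁ W * χ₂ W = s) (hc : ∃ c, c ^ 2 = 1 ∧ χ₁ c = s) :
    (∀ A : Sylow 2 C, Nonempty (A ≃* Multiplicative (ZMod 2 × ZMod 4))) ↔ s = -1 := by
  have hsq := exists_sq_eq_iff_of_surjective_prod
    (surjective_prod_of_map_eq_neg_one hboth hprod) hg
  rcases Int.units_eq_one_or s with rfl | rfl
  · refine iff_of_false (fun h => ?_) (by decide)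
    exact not_nonempty_sylow_mulEquiv_zmod_prod default hsq hP hP1 hχP hroot (h default)
  · exact iff_of_true (fun A => nonempty_sylow_mulEquiv_zmod_prod A hsq hg hP hP1 hχP hroot hc) rfl

end TwoSylow

end CommGroup

/-! ### Quadratic extensions of unique factorization domains -/

open scoped QuadraticAlgebra

theorem dvd_of_isIntegral_div {R F : Type*} [CommRing R] [IsDomain R] [IsIntegrallyClosed R]
    [Field F] [Algebra R F] [FaithfulSMul R F] {u n : R} (hn : n ≠ 0)
    (h : IsIntegral R (algebraMap R F u / algebraMap R F n)) : n ∣ u := by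
  let K := FractionRing R
  let ψ : K →ₐ[R] F := IsFractionRing.liftAlgHom (g := Algebra.ofId R F)
    (FaithfulSMul.algebraMap_injective R F)
  have hψ : algebraMap R F u / algebraMap R F n = ψ (algebraMap R K u / algebraMap R K n) := by
    rw [map_div₀, ψ.commutes, ψ.commutes]
  rw [hψ, isIntegral_algHom_iff ψ ψ.toRingHom.injective] at h
  obtain ⟨v, hv⟩ := IsIntegrallyClosed.isIntegral_iff.1 h
  have hnK : algebraMap R K n ≠ 0 := by
    rwa [ne_eq, FaithfulSMul.algebraMap_eq_zero_iff]
  refine ⟨v, FaithfulSMul.algebraMap_injective R K ?_⟩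
  rw [map_mul, hv, mul_div_cancel₀ _ hnK]

section Quadratic

variable {R : Type*} [CommRing R] {a : R}

theorem omega_sq : (ω : QuadraticAlgebra R a 0) ^ 2 = algebraMap R _ a := by
  ext <;> simp [sq]

theorem omega_ne_zero [Nontrivial R] : (ω : QuadraticAlgebra R a 0) ≠ 0 :=
  fun h => one_ne_zero (congrArg QuadraticAlgebra.im h)

theorem star_algebraMap (r : R) :
    star (algebraMap R (QuadraticAlgebra R a 0) r) = algebraMap R _ r := by
  ext <;> simp

/-- Conjugation of `R[√a]`, as an automorphism over `R`. -/
def conjAlgEquiv (a : R) : QuadraticAlgebra R a 0 ≃ₐ[R] QuadraticAlgebra R a 0 :=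
  AlgEquiv.ofRingEquiv (f := starRingAut) star_algebraMap

theorem quadraticAlgebra_norm_eq (z : QuadraticAlgebra R a 0) :
    QuadraticAlgebra.norm z = z.re ^ 2 - a * z.im ^ 2 := by
  rw [QuadraticAlgebra.norm_def]
  ring

theorem map_norm_eq_sq {T : Type*} [CommRing T] {f : R →+* T} (hfa : f a = 0)
    (z : QuadraticAlgebra R a 0) : f (QuadraticAlgebra.norm z) = f z.re ^ 2 := by
  rw [quadraticAlgebra_norm_eq, map_sub, map_mul, hfa, zero_mul, sub_zero, map_pow]

variable [IsDomain R]

theorem isDomain_quadraticAlgebra (h : ∀ x y : R, x ^ 2 = a * y ^ 2 → y = 0) :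
    IsDomain (QuadraticAlgebra R a 0) := by
  have hnorm (z : QuadraticAlgebra R a 0) (hz : QuadraticAlgebra.norm z = 0) : z = 0 := by
    rw [quadraticAlgebra_norm_eq, sub_eq_zero] at hz
    have him := h _ _ hz
    rw [him, zero_pow two_ne_zero, mul_zero, sq_eq_zero_iff] at hz
    exact QuadraticAlgebra.ext hz him
  have : NoZeroDivisors (QuadraticAlgebra R a 0) := by
    refine ⟨fun {x y} hxy => ?_⟩
    have hxy' := congrArg QuadraticAlgebra.norm hxy
    rw [map_mul, QuadraticAlgebra.norm_zero] at hxy'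
    exact (mul_eq_zero.1 hxy').imp (hnorm x) (hnorm y)
  exact NoZeroDivisors.to_isDomain _

theorem quadraticAlgebra_norm_eq_zero_iff [IsDomain (QuadraticAlgebra R a 0)]
    {z : QuadraticAlgebra R a 0} : QuadraticAlgebra.norm z = 0 ↔ z = 0 := by
  rw [← not_iff_not, ← ne_eq, ← ne_eq, ← mem_nonZeroDivisors_iff_ne_zero,
    ← mem_nonZeroDivisors_iff_ne_zero, QuadraticAlgebra.norm_mem_nonZeroDivisors_iff]

theorem exists_eq_div_algebraMap [IsDomain (QuadraticAlgebra R a 0)]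
    (x : FractionRing (QuadraticAlgebra R a 0)) : ∃ (s : QuadraticAlgebra R a 0) (n : R), n ≠ 0 ∧
      x = algebraMap _ _ s / algebraMap _ _ (algebraMap R (QuadraticAlgebra R a 0) n) := by
  obtain ⟨u, v, hv, rfl⟩ := IsFractionRing.div_surjective (A := QuadraticAlgebra R a 0) x
  have hv0 := nonZeroDivisors.ne_zero hv
  have hstar : star v ≠ 0 := star_ne_zero.2 hv0
  refine ⟨u * star v, QuadraticAlgebra.norm v, mt quadraticAlgebra_norm_eq_zero_iff.1 hv0, ?_⟩
  rw [QuadraticAlgebra.algebraMap_norm_eq_mul_star, map_mul, map_mul, mul_div_mul_right]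
  rwa [ne_eq, FaithfulSMul.algebraMap_eq_zero_iff]

variable [UniqueFactorizationMonoid R]

theorem eq_zero_of_sq_eq_squarefree_mul_sq (ha : Squarefree a) (hu : ¬ IsUnit a) {x y : R}
    (h : x ^ 2 = a * y ^ 2) : y = 0 := by
  by_contra hy
  obtain ⟨c, rfl⟩ := (UniqueFactorizationMonoid.pow_dvd_pow_iff_dvd two_ne_zero).1
    (Dvd.intro_left a h.symm)
  have hc : c * c = a := by
    refine mul_left_cancel₀ (pow_ne_zero 2 hy) ?_
    linear_combination h
  exact hu (hc ▸ (ha c hc.dvd).mul (ha c hc.dvd))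

theorem dvd_of_sq_dvd_squarefree_mul_sq (ha : Squarefree a) (ha0 : a ≠ 0) {r y : R} (hr : r ≠ 0)
    (h : r ^ 2 ∣ a * y ^ 2) : r ∣ y := by
  obtain ⟨k, hk⟩ := h
  obtain ⟨c, hc⟩ : r ∣ a * y := by
    rw [← UniqueFactorizationMonoid.pow_dvd_pow_iff_dvd two_ne_zero]
    exact ⟨a * k, by linear_combination a * hk⟩
  have hc2 : c ^ 2 = a * k := by
    refine mul_left_cancel₀ (pow_ne_zero 2 hr) ?_
    linear_combination a * hk - (r * c + a * y) * hc
  obtain ⟨d, rfl⟩ := (ha.dvd_pow_iff_dvd two_ne_zero).1 ⟨k, hc2⟩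
  exact ⟨d, mul_left_cancel₀ ha0 (by linear_combination hc)⟩

theorem dvd_re_and_dvd_im (ha : Squarefree a) (ha0 : a ≠ 0) (h2 : (2 : R) ≠ 0)
    (h4 : ∀ x y : R, 4 ∣ x ^ 2 - a * y ^ 2 → 2 ∣ x ∧ 2 ∣ y) {r : R} (hr : r ≠ 0)
    {s : QuadraticAlgebra R a 0} (htr : r ∣ QuadraticAlgebra.trace s)
    (hnorm : r ^ 2 ∣ QuadraticAlgebra.norm s) : r ∣ s.re ∧ r ∣ s.im := by
  rw [QuadraticAlgebra.trace_def, zero_mul, add_zero] at htr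
  rw [quadraticAlgebra_norm_eq] at hnorm
  obtain ⟨x, hx⟩ := htr
  obtain ⟨m, hm⟩ := hnorm
  obtain ⟨y, hy⟩ : r ∣ 2 * s.im := dvd_of_sq_dvd_squarefree_mul_sq ha ha0 hr
    ⟨x ^ 2 - 4 * m, by linear_combination (2 * s.re + r * x) * hx - 4 * hm⟩
  obtain ⟨⟨x, rfl⟩, ⟨y, rfl⟩⟩ := h4 x y ⟨m, by
    refine mul_left_cancel₀ (pow_ne_zero 2 hr) ?_
    linear_combination -(r * x + 2 * s.re) * hx + a * (r * y + 2 * s.im) * hy + 4 * hm⟩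
  exact ⟨⟨x, mul_left_cancel₀ h2 (by linear_combination hx)⟩,
    ⟨y, mul_left_cancel₀ h2 (by linear_combination hy)⟩⟩

theorem isIntegrallyClosed_quadraticAlgebra [IsDomain (QuadraticAlgebra R a 0)]
    (ha : Squarefree a) (ha0 : a ≠ 0) (h2 : (2 : R) ≠ 0)
    (h4 : ∀ x y : R, 4 ∣ x ^ 2 - a * y ^ 2 → 2 ∣ x ∧ 2 ∣ y) :
    IsIntegrallyClosed (QuadraticAlgebra R a 0) := by
  let S := QuadraticAlgebra R a 0
  let K := FractionRing S
  refine (isIntegrallyClosed_iff K).2 fun {q} hq => ?_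
  obtain ⟨s, r, hr, rfl⟩ := exists_eq_div_algebraMap q
  have hfrac : IsIntegral R (algebraMap S K s / algebraMap R K r) := isIntegral_trans _ hq
  have hstar : IsIntegral R (algebraMap S K (star s) / algebraMap R K r) := by
    let τ : K ≃ₐ[R] K := IsFractionRing.algEquivOfAlgEquiv (conjAlgEquiv a)
    have hτ := hfrac.map τ
    rwa [map_div₀, τ.commutes, IsFractionRing.algEquivOfAlgEquiv_algebraMap] at hτ
  have htr : r ∣ QuadraticAlgebra.trace s := by
    refine dvd_of_isIntegral_div (F := K) hr ?_
    have hadd := hfrac.add hstar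
    rwa [← add_div, ← map_add, ← QuadraticAlgebra.algebraMap_trace_eq_add_star] at hadd
  have hnorm : r ^ 2 ∣ QuadraticAlgebra.norm s := by
    refine dvd_of_isIntegral_div (F := K) (pow_ne_zero 2 hr) ?_
    have hmul := hfrac.mul hstar
    rwa [div_mul_div_comm, ← map_mul, ← map_mul, ← sq,
      ← QuadraticAlgebra.algebraMap_norm_eq_mul_star] at hmul
  obtain ⟨⟨x, hx⟩, ⟨y, hy⟩⟩ := dvd_re_and_dvd_im ha ha0 h2 h4 hr htr hnorm
  refine ⟨⟨x, y⟩, ?_⟩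
  have hs : s = algebraMap R (QuadraticAlgebra R a 0) r * ⟨x, y⟩ := by ext <;> simp [hx, hy]
  rw [hs, map_mul, mul_div_cancel_left₀]
  rwa [← IsScalarTower.algebraMap_apply, ne_eq, FaithfulSMul.algebraMap_eq_zero_iff]

end Quadratic

/-! ### Gaussian integers -/

local notation "𝕚" => (Zsqrtd.sqrtd : GaussianInt)

theorem sqrtd_sq : 𝕚 ^ 2 = -1 := by
  rw [sq, Zsqrtd.dmuld]
  rfl

theorem isUnit_sqrtd : IsUnit 𝕚 :=
  isUnit_iff_exists_inv.2 ⟨-𝕚, by linear_combination -sqrtd_sq⟩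

theorem gaussianInt_norm_eq (x : GaussianInt) : x.norm = x.re ^ 2 + x.im ^ 2 := by
  rw [Zsqrtd.norm_def]
  ring

theorem gaussianInt_eq_add_mul_sqrtd (x : GaussianInt) : x = x.re + x.im * 𝕚 := by
  ext <;> simp

theorem eq_one_or_of_isUnit_gaussianInt {u : GaussianInt} (hu : IsUnit u) :
    u = 1 ∨ u = -1 ∨ u = 𝕚 ∨ u = -𝕚 := by
  have hnorm := (Zsqrtd.norm_eq_one_iff' (by decide) u).2 hu
  rw [gaussianInt_norm_eq] at hnorm
  obtain ⟨x, y⟩ := u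
  obtain ⟨hx₁, hx₂⟩ := abs_le.1 ((sq_le_one_iff_abs_le_one x).1 (by linarith [sq_nonneg y]))
  obtain ⟨hy₁, hy₂⟩ := abs_le.1 ((sq_le_one_iff_abs_le_one y).1 (by linarith [sq_nonneg x]))
  interval_cases x <;> interval_cases y <;> simp_all [Zsqrtd.ext_iff]

theorem exists_eq_sq_or_eq_neg_sqrtd_mul_sq {u : GaussianInt} (hu : IsUnit u) :
    ∃ v, u = v ^ 2 ∨ u = -𝕚 * v ^ 2 := by
  rcases eq_one_or_of_isUnit_gaussianInt hu with rfl | rfl | rfl | rfl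
  · exact ⟨1, Or.inl (one_pow 2).symm⟩
  · exact ⟨𝕚, Or.inl sqrtd_sq.symm⟩
  · exact ⟨𝕚, Or.inr (by linear_combination 𝕚 * sqrtd_sq)⟩
  · exact ⟨1, Or.inr (by rw [one_pow, mul_one])⟩

theorem isIntegral_gaussianInt (x : GaussianInt) : IsIntegral ℤ x := by
  have hi : IsIntegral ℤ 𝕚 :=
    IsIntegral.of_pow two_pos (by rw [sqrtd_sq]; exact isIntegral_one.neg)
  rw [gaussianInt_eq_add_mul_sqrtd x]
  exact isIntegral_algebraMap.add (isIntegral_algebraMap.mul hi)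

theorem exists_gaussianInt_norm_eq {p : ℕ} (hp : p.Prime) (hp4 : p % 4 ≠ 3) :
    ∃ π : GaussianInt, π.norm = p := by
  have := Fact.mk hp
  obtain ⟨a, b, hab⟩ := Nat.Prime.sq_add_sq hp4
  exact ⟨⟨a, b⟩, by simp only [gaussianInt_norm_eq]; exact mod_cast hab⟩

theorem mul_star_of_norm_eq {p : ℕ} {π : GaussianInt} (h : π.norm = p) : π * star π = p := by
  rw [← Zsqrtd.norm_eq_mul_conj, h, Int.cast_natCast]

theorem prime_of_norm_eq {p : ℕ} (hp : p.Prime) {π : GaussianInt} (h : π.norm = p) :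
    Prime π := by
  rw [← irreducible_iff_prime]
  have hdvd : π.norm.natAbs = p := by rw [h, Int.natAbs_natCast]
  refine ⟨fun hu => hp.ne_one (hdvd ▸ Zsqrtd.norm_eq_one_iff.2 hu), fun x y hxy => ?_⟩
  rw [hxy, Zsqrtd.norm_mul, Int.natAbs_mul] at hdvd
  rw [← Zsqrtd.norm_eq_one_iff, ← Zsqrtd.norm_eq_one_iff]
  rcases hp.eq_one_or_self_of_dvd _ ⟨_, hdvd.symm⟩ with hx | hx
  · exact Or.inl hx
  · exact Or.inr ((Nat.mul_eq_left hp.ne_zero).1 (hx ▸ hdvd))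

theorem isCoprime_star_of_norm_eq {p : ℕ} (hp : p.Prime) (hp2 : p ≠ 2) {π : GaussianInt}
    (h : π.norm = p) : IsCoprime π (star π) := by
  refine (prime_of_norm_eq hp h).irreducible.coprime_iff_not_dvd.2 fun hdvd => ?_
  have hpp : Prime (p : ℤ) := Nat.prime_iff_prime_int.1 hp
  rw [gaussianInt_norm_eq] at h
  have hre : (p : ℤ) ∣ π.re := by
    obtain ⟨w, hw⟩ : π ∣ ((2 * π.re : ℤ) : GaussianInt) := by
      convert dvd_add (dvd_refl π) hdvd using 1
      ext <;> simp [two_mul]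
    have hnorm : (p : ℤ) ∣ (2 * π.re) * (2 * π.re) := by
      rw [← Zsqrtd.norm_intCast, hw, Zsqrtd.norm_mul, gaussianInt_norm_eq, h]
      exact dvd_mul_right _ _
    refine (hpp.dvd_or_dvd (or_self_iff.1 (hpp.dvd_or_dvd hnorm))).resolve_left fun h2 => hp2 ?_
    exact (Nat.prime_dvd_prime_iff_eq hp Nat.prime_two).1 (mod_cast h2)
  have him : (p : ℤ) ∣ π.im :=
    hpp.dvd_of_dvd_pow ((dvd_add_right (dvd_pow hre two_ne_zero)).1 h.symm.dvd)
  have hsq := dvd_add (pow_dvd_pow_of_dvd hre 2) (pow_dvd_pow_of_dvd him 2)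
  rw [h] at hsq
  exact hp.prime.irreducible.not_isUnit
    (hp.prime.squarefree p (by rw [← sq]; exact mod_cast hsq))

theorem squarefree_natCast_gaussianInt {p : ℕ} (hp : p.Prime) (hp2 : p ≠ 2) (hp4 : p % 4 ≠ 3) :
    Squarefree (p : GaussianInt) := by
  obtain ⟨π, hπ⟩ := exists_gaussianInt_norm_eq hp hp4
  rw [← mul_star_of_norm_eq hπ, squarefree_mul_iff]
  exact ⟨(isCoprime_star_of_norm_eq hp hp2 hπ).isRelPrime, (prime_of_norm_eq hp hπ).squarefree,
    (prime_of_norm_eq hp ((Zsqrtd.norm_conj π).trans hπ)).squarefree⟩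

theorem two_dvd_of_four_dvd_sq_sub {p : ℕ} (hp4 : p % 4 = 1) {x y : GaussianInt}
    (h : 4 ∣ x ^ 2 - 𝕚 * p * y ^ 2) : 2 ∣ x ∧ 2 ∣ y := by
  obtain ⟨c, hc⟩ := h
  have hre : x.re ^ 2 - x.im ^ 2 + 2 * p * (y.re * y.im) = 4 * c.re := by
    linear_combination (norm := (simp [sq]; ring)) congrArg Zsqrtd.re hc
  have him : 2 * (x.re * x.im) - p * (y.re ^ 2 - y.im ^ 2) = 4 * c.im := by
    linear_combination (norm := (simp [sq]; ring)) congrArg Zsqrtd.im hc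
  have hp1 : (p : ZMod 4) = 1 := by rw [← ZMod.natCast_mod, hp4, Nat.cast_one]
  have hre' := congrArg (Int.cast : ℤ → ZMod 4) hre
  have him' := congrArg (Int.cast : ℤ → ZMod 4) him
  push_cast [hp1, show (4 : ZMod 4) = 0 from rfl] at hre' him'
  have hZMod : ∀ a b c d : ZMod 4, a ^ 2 - b ^ 2 + 2 * (c * d) = 0 →
      2 * (a * b) - (c ^ 2 - d ^ 2) = 0 → 2 * a = 0 ∧ 2 * b = 0 ∧ 2 * c = 0 ∧ 2 * d = 0 := by
    decide
  have heven (m : ℤ) (hm : 2 * (m : ZMod 4) = 0) : 2 ∣ m := by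
    have h1 := (ZMod.intCast_zmod_eq_zero_iff_dvd (2 * m) 4).1 (by exact_mod_cast hm)
    omega
  have hdvd (z : GaussianInt) (hz₁ : 2 ∣ z.re) (hz₂ : 2 ∣ z.im) : 2 ∣ z :=
    mod_cast (Zsqrtd.intCast_dvd 2 z).2 ⟨hz₁, hz₂⟩
  obtain ⟨h₁, h₂, h₃, h₄⟩ := hZMod x.re x.im y.re y.im (by linear_combination hre')
    (by linear_combination him')
  exact ⟨hdvd _ (heven _ h₁) (heven _ h₂), hdvd _ (heven _ h₃) (heven _ h₄)⟩

/-! ### The ring of integers of `ℚ(√(2p), i)` -/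

/-- The ring `ℤ[i][θ]`, `θ² = ip`, in which `(1 - i)θ` is a square root of `2p`: the ring of
integers of `ℚ(√(2p), i)`, presented as a quadratic extension of `ℤ[i]`. The element `θ` is `ω`. -/
abbrev kOrder (p : ℕ) : Type := QuadraticAlgebra GaussianInt (𝕚 * p) 0

theorem one_sub_I_ne_zero : (1 - I : ℂ) ≠ 0 :=
  sub_ne_zero.2 fun h => by simpa using congrArg Complex.im h

theorem sqrt_two_mul_sq (p : ℕ) : ((√(2 * p) : ℝ) : ℂ) ^ 2 = 2 * p := by
  rw [← Complex.ofReal_pow, Real.sq_sqrt (by positivity)]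
  norm_cast

theorem toComplex_sqrtd : GaussianInt.toComplex 𝕚 = I := by
  simp [GaussianInt.toComplex_def]

theorem sq_sqrt_div_one_sub_I (p : ℕ) : ((√(2 * p) : ℝ) / (1 - I) : ℂ) ^ 2 = I * p := by
  rw [div_pow, sqrt_two_mul_sq, div_eq_iff (pow_ne_zero 2 one_sub_I_ne_zero)]
  linear_combination (2 * p - p * I) * Complex.I_sq

/-- The embedding of `ℤ[i][θ]` into `ℂ` with `θ ↦ √(2p) / (1 - i)`. -/
def kEmb (p : ℕ) : kOrder p →+* ℂ where
  toFun z := GaussianInt.toComplex z.re + GaussianInt.toComplex z.im * (√(2 * p) / (1 - I))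
  map_one' := by simp
  map_zero' := by simp
  map_add' x y := by
    simp only [QuadraticAlgebra.re_add, QuadraticAlgebra.im_add, map_add]
    ring
  map_mul' x y := by
    simp only [QuadraticAlgebra.re_mul, QuadraticAlgebra.im_mul, map_add, map_mul, map_zero,
      toComplex_sqrtd, map_natCast]
    linear_combination -(GaussianInt.toComplex x.im * GaussianInt.toComplex y.im) *
      sq_sqrt_div_one_sub_I p

theorem kEmb_apply (p : ℕ) (z : kOrder p) : kEmb p z =
    GaussianInt.toComplex z.re + GaussianInt.toComplex z.im * (√(2 * p) / (1 - I)) := rfl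

theorem kEmb_mem_kfield (p : ℕ) (z : kOrder p) : kEmb p z ∈ kfield p := by
  have hI : I ∈ kfield p := subset_adjoin _ _ (by simp)
  have hs : ((√(2 * p) : ℝ) : ℂ) ∈ kfield p := subset_adjoin _ _ (by simp)
  have hg (x : GaussianInt) : GaussianInt.toComplex x ∈ kfield p := by
    rw [GaussianInt.toComplex_def]
    exact add_mem (intCast_mem _ _) (mul_mem (intCast_mem _ _) hI)
  exact add_mem (hg _) (mul_mem (hg _) (div_mem hs (sub_mem (one_mem _) hI)))

instance (p : ℕ) : Algebra (kOrder p) (kfield p) :=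
  ((kEmb p).codRestrict (kfield p) (kEmb_mem_kfield p)).toAlgebra

theorem kEmb_mul_kEmb_star (p : ℕ) (z : kOrder p) :
    kEmb p z * kEmb p (star z) = GaussianInt.toComplex (QuadraticAlgebra.norm z) := by
  rw [← map_mul, ← QuadraticAlgebra.algebraMap_norm_eq_mul_star, kEmb_apply]
  simp

instance numberField_kfield (p : ℕ) : NumberField (kfield p) := by
  have hI : IsIntegral ℚ I :=
    IsIntegral.of_pow two_pos (by rw [Complex.I_sq]; exact isIntegral_one.neg)
  have hs : IsIntegral ℚ ((√(2 * p) : ℝ) : ℂ) := by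
    refine IsIntegral.of_pow two_pos ?_
    rw [sqrt_two_mul_sq]
    exact_mod_cast (isIntegral_algebraMap (R := ℚ) (A := ℂ) (x := 2 * p))
  have : FiniteDimensional ℚ (kfield p) := IntermediateField.finiteDimensional_adjoin
    (Set.forall_insert_of_forall (fun _ h => h ▸ hI) hs)
  exact ⟨⟩

theorem isIntegral_kOrder {p : ℕ} (z : kOrder p) : IsIntegral ℤ z := by
  have : Algebra.IsIntegral ℤ GaussianInt := ⟨isIntegral_gaussianInt⟩
  exact isIntegral_trans (R := ℤ) (A := GaussianInt) z (Algebra.IsIntegral.isIntegral z)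

section

variable (p : ℕ) [hp : Fact p.Prime] [hp8 : Fact (p % 8 = 1)]

omit hp in
theorem mod_four_eq_one : p % 4 = 1 := by
  have := hp8.out
  omega

omit hp in
theorem ne_two_of_mod_eight : p ≠ 2 := by
  rintro rfl
  exact absurd hp8.out (by decide)

theorem squarefree_sqrtd_mul : Squarefree (𝕚 * p) := by
  obtain ⟨u, hu⟩ := isUnit_sqrtd
  have h := squarefree_natCast_gaussianInt hp.out (ne_two_of_mod_eight p)
    (by rw [mod_four_eq_one]; decide)
  exact h.squarefree_of_dvd (hu ▸ (Units.mul_left_dvd (u := u)).2 dvd_rfl)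

theorem sqrtd_mul_ne_zero : 𝕚 * p ≠ 0 := (squarefree_sqrtd_mul p).ne_zero

instance isDomain_kOrder : IsDomain (kOrder p) := by
  refine isDomain_quadraticAlgebra fun x y => eq_zero_of_sq_eq_squarefree_mul_sq
    (squarefree_sqrtd_mul p) fun hu => hp.out.prime.irreducible.not_isUnit ?_
  have h := Zsqrtd.norm_eq_one_iff.2 (isUnit_of_mul_isUnit_right hu)
  rw [Zsqrtd.norm_natCast, Int.natAbs_mul, Int.natAbs_natCast] at h
  exact Nat.isUnit_iff.2 (Nat.eq_one_of_mul_eq_one_right h)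

instance isIntegrallyClosed_kOrder : IsIntegrallyClosed (kOrder p) := by
  exact isIntegrallyClosed_quadraticAlgebra (squarefree_sqrtd_mul p)
    (sqrtd_mul_ne_zero p) two_ne_zero fun _ _ => two_dvd_of_four_dvd_sq_sub (mod_four_eq_one p)

theorem kEmb_injective : Function.Injective (kEmb p) := by
  refine (injective_iff_map_eq_zero _).2 fun z hz => quadraticAlgebra_norm_eq_zero_iff.1 ?_
  rw [← GaussianInt.toComplex_eq_zero, ← kEmb_mul_kEmb_star, hz, zero_mul]

theorem exists_kEmb_div_eq {x : ℂ} (hx : x ∈ kfield p) :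
    ∃ y z : kOrder p, kEmb p y / kEmb p z = x := by
  let ψ : FractionRing (kOrder p) →+* ℂ := IsFractionRing.lift (kEmb_injective p)
  have hψ (z : kOrder p) : ψ (algebraMap _ _ z) = kEmb p z :=
    IsFractionRing.lift_algebraMap (kEmb_injective p) z
  have hI : I ∈ ψ.fieldRange := ⟨algebraMap _ _ (algebraMap _ _ 𝕚), by
    rw [hψ, kEmb_apply]; simp [GaussianInt.toComplex_def]⟩
  have hθ : (√(2 * p) / (1 - I) : ℂ) ∈ ψ.fieldRange :=
    ⟨algebraMap _ _ ω, by rw [hψ, kEmb_apply]; simp⟩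
  have hs : ((√(2 * p) : ℝ) : ℂ) ∈ ψ.fieldRange := by
    rw [← div_mul_cancel₀ ((√(2 * p) : ℝ) : ℂ) one_sub_I_ne_zero]
    exact mul_mem hθ (sub_mem (one_mem _) hI)
  have hle : (kfield p).toSubfield ≤ ψ.fieldRange := IntermediateField.adjoin_le_subfield ℚ _
    (fun _ ⟨q, hq⟩ => ⟨q, by rw [← hq]; simp⟩)
    (Set.insert_subset hs (Set.singleton_subset_iff.2 hI))
  obtain ⟨q, rfl⟩ := hle hx
  obtain ⟨y, z, -, rfl⟩ := IsFractionRing.div_surjective (A := kOrder p) q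
  exact ⟨y, z, by rw [map_div₀, hψ, hψ]⟩

instance isFractionRing_kfield : IsFractionRing (kOrder p) (kfield p) := by
  have : FaithfulSMul (kOrder p) (kfield p) :=
    (faithfulSMul_iff_algebraMap_injective _ _).2 fun x y hxy =>
      kEmb_injective p (congrArg Subtype.val hxy)
  refine IsFractionRing.of_field _ _ fun x => ?_
  obtain ⟨y, z, hyz⟩ := exists_kEmb_div_eq p x.2
  exact ⟨y, z, Subtype.ext hyz.symm⟩

instance isIntegralClosure_kOrder : IsIntegralClosure (kOrder p) ℤ (kfield p) where
  algebraMap_injective x y hxy := kEmb_injective p (congrArg Subtype.val hxy)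
  isIntegral_iff {x} := by
    refine ⟨fun h => IsIntegrallyClosed.isIntegral_iff.1 h.tower_top, ?_⟩
    rintro ⟨y, rfl⟩
    exact (isIntegral_kOrder y).map (Algebra.algHom ℤ (kOrder p) (kfield p))

instance isDedekindDomain_kOrder : IsDedekindDomain (kOrder p) :=
  IsIntegralClosure.isDedekindDomain ℤ ℚ (kfield p) (kOrder p)

end

/-! ### Ideal classes and genus characters -/

section Class

variable {S : Type*} [CommRing S] [IsDedekindDomain S]

open Classical in
/-- The class of an ideal of a Dedekind domain, with the junk value `1` for the zero ideal. -/
def cls (I : Ideal S) : ClassGroup S :=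
  if h : I = 0 then 1 else ClassGroup.mk0 ⟨I, mem_nonZeroDivisors_of_ne_zero h⟩

theorem cls_of_ne_zero {I : Ideal S} (h : I ≠ 0) :
    cls I = ClassGroup.mk0 ⟨I, mem_nonZeroDivisors_of_ne_zero h⟩ :=
  dif_neg h

theorem exists_cls_eq (c : ClassGroup S) : ∃ I : Ideal S, I ≠ 0 ∧ cls I = c := by
  obtain ⟨I, rfl⟩ := ClassGroup.mk0_surjective c
  exact ⟨I, nonZeroDivisors.coe_ne_zero I, cls_of_ne_zero (nonZeroDivisors.coe_ne_zero I)⟩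

theorem cls_mul {I J : Ideal S} (hI : I ≠ 0) (hJ : J ≠ 0) : cls (I * J) = cls I * cls J := by
  rw [cls_of_ne_zero hI, cls_of_ne_zero hJ, cls_of_ne_zero (mul_ne_zero hI hJ), ← map_mul]
  rfl

theorem cls_pow {I : Ideal S} (hI : I ≠ 0) (n : ℕ) : cls (I ^ n) = cls I ^ n := by
  rw [cls_of_ne_zero hI, cls_of_ne_zero (pow_ne_zero n hI), ← map_pow]
  rfl

theorem cls_eq_one_iff {I : Ideal S} (hI : I ≠ 0) : cls I = 1 ↔ ∃ a, I = Ideal.span {a} := by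
  rw [cls_of_ne_zero hI, ClassGroup.mk0_eq_one_iff]
  exact ⟨fun h => h.1, fun h => ⟨h⟩⟩

omit [IsDedekindDomain S] in
theorem span_singleton_ne_zero {z : S} (hz : z ≠ 0) : (Ideal.span {z} : Ideal S) ≠ 0 := by
  rwa [ne_eq, Ideal.zero_eq_bot, Ideal.span_singleton_eq_bot]

theorem cls_span_singleton (z : S) : cls (Ideal.span {z}) = 1 := by
  by_cases hz : z = 0
  · exact dif_pos (by rw [hz, Ideal.span_singleton_eq_bot.2 rfl, Ideal.zero_eq_bot])
  · exact (cls_eq_one_iff (span_singleton_ne_zero hz)).2 ⟨z, rfl⟩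

theorem cls_span_singleton_mul {z : S} (hz : z ≠ 0) {I : Ideal S} (hI : I ≠ 0) :
    cls (Ideal.span {z} * I) = cls I := by
  rw [cls_mul (span_singleton_ne_zero hz) hI, cls_span_singleton, one_mul]

theorem exists_cls_eq_of_sup_eq_top (c : ClassGroup S) {N : Ideal S} (hN : N ≠ 0) :
    ∃ I : Ideal S, I ≠ 0 ∧ cls I = c ∧ N ⊔ I = ⊤ := by
  by_cases hN1 : N = ⊤
  · obtain ⟨I, hI0, hI⟩ := exists_cls_eq c
    exact ⟨I, hI0, hI, by rw [hN1, top_sup_eq]⟩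
  obtain ⟨J, hJ0, hJ⟩ := exists_cls_eq c⁻¹
  obtain ⟨a, ha⟩ := IsDedekindDomain.exists_sup_span_eq (Ideal.mul_le_left : J * N ≤ J)
    (mul_ne_zero hJ0 hN)
  obtain ⟨I, hI⟩ : J ∣ Ideal.span {a} := Ideal.dvd_iff_le.2 (ha ▸ le_sup_right)
  have hcop : N ⊔ I = ⊤ := by
    refine mul_left_cancel₀ hJ0 ?_
    rw [Ideal.mul_sup, ← hI, ha, Ideal.mul_top]
  have hI0 : I ≠ 0 := by
    rintro rfl
    exact hN1 (by rwa [Ideal.zero_eq_bot, sup_bot_eq] at hcop)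
  have hcls : cls J * cls I = 1 := by rw [← cls_mul hJ0 hI0, ← hI, cls_span_singleton]
  exact ⟨I, hI0, by rw [← inv_inv c, ← hJ, eq_inv_of_mul_eq_one_right hcls], hcop⟩

section ClassGroupHom

variable {M₀ : Type*} [CommMonoidWithZero M₀] [NoZeroDivisors M₀] [IsCancelMulZero M₀]
  {χ : Ideal S →*₀ M₀} (hspan : ∀ z, χ (Ideal.span {z}) ≠ 0 → χ (Ideal.span {z}) = 1)
  (hrep : ∀ c : ClassGroup S, ∃ I, cls I = c ∧ χ I ≠ 0)
include hspan hrep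

theorem eq_of_cls_eq {I J : Ideal S} (hI : χ I ≠ 0) (hJ : χ J ≠ 0) (h : cls I = cls J) :
    χ I = χ J := by
  have hne {L : Ideal S} (hL : χ L ≠ 0) : L ≠ 0 := ne_zero_of_map hL
  obtain ⟨K, hK, hK0⟩ := hrep (cls I)⁻¹
  have hmul {L : Ideal S} (hL : χ L ≠ 0) (hLI : cls L = cls I) : χ L * χ K = 1 := by
    obtain ⟨a, ha⟩ := (cls_eq_one_iff (mul_ne_zero (hne hL) (hne hK0))).1
      (by rw [cls_mul (hne hL) (hne hK0), hLI, hK, mul_inv_cancel])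
    rw [← map_mul, ha]
    exact hspan a (by rw [← ha, map_mul]; exact mul_ne_zero hL hK0)
  exact mul_right_cancel₀ hK0 ((hmul hI rfl).trans (hmul hJ h.symm).symm)

/-- A multiplicative function `χ` on ideals that takes no values besides `0` and `1` on principal
ideals, and does not vanish identically on any ideal class, induces a character of the class group:
the value at a class is that of `χ` at any ideal of the class where `χ` is not zero. -/
def classGroupHom : ClassGroup S →* M₀ˣ := MonoidHom.toHomUnits
  { toFun := fun c => χ (hrep c).choose
    map_one' := by
      have h1 : χ 1 ≠ 0 := by
        obtain ⟨I, -, hI⟩ := hrep 1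
        rw [← mul_one I, map_mul] at hI
        exact right_ne_zero_of_mul hI
      rw [← map_one χ]
      refine eq_of_cls_eq hspan hrep (hrep 1).choose_spec.2 h1 ?_
      rw [(hrep 1).choose_spec.1, Ideal.one_eq_top, ← Ideal.span_singleton_one, cls_span_singleton]
    map_mul' := fun c d => by
      have hmul := mul_ne_zero (hrep c).choose_spec.2 (hrep d).choose_spec.2
      rw [← map_mul] at hmul ⊢
      refine eq_of_cls_eq hspan hrep (hrep (c * d)).choose_spec.2 hmul ?_
      rw [cls_mul (ne_zero_of_map (hrep c).choose_spec.2) (ne_zero_of_map (hrep d).choose_spec.2),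
        (hrep c).choose_spec.1, (hrep d).choose_spec.1, (hrep (c * d)).choose_spec.1] }

theorem classGroupHom_cls {I : Ideal S} (hI : χ I ≠ 0) :
    (classGroupHom hspan hrep (cls I) : M₀) = χ I :=
  eq_of_cls_eq hspan hrep (hrep _).choose_spec.2 hI (hrep _).choose_spec.1

end ClassGroupHom

end Class

theorem quadraticChar_eq_of_associated {R F : Type*} [CommRing R] [Field F] [Fintype F]
    [DecidableEq F] {f : R →+* F} (hunit : ∀ u : R, IsUnit u → quadraticChar F (f u) = 1) {x y : R}
    (h : Associated x y) : quadraticChar F (f x) = quadraticChar F (f y) := by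
  obtain ⟨u, rfl⟩ := h
  rw [map_mul, map_mul, hunit u u.isUnit, mul_one]

section RelNorm

variable {R : Type*} [CommRing R] [IsDomain R] [IsPrincipalIdealRing R] {a : R}
  [IsDedekindDomain (QuadraticAlgebra R a 0)]

theorem relNorm_span_singleton (z : QuadraticAlgebra R a 0) :
    Ideal.relNorm R (Ideal.span {z}) = Ideal.span {QuadraticAlgebra.norm z} := by
  rw [Ideal.relNorm_singleton, Algebra.intNorm_eq_norm, Algebra.norm_apply,
    ← QuadraticAlgebra.det_toLinearMap_eq_norm]
  congr 3

/-- A generator of the relative norm of an ideal of `R[√a]`. -/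
def nrm (I : Ideal (QuadraticAlgebra R a 0)) : R :=
  Submodule.IsPrincipal.generator (Ideal.relNorm R I)

theorem span_nrm (I : Ideal (QuadraticAlgebra R a 0)) : Ideal.span {nrm I} = Ideal.relNorm R I :=
  Ideal.span_singleton_generator _

theorem associated_nrm_iff {I : Ideal (QuadraticAlgebra R a 0)} {b : R} :
    Associated (nrm I) b ↔ Ideal.relNorm R I = Ideal.span {b} := by
  rw [← Ideal.span_singleton_eq_span_singleton, span_nrm]

theorem nrm_dvd_norm {z : QuadraticAlgebra R a 0} {I : Ideal (QuadraticAlgebra R a 0)}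
    (hz : z ∈ I) : nrm I ∣ QuadraticAlgebra.norm z := by
  rw [← Ideal.span_singleton_le_span_singleton, span_nrm, ← relNorm_span_singleton]
  exact Ideal.relNorm_mono R ((Ideal.span_singleton_le_iff_mem I).2 hz)

theorem map_nrm_ne_zero_of_sup_eq_top {T : Type*} [CommRing T] [Nontrivial T] {f : R →+* T}
    (hfa : f a = 0) {I : Ideal (QuadraticAlgebra R a 0)} (h : Ideal.span {ω} ⊔ I = ⊤) :
    f (nrm I) ≠ 0 := by
  obtain ⟨y, hy, z, hz, hyz⟩ := Submodule.mem_sup.1 ((Ideal.eq_top_iff_one _).1 h)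
  obtain ⟨w, rfl⟩ := Ideal.mem_span_singleton.1 hy
  have hre : f z.re = 1 := by
    simpa [hfa] using congrArg (fun x => f x.re) hyz
  have h1 : f (QuadraticAlgebra.norm z) = 1 := by rw [map_norm_eq_sq hfa, hre, one_pow]
  intro h0
  obtain ⟨t, ht⟩ := nrm_dvd_norm hz
  rw [ht, map_mul, h0, zero_mul] at h1
  exact zero_ne_one h1

theorem associated_nrm_mul (I J : Ideal (QuadraticAlgebra R a 0)) :
    Associated (nrm (I * J)) (nrm I * nrm J) := by
  rw [associated_nrm_iff, ← Ideal.span_singleton_mul_span_singleton, span_nrm, span_nrm, map_mul]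

variable {F : Type*} [Field F] [Fintype F] [DecidableEq F] {f : R →+* F}
  (hunit : ∀ u : R, IsUnit u → quadraticChar F (f u) = 1)

/-- The residue symbol of the relative norm of an ideal, with respect to a homomorphism `f` to a
finite field under which units have residue symbol `1`. -/
def idealChar : Ideal (QuadraticAlgebra R a 0) →*₀ ℤ where
  toFun I := quadraticChar F (f (nrm I))
  map_zero' := by
    have h : nrm (0 : Ideal (QuadraticAlgebra R a 0)) = 0 := by
      rw [← Ideal.span_singleton_eq_bot, span_nrm, map_zero, Ideal.zero_eq_bot]
    rw [h, map_zero, MulChar.map_zero]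
  map_one' := by
    rw [quadraticChar_eq_of_associated (f := f) hunit (associated_nrm_iff (b := 1).2 ?_), map_one,
      map_one]
    rw [map_one, Ideal.span_singleton_one, Ideal.one_eq_top]
  map_mul' I J := by
    rw [quadraticChar_eq_of_associated hunit (associated_nrm_mul I J), map_mul, map_mul]

theorem idealChar_apply (I : Ideal (QuadraticAlgebra R a 0)) :
    idealChar hunit I = quadraticChar F (f (nrm I)) := rfl

theorem idealChar_eq_of_relNorm_eq {I : Ideal (QuadraticAlgebra R a 0)} {b : R}
    (hb : Ideal.relNorm R I = Ideal.span {b}) : idealChar hunit I = quadraticChar F (f b) :=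
  quadraticChar_eq_of_associated hunit (associated_nrm_iff.2 hb)

variable (hfa : f a = 0)
include hfa

theorem idealChar_span_singleton (z : QuadraticAlgebra R a 0)
    (h : idealChar hunit (Ideal.span {z}) ≠ 0) : idealChar hunit (Ideal.span {z}) = 1 := by
  rw [idealChar_eq_of_relNorm_eq hunit (relNorm_span_singleton z), map_norm_eq_sq hfa] at h ⊢
  exact quadraticChar_sq_one' fun h0 => h (by rw [h0, zero_pow two_ne_zero, MulChar.map_zero])

theorem exists_cls_eq_idealChar_ne_zero (c : ClassGroup (QuadraticAlgebra R a 0)) :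
    ∃ I, cls I = c ∧ idealChar hunit I ≠ 0 := by
  obtain ⟨I, -, hI, hcop⟩ := exists_cls_eq_of_sup_eq_top c (span_singleton_ne_zero omega_ne_zero)
  refine ⟨I, hI, ?_⟩
  rw [idealChar_apply, ne_eq, quadraticChar_eq_zero_iff]
  exact map_nrm_ne_zero_of_sup_eq_top hfa hcop

/-- The genus character of the class group of `R[√a]` attached to `f`. -/
def genusChar : ClassGroup (QuadraticAlgebra R a 0) →* ℤˣ :=
  classGroupHom (idealChar_span_singleton hunit hfa) (exists_cls_eq_idealChar_ne_zero hunit hfa)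

theorem genusChar_cls {I : Ideal (QuadraticAlgebra R a 0)} {b : R}
    (hb : Ideal.relNorm R I = Ideal.span {b}) (hb0 : f b ≠ 0) :
    (genusChar hunit hfa (cls I) : ℤ) = quadraticChar F (f b) := by
  rw [genusChar, classGroupHom_cls, idealChar_eq_of_relNorm_eq hunit hb]
  rwa [idealChar_eq_of_relNorm_eq hunit hb, ne_eq, quadraticChar_eq_zero_iff]

end RelNorm

/-! ### Ideals with principal squares -/

theorem span_pair_mul_span_pair_eq_span_singleton {A : Type*} [CommRing A] {a b a' b' c : A}
    (r s t u : A) (h₁ : c ∣ a * a') (h₂ : c ∣ a * b') (h₃ : c ∣ b * a') (h₄ : c ∣ b * b')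
    (h : c = r * (a * a') + s * (a * b') + t * (b * a') + u * (b * b')) :
    Ideal.span {a, b} * Ideal.span {a', b'} = Ideal.span {c} := by
  rw [Ideal.span_pair_mul_span_pair]
  apply le_antisymm
  · rw [Ideal.span_le]
    rintro x (rfl | rfl | rfl | rfl) <;> exact Ideal.mem_span_singleton.2 (by assumption)
  · rw [Ideal.span_singleton_le_iff_mem, h]
    refine add_mem (add_mem (add_mem ?_ ?_) ?_) ?_ <;>
    exact Ideal.mul_mem_left _ _ (Ideal.subset_span (by simp))

theorem ne_zero_of_sq_eq_span_singleton {A : Type*} [CommRing A] {J : Ideal A} {z : A} (hz : z ≠ 0)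
    (h : J ^ 2 = Ideal.span {z}) : J ≠ 0 := by
  rintro rfl
  rw [zero_pow two_ne_zero] at h
  exact span_singleton_ne_zero hz h.symm

section PrincipalSquare

variable {R : Type*} [CommRing R] {a : R}

/-- The ideal `(d, √a)` of `R[√a]`, for a divisor `d` of `a`. -/
def ramifiedIdeal (a d : R) : Ideal (QuadraticAlgebra R a 0) :=
  Ideal.span {algebraMap R _ d, ω}

theorem ramifiedIdeal_mul {d d' : R} (h : d * d' = a) (hd : IsCoprime d d') :
    ramifiedIdeal a d * ramifiedIdeal a d' = Ideal.span {ω} := by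
  obtain ⟨u, v, huv⟩ := hd
  have huv' := congrArg (algebraMap R (QuadraticAlgebra R a 0)) huv
  have hω := (omega_sq (a := a)).trans (congrArg (algebraMap R _) h.symm)
  simp only [map_add, map_mul, map_one] at huv' hω
  refine span_pair_mul_span_pair_eq_span_singleton 0 (algebraMap R _ u) (algebraMap R _ v) 0
    ⟨ω, ?_⟩ (Dvd.intro_left _ rfl) (Dvd.intro _ rfl) (Dvd.intro _ rfl) ?_
  · linear_combination -hω
  · linear_combination -ω * huv'

theorem ramifiedIdeal_sq {d d' : R} (h : d * d' = a) (hd : IsCoprime d d') :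
    ramifiedIdeal a d ^ 2 = Ideal.span {algebraMap R _ d} := by
  obtain ⟨u, v, huv⟩ := hd
  have huv' := congrArg (algebraMap R (QuadraticAlgebra R a 0)) huv
  have hω := (omega_sq (a := a)).trans (congrArg (algebraMap R _) h.symm)
  simp only [map_add, map_mul, map_one] at huv' hω
  rw [sq]
  refine span_pair_mul_span_pair_eq_span_singleton (algebraMap R _ u) 0 0 (algebraMap R _ v)
    (Dvd.intro _ rfl) (Dvd.intro _ rfl) (Dvd.intro_left _ rfl) ⟨algebraMap R _ d', ?_⟩ ?_
  · linear_combination hω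
  · linear_combination -algebraMap R _ d * huv' - algebraMap R _ v * hω

theorem span_pair_sq_eq_span_singleton {c w : R} {z : QuadraticAlgebra R a 0} (hw : IsUnit w)
    (hz : QuadraticAlgebra.norm z = w * c ^ 2) (hc : IsCoprime c (2 * z.re)) :
    Ideal.span {algebraMap R _ c, z} ^ 2 = Ideal.span {z} := by
  obtain ⟨u, v, huv⟩ := hc
  obtain ⟨w', hw'⟩ := hw.exists_right_inv
  have huv' := congrArg (algebraMap R (QuadraticAlgebra R a 0)) huv
  have hw'' := congrArg (algebraMap R (QuadraticAlgebra R a 0)) hw'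
  have hnorm := congrArg (algebraMap R (QuadraticAlgebra R a 0)) hz
  have htr := QuadraticAlgebra.algebraMap_trace_eq_add_star z
  rw [QuadraticAlgebra.trace_def, zero_mul, add_zero] at htr
  rw [QuadraticAlgebra.algebraMap_norm_eq_mul_star] at hnorm
  simp only [map_add, map_mul, map_one, map_pow] at huv' hw'' hnorm htr
  rw [sq]
  refine span_pair_mul_span_pair_eq_span_singleton (algebraMap R _ (v * w)) (algebraMap R _ u) 0
    (algebraMap R _ v) ⟨algebraMap R _ w' * star z, ?_⟩ (Dvd.intro_left _ rfl) (Dvd.intro _ rfl)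
    (Dvd.intro _ rfl) ?_
  · linear_combination -algebraMap R _ c ^ 2 * hw'' - algebraMap R _ w' * hnorm
  · rw [map_mul]
    linear_combination -z * huv' + algebraMap R _ v * z * htr + algebraMap R _ v * hnorm

end PrincipalSquare

section RelNormSq

variable {R : Type*} [CommRing R] [IsDomain R] [IsPrincipalIdealRing R] {a : R}
  [IsDedekindDomain (QuadraticAlgebra R a 0)]

theorem associated_nrm_of_sq_associated {I : Ideal (QuadraticAlgebra R a 0)} {b : R}
    (h : Associated (nrm I ^ 2) (b ^ 2)) : Associated (nrm I) b :=
  associated_of_dvd_dvd ((UniqueFactorizationMonoid.pow_dvd_pow_iff_dvd two_ne_zero).1 h.dvd)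
    ((UniqueFactorizationMonoid.pow_dvd_pow_iff_dvd two_ne_zero).1 h.symm.dvd)

theorem relNorm_eq_of_sq_eq_span {I : Ideal (QuadraticAlgebra R a 0)} {δ : QuadraticAlgebra R a 0}
    {b : R} (h : I ^ 2 = Ideal.span {δ}) (hb : Associated (QuadraticAlgebra.norm δ) (b ^ 2)) :
    Ideal.relNorm R I = Ideal.span {b} := by
  have hI := congrArg (Ideal.relNorm R) h
  rw [relNorm_span_singleton, map_pow, ← span_nrm, Ideal.span_singleton_pow,
    Ideal.span_singleton_eq_span_singleton] at hI
  exact associated_nrm_iff.1 (associated_nrm_of_sq_associated (hI.trans hb))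

theorem relNorm_ramifiedIdeal {d d' : R} (h : d * d' = a) (hd : IsCoprime d d') :
    Ideal.relNorm R (ramifiedIdeal a d) = Ideal.span {d} :=
  relNorm_eq_of_sq_eq_span (ramifiedIdeal_sq h hd) (by rw [QuadraticAlgebra.norm_algebraMap])

theorem exists_relNorm_eq_span {l m y : R} (h : l ∣ y ^ 2 - a * m ^ 2) (hl : IsCoprime l (2 * y)) :
    ∃ J : Ideal (QuadraticAlgebra R a 0), Ideal.relNorm R J = Ideal.span {l} := by
  obtain ⟨u, v, huv⟩ := hl
  obtain ⟨k, hk⟩ := h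
  let z : QuadraticAlgebra R a 0 := ⟨y, m⟩
  have huv' := congrArg (algebraMap R (QuadraticAlgebra R a 0)) huv
  have hnorm : z * star z = algebraMap R _ l * algebraMap R _ k := by
    rw [← QuadraticAlgebra.algebraMap_norm_eq_mul_star, quadraticAlgebra_norm_eq, hk, map_mul]
  have htr := QuadraticAlgebra.algebraMap_trace_eq_add_star z
  rw [QuadraticAlgebra.trace_def, zero_mul, add_zero] at htr
  simp only [map_add, map_mul, map_one] at huv' htr
  let J : Ideal (QuadraticAlgebra R a 0) := Ideal.span {algebraMap R _ l, z}
  have hmul : J * J.map (conjAlgEquiv a) = Ideal.span {algebraMap R _ l} := by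
    have hconj : J.map (conjAlgEquiv a) = Ideal.span {algebraMap R _ l, star z} := by
      rw [Ideal.map_span, Set.image_pair, AlgEquiv.commutes]
      rfl
    rw [hconj]
    refine span_pair_mul_span_pair_eq_span_singleton (algebraMap R _ u) (algebraMap R _ v)
      (algebraMap R _ v) 0 (Dvd.intro _ rfl) (Dvd.intro _ rfl) (Dvd.intro_left _ rfl) ⟨_, hnorm⟩ ?_
    linear_combination -algebraMap R _ l * huv' + algebraMap R _ l * algebraMap R _ v * htr
  refine ⟨J, associated_nrm_iff.1 (associated_nrm_of_sq_associated ?_)⟩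
  have hJ := congrArg (Ideal.relNorm R) hmul
  rwa [map_mul, Ideal.relNorm_map_algEquiv, relNorm_span_singleton,
    QuadraticAlgebra.norm_algebraMap, ← sq, ← span_nrm, Ideal.span_singleton_pow,
    Ideal.span_singleton_eq_span_singleton] at hJ

end RelNormSq

/-- The prime of `ℤ[i][θ]` above `1 + i`. -/
def idealQ (p : ℕ) : Ideal (kOrder p) := Ideal.span {algebraMap GaussianInt _ (1 + 𝕚), 1 + ω}

theorem idealQ_sq {p : ℕ} (hp8 : p % 8 = 1) :
    idealQ p ^ 2 = Ideal.span {algebraMap GaussianInt _ (1 + 𝕚)} := by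
  obtain ⟨k, hk⟩ : ∃ k : kOrder p, p = 8 * k + 1 :=
    ⟨(p / 8 : ℕ), mod_cast congrArg (Nat.cast (R := kOrder p)) (show p = 8 * (p / 8) + 1 by omega)⟩
  let i : kOrder p := algebraMap GaussianInt _ 𝕚
  have hi : i ^ 2 = -1 := by rw [← map_pow, sqrtd_sq, map_neg, map_one]
  have hω : (ω : kOrder p) ^ 2 = i * (8 * k + 1) := by
    rw [← hk, omega_sq, map_mul, map_natCast]
  have h4 : (1 + ω) * (1 + ω) = (1 + i) * (4 * k + 1 + i * (4 * k) + (1 - i) * ω) := by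
    linear_combination hω + (-4 * k + ω) * hi
  rw [sq, idealQ, map_add, map_one]
  refine span_pair_mul_span_pair_eq_span_singleton (-(4 * k - i * ω)) 0 0 1
    (Dvd.intro _ rfl) (Dvd.intro _ rfl) (Dvd.intro_left _ rfl) ⟨_, h4⟩ ?_
  rw [h4]
  linear_combination (-ω - i * ω) * hi

/-- The element `γ = (1 - i)x₀ + θ`, of norm `-ic²` when `p = c² - 2x₀²`. -/
def gam (p : ℕ) (x₀ : ℤ) : kOrder p := ⟨(1 - 𝕚) * x₀, 1⟩

/-- The ideal `(c, γ)` of `ℤ[i][θ]`, with square `(γ)` when `p = c² - 2x₀²`. -/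
def idealC (p : ℕ) (c x₀ : ℤ) : Ideal (kOrder p) :=
  Ideal.span {algebraMap GaussianInt _ c, gam p x₀}

section

variable {p : ℕ} {c x₀ : ℤ} (h : c ^ 2 - 2 * x₀ ^ 2 = p)
include h

theorem norm_gam : QuadraticAlgebra.norm (gam p x₀) = -𝕚 * (c : GaussianInt) ^ 2 := by
  have h' : (c ^ 2 - 2 * x₀ ^ 2 : GaussianInt) = p := by exact_mod_cast h
  rw [quadraticAlgebra_norm_eq, gam]
  linear_combination 𝕚 * h' + (x₀ : GaussianInt) ^ 2 * sqrtd_sq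

theorem isCoprime_of_sq_sub_two_mul_sq [hp : Fact p.Prime] [hp8 : Fact (p % 8 = 1)] :
    IsCoprime c (4 * x₀) := by
  have hsq : Squarefree (p : ℤ) := (Nat.prime_iff_prime_int.1 hp.out).squarefree
  have hx₀ : IsCoprime c x₀ := IsRelPrime.isCoprime fun d hc hd => hsq d <| by
    rw [← h, ← sq]
    exact dvd_sub (pow_dvd_pow_of_dvd hc 2) (dvd_mul_of_dvd_right (pow_dvd_pow_of_dvd hd 2) 2)
  have hodd : Odd (c ^ 2) := by
    rw [eq_add_of_sub_eq h]
    exact (Int.odd_iff.2 (by have := hp8.out; omega)).add_even (even_two_mul _)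
  have h2 : IsCoprime c 2 :=
    Int.isCoprime_two_right.2 ((Int.odd_pow.1 hodd).resolve_right two_ne_zero)
  exact (h2.mul_right h2).mul_right hx₀

theorem idealC_sq [hp : Fact p.Prime] [hp8 : Fact (p % 8 = 1)] :
    idealC p c x₀ ^ 2 = Ideal.span {gam p x₀} := by
  refine span_pair_sq_eq_span_singleton isUnit_sqrtd.neg (norm_gam h) ?_
  have hc := (isCoprime_of_sq_sub_two_mul_sq h).intCast (R := GaussianInt)
  have hmul : ((4 * x₀ : ℤ) : GaussianInt) = (1 + 𝕚) * (2 * (gam p x₀).re) := by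
    rw [gam]
    push_cast
    linear_combination 2 * (x₀ : GaussianInt) * sqrtd_sq
  exact (hmul ▸ hc).of_mul_right_right

theorem relNorm_idealC [Fact p.Prime] [Fact (p % 8 = 1)] :
    Ideal.relNorm GaussianInt (idealC p c x₀) = Ideal.span {(c : GaussianInt)} :=
  relNorm_eq_of_sq_eq_span (idealC_sq h)
    (norm_gam h ▸ associated_unit_mul_left _ _ isUnit_sqrtd.neg)

end

/-! ### Ideals whose square is generated by an element of the base ring -/

section SquareLemma

variable {R : Type*} [CommRing R] {a : R}

theorem le_span_singleton_of_sq_eq_span {J : Ideal (QuadraticAlgebra R a 0)} {x y : R}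
    (hx : Prime x) (h2 : ¬ x ∣ 2 * a) (hJ : J ^ 2 = Ideal.span {algebraMap R _ (x * y)}) :
    J ≤ Ideal.span {algebraMap R _ x} := by
  intro z hz
  have hdvd : algebraMap R _ x ∣ z ^ 2 := by
    refine (Dvd.intro _ (map_mul _ x y).symm).trans (Ideal.mem_span_singleton.1 ?_)
    exact hJ ▸ Ideal.pow_mem_pow hz 2
  obtain ⟨hre, him⟩ := QuadraticAlgebra.algebraMap_dvd_iff.1 hdvd
  rw [sq, QuadraticAlgebra.re_mul, mul_assoc, ← sq, ← sq] at hre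
  rw [sq, QuadraticAlgebra.im_mul, zero_mul, zero_mul, add_zero, mul_comm z.im, ← two_mul] at him
  have hiff : x ∣ z.re ↔ x ∣ z.im := by
    rw [← hx.dvd_pow_iff_dvd two_ne_zero, ← hx.dvd_pow_iff_dvd (a := z.im) two_ne_zero]
    refine ⟨fun h => ?_, fun h => (dvd_add_left (h.mul_left a)).1 hre⟩
    exact (hx.dvd_or_dvd ((dvd_add_right h).1 hre)).resolve_left fun ha => h2 (ha.mul_left 2)
  rw [Ideal.mem_span_singleton, QuadraticAlgebra.algebraMap_dvd_iff]
  rcases hx.dvd_or_dvd ((hx.dvd_or_dvd him).resolve_left fun h => h2 (h.mul_right a)) with h | h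
  · exact ⟨h, hiff.1 h⟩
  · exact ⟨hiff.2 h, h⟩

theorem sq_dvd_of_le_span_singleton {J : Ideal (QuadraticAlgebra R a 0)} {x z : R}
    (h : J ≤ Ideal.span {algebraMap R _ x}) (hJ : J ^ 2 = Ideal.span {algebraMap R _ z}) :
    x ^ 2 ∣ z := by
  have hle := Ideal.pow_right_mono h 2
  rw [hJ, Ideal.span_singleton_pow, Ideal.span_singleton_le_span_singleton, ← map_pow,
    QuadraticAlgebra.algebraMap_dvd_iff_dvd] at hle
  exact hle

-- Hilbert 90: if `δ` has norm `m²`, then `δ / m` has norm `1`, and `δ (star δ + m)² ∈ R`.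
theorem span_star_add_mul_sq_eq_span {m : R} {δ : QuadraticAlgebra R a 0}
    {K : Ideal (QuadraticAlgebra R a 0)} (hK : K ^ 2 = Ideal.span {δ})
    (hδ : QuadraticAlgebra.norm δ = m ^ 2) :
    (Ideal.span {star δ + algebraMap R _ m} * K) ^ 2 =
      Ideal.span {algebraMap R _ (m ^ 2 * (2 * (m + δ.re)))} := by
  have hnorm : δ * star δ = algebraMap R _ m ^ 2 := by
    rw [← QuadraticAlgebra.algebraMap_norm_eq_mul_star, hδ, map_pow]
  have htr := QuadraticAlgebra.algebraMap_trace_eq_add_star δ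
  rw [QuadraticAlgebra.trace_def, zero_mul, add_zero, map_mul, map_ofNat] at htr
  rw [mul_pow, hK, Ideal.span_singleton_pow, Ideal.span_singleton_mul_span_singleton]
  congr 2
  simp only [map_mul, map_pow, map_add, map_ofNat]
  linear_combination (star δ + 2 * algebraMap R _ m) * hnorm - algebraMap R _ m ^ 2 * htr

variable [IsDomain R] [IsDedekindDomain (QuadraticAlgebra R a 0)]

theorem exists_eq_mul_of_sq_eq_span {J M : Ideal (QuadraticAlgebra R a 0)} {x y : R} (hx : x ≠ 0)
    (hJ : J ^ 2 = Ideal.span {algebraMap R _ (x * y)})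
    (hM : M ^ 2 = Ideal.span {algebraMap R _ x}) :
    ∃ J', J = M * J' ∧ J' ^ 2 = Ideal.span {algebraMap R _ y} := by
  rw [map_mul, ← Ideal.span_singleton_mul_span_singleton, ← hM] at hJ
  obtain ⟨J', rfl⟩ := (UniqueFactorizationMonoid.pow_dvd_pow_iff_dvd two_ne_zero).1 ⟨_, hJ⟩
  refine ⟨J', rfl, mul_left_cancel₀ ?_ ((mul_pow M J' 2).symm.trans hJ)⟩
  rw [hM]
  exact span_singleton_ne_zero ((map_ne_zero_iff _ (FaithfulSMul.algebraMap_injective _ _)).2 hx)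

variable [UniqueFactorizationMonoid R] {ι : Type*} {l : ι → R}
  {𝔯 : ι → Ideal (QuadraticAlgebra R a 0)}

theorem exists_eq_span_mul_prod_of_sq_eq_span
    (h𝔯 : ∀ i, 𝔯 i ^ 2 = Ideal.span {algebraMap R _ (l i)})
    (hl : ∀ x, Prime x → x ∣ 2 * a → ∃ i, Associated x (l i)) {z : R} (hz : z ≠ 0)
    {J : Ideal (QuadraticAlgebra R a 0)} (hJ : J ^ 2 = Ideal.span {algebraMap R _ z}) :
    ∃ (w y : R) (s : Multiset ι), IsUnit w ∧ y ≠ 0 ∧ z = w * y ^ 2 * (s.map l).prod ∧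
      J = Ideal.span {algebraMap R _ y} * (s.map 𝔯).prod := by
  induction z using (wellFounded_dvdNotUnit (α := R)).induction generalizing J with
  | _ z ih
  by_cases hu : IsUnit z
  · have hJu : IsUnit (J ^ 2) := by
      rw [hJ, Ideal.isUnit_iff, Ideal.span_singleton_eq_top]
      exact hu.map _
    refine ⟨z, 1, 0, hu, one_ne_zero, by simp, ?_⟩
    rw [Ideal.isUnit_iff.1 ((isUnit_pow_iff two_ne_zero).1 hJu)]
    simp
  obtain ⟨x, hirr, y, rfl⟩ := WfDvdMonoid.exists_irreducible_factor hu hz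
  have hx := hirr.prime
  by_cases hx2 : x ∣ 2 * a
  · obtain ⟨i, u, hi⟩ := hl x hx hx2
    have hM : 𝔯 i ^ 2 = Ideal.span {algebraMap R _ x} := by
      rw [h𝔯, Ideal.span_singleton_eq_span_singleton]
      exact (Associated.map (algebraMap R _) ⟨u, hi⟩).symm
    obtain ⟨J', rfl, hJ'⟩ := exists_eq_mul_of_sq_eq_span hx.ne_zero hJ hM
    have hy : y ≠ 0 := right_ne_zero_of_mul hz
    obtain ⟨w, v, s, hw, hv, rfl, rfl⟩ := ih y ⟨hy, x, hx.not_isUnit, mul_comm _ _⟩ hy hJ'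
    refine ⟨w * ↑u⁻¹, v, i ::ₘ s, hw.mul u⁻¹.isUnit, hv, ?_, ?_⟩
    · rw [Multiset.map_cons, Multiset.prod_cons, ← hi]
      linear_combination (-x * w * v ^ 2 * (s.map l).prod) * u.inv_mul
    · rw [Multiset.map_cons, Multiset.prod_cons, mul_left_comm]
  · have hle := le_span_singleton_of_sq_eq_span hx hx2 hJ
    obtain ⟨y', hy'⟩ := sq_dvd_of_le_span_singleton hle hJ
    rw [hy'] at hz hJ ih ⊢
    obtain ⟨J', rfl, hJ'⟩ := exists_eq_mul_of_sq_eq_span (pow_ne_zero 2 hx.ne_zero) hJ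
      (by rw [Ideal.span_singleton_pow, map_pow])
    have hy0 : y' ≠ 0 := right_ne_zero_of_mul hz
    obtain ⟨w, v, s, hw, hv, rfl, rfl⟩ := ih y'
      ⟨hy0, x ^ 2, mt (isUnit_pow_iff two_ne_zero).1 hx.not_isUnit, mul_comm _ _⟩ hy0 hJ'
    refine ⟨w, x * v, s, hw, mul_ne_zero hx.ne_zero hv, by ring, ?_⟩
    rw [map_mul, ← Ideal.span_singleton_mul_span_singleton, mul_assoc]

theorem cls_mem_closure_of_sq_eq_span (h𝔯 : ∀ i, 𝔯 i ^ 2 = Ideal.span {algebraMap R _ (l i)})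
    (hl : ∀ x, Prime x → x ∣ 2 * a → ∃ i, Associated x (l i)) (hl0 : ∀ i, l i ≠ 0) {z : R}
    (hz : z ≠ 0) {J : Ideal (QuadraticAlgebra R a 0)} (hJ : J ^ 2 = Ideal.span {algebraMap R _ z}) :
    cls J ∈ Subgroup.closure (Set.range fun i => cls (𝔯 i)) := by
  have h𝔯0 (i : ι) : 𝔯 i ≠ 0 := ne_zero_of_sq_eq_span_singleton
    ((map_ne_zero_iff _ (FaithfulSMul.algebraMap_injective _ _)).2 (hl0 i)) (h𝔯 i)
  obtain ⟨w, y, s, -, hy, -, rfl⟩ := exists_eq_span_mul_prod_of_sq_eq_span h𝔯 hl hz hJ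
  have hprod0 (s : Multiset ι) : (s.map 𝔯).prod ≠ 0 :=
    Multiset.prod_ne_zero fun h => by
      obtain ⟨i, -, hi⟩ := Multiset.mem_map.1 h
      exact h𝔯0 i hi
  clear hJ
  rw [cls_span_singleton_mul ((map_ne_zero_iff _ (FaithfulSMul.algebraMap_injective _ _)).2 hy)
    (hprod0 s)]
  induction s using Multiset.induction_on with
  | empty =>
    rw [Multiset.map_zero, Multiset.prod_zero, Ideal.one_eq_top, ← Ideal.span_singleton_one,
      cls_span_singleton]
    exact one_mem _
  | cons i s ih =>
    rw [Multiset.map_cons, Multiset.prod_cons, cls_mul (h𝔯0 i) (hprod0 s)]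
    exact mul_mem (Subgroup.subset_closure (Set.mem_range_self i)) ih

theorem cls_mem_closure_of_norm_eq_sq (h𝔯 : ∀ i, 𝔯 i ^ 2 = Ideal.span {algebraMap R _ (l i)})
    (hl : ∀ x, Prime x → x ∣ 2 * a → ∃ i, Associated x (l i)) (hl0 : ∀ i, l i ≠ 0)
    (h2 : (2 : R) ≠ 0) {K : Ideal (QuadraticAlgebra R a 0)} {δ : QuadraticAlgebra R a 0}
    (hK : K ^ 2 = Ideal.span {δ}) {m : R} (hm : m ≠ 0) (hδ : QuadraticAlgebra.norm δ = m ^ 2) :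
    cls K ∈ Subgroup.closure (Set.range fun i => cls (𝔯 i)) := by
  obtain ⟨m, hm, hδ, hne⟩ : ∃ m, m ≠ 0 ∧ QuadraticAlgebra.norm δ = m ^ 2 ∧ m + δ.re ≠ 0 := by
    by_cases h : m + δ.re = 0
    · refine ⟨-m, neg_ne_zero.2 hm, hδ.trans (neg_sq m).symm, fun h' => ?_⟩
      exact mul_ne_zero h2 hm (by linear_combination h - h')
    · exact ⟨m, hm, hδ, h⟩
  have hz := mul_ne_zero (pow_ne_zero 2 hm) (mul_ne_zero h2 hne)
  have hsq := span_star_add_mul_sq_eq_span hK hδ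
  have hne' := left_ne_zero_of_mul (ne_zero_of_sq_eq_span_singleton
    ((map_ne_zero_iff _ (FaithfulSMul.algebraMap_injective _ _)).2 hz) hsq)
  have hδ0 : δ ≠ 0 := by
    rintro rfl
    exact pow_ne_zero 2 hm (hδ.symm.trans QuadraticAlgebra.norm_zero)
  rw [← cls_span_singleton_mul (mt Ideal.span_singleton_eq_bot.2 hne')
    (ne_zero_of_sq_eq_span_singleton hδ0 hK)]
  exact cls_mem_closure_of_sq_eq_span h𝔯 hl hl0 hz hsq

end SquareLemma

/-! ### The 2-torsion of the class group -/

theorem exists_eq_mul_sq_of_mul_eq_mul_sq {m n D v : ℕ} (hD : 0 < D) (hmn : m.Coprime n)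
    (h : m * n = D * v ^ 2) : ∃ α β s t, α * β = D ∧ s * t = v ∧ m = α * s ^ 2 ∧ n = β * t ^ 2 := by
  have hαβ : D.gcd m * D.gcd n = D := by rw [← hmn.gcd_mul, h, Nat.gcd_mul_right_right]
  obtain ⟨a, ha⟩ := D.gcd_dvd_right m
  obtain ⟨b, hb⟩ := D.gcd_dvd_right n
  have hab : a * b = v ^ 2 := by
    refine Nat.eq_of_mul_eq_mul_left hD ?_
    rw [← h, ← hαβ, mul_mul_mul_comm, ← ha, ← hb]
  have hcop : IsUnit (gcd a b) := Nat.isUnit_iff.2 <|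
    Nat.Coprime.of_dvd (Dvd.intro_left _ ha.symm) (Dvd.intro_left _ hb.symm) hmn
  obtain ⟨t, rfl⟩ := exists_eq_pow_of_mul_eq_pow (gcd_comm a b ▸ hcop) ((mul_comm _ _).trans hab)
  obtain ⟨s, rfl⟩ := exists_eq_pow_of_mul_eq_pow hcop hab
  exact ⟨_, _, s, t, hαβ, Nat.pow_left_injective two_ne_zero ((mul_pow s t 2).trans hab), ha, hb⟩

theorem exists_mul_succ_eq_of_sq_eq_mul_sq_add_one {D x y : ℕ} (hD : D % 4 = 2)
    (h : x ^ 2 = D * y ^ 2 + 1) :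
    ∃ n v, x = 2 * n + 1 ∧ y = 2 * v ∧ n * (n + 1) = D * v ^ 2 := by
  obtain ⟨E, rfl, hE⟩ : ∃ E, D = 2 * E ∧ ¬ 2 ∣ E := ⟨D / 2, by omega, by omega⟩
  have hxodd : Odd x := by
    refine (Nat.odd_pow_iff two_ne_zero).1 ?_
    rw [h, mul_assoc]
    exact odd_two_mul_add_one _
  obtain ⟨n, rfl⟩ := hxodd
  have hn : 2 * (n * (n + 1)) = E * y ^ 2 := by linarith
  obtain ⟨v, rfl⟩ := Nat.prime_two.dvd_of_dvd_pow
    ((Nat.prime_two.dvd_mul.1 (Dvd.intro _ hn)).resolve_left hE)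
  exact ⟨n, v, rfl, rfl, by linarith⟩

theorem exists_mul_sq_eq_mul_sq_add_one {D : ℕ} (hD : D % 4 = 2) :
    ∃ α β s t : ℕ, α * β = D ∧ α ≠ D ∧ β * t ^ 2 = α * s ^ 2 + 1 := by
  classical
  have hD0 : 0 < D := by omega
  have hsq : ¬ IsSquare (D : ℤ) := by
    rintro ⟨k, hk⟩
    rcases Int.even_or_odd' k with ⟨m, rfl | rfl⟩ <;> ring_nf at hk <;> omega
  have hex : ∃ y, 0 < y ∧ ∃ x, x ^ 2 = D * y ^ 2 + 1 := by
    obtain ⟨x, y, hxy, hy⟩ := Pell.exists_of_not_isSquare (by exact_mod_cast hD0) hsq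
    refine ⟨y.natAbs, Int.natAbs_pos.2 hy, x.natAbs, ?_⟩
    zify
    rw [sq_abs, sq_abs]
    linear_combination hxy
  obtain ⟨y, ⟨hy, x, hx⟩, hmin⟩ : ∃ y, (0 < y ∧ ∃ x, x ^ 2 = D * y ^ 2 + 1) ∧
      ∀ m < y, ¬(0 < m ∧ ∃ x, x ^ 2 = D * m ^ 2 + 1) :=
    ⟨Nat.find hex, Nat.find_spec hex, fun _ => Nat.find_min hex⟩
  obtain ⟨n, v, rfl, rfl, hnv⟩ := exists_mul_succ_eq_of_sq_eq_mul_sq_add_one hD hx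
  obtain ⟨α, β, s, t, hαβ, rfl, hα, hβ⟩ :=
    exists_eq_mul_sq_of_mul_eq_mul_sq hD0 (by simp) hnv
  refine ⟨α, β, s, t, hαβ, ?_, by rw [← hα, ← hβ]⟩
  rintro rfl
  obtain rfl : β = 1 := (Nat.mul_eq_left hD0.ne').1 hαβ
  rw [one_mul] at hβ
  have hst : 0 < s * t := Nat.pos_of_mul_pos_left hy
  refine hmin s ?_ ⟨Nat.pos_of_mul_pos_right hst, t, by rw [← hβ, hα]⟩
  nlinarith

theorem mem_closure_pair_of_sq_eq_one {G : Type*} [CommGroup G] {x g h : G} (hg : g ^ 2 = 1)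
    (hh : h ^ 2 = 1) (hx : x ∈ Subgroup.closure {g, h}) :
    x = 1 ∨ x = h ∨ x = g ∨ x = g * h := by
  have hpow {y : G} (hy : y ^ 2 = 1) (n : ℤ) : y ^ n = 1 ∨ y ^ n = y := by
    rcases Int.even_or_odd' n with ⟨m, rfl | rfl⟩
    · exact Or.inl (by rw [zpow_mul, zpow_ofNat, hy, one_zpow])
    · exact Or.inr (by rw [zpow_add_one, zpow_mul, zpow_ofNat, hy, one_zpow, one_mul])
  obtain ⟨m, n, rfl⟩ := Subgroup.mem_closure_pair.1 hx
  rcases hpow hg m with h₁ | h₁ <;> rcases hpow hh n with h₂ | h₂ <;> simp [h₁, h₂]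

theorem cls_sq_eq_one {S : Type*} [CommRing S] [IsDedekindDomain S] {J : Ideal S} {z : S}
    (hz : z ≠ 0) (h : J ^ 2 = Ideal.span {z}) : cls J ^ 2 = 1 := by
  rw [← cls_pow (ne_zero_of_sq_eq_span_singleton hz h), h, cls_span_singleton]

theorem ramifiedIdeal_unit_mul {R : Type*} [CommRing R] {a u : R} (hu : IsUnit u) (d : R) :
    ramifiedIdeal a (u * d) = ramifiedIdeal a d := by
  rw [ramifiedIdeal, ramifiedIdeal, Ideal.span_insert, map_mul,
    Ideal.span_singleton_mul_left_unit (hu.map _), ← Ideal.span_insert]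

/-- The prime of `ℤ[i][θ]` above a prime `π` of `ℤ[i]` dividing `p`. -/
abbrev idealP (p : ℕ) (π : GaussianInt) : Ideal (kOrder p) := ramifiedIdeal (𝕚 * p) π

section

variable {p : ℕ} [hp : Fact p.Prime] [hp8 : Fact (p % 8 = 1)]

omit hp in
theorem idealQ_ne_zero : idealQ p ≠ 0 := ne_zero_of_sq_eq_span_singleton
  (QuadraticAlgebra.algebraMap_injective.ne (by decide)) (idealQ_sq hp8.out)

theorem cls_idealQ_sq : cls (idealQ p) ^ 2 = 1 :=
  cls_sq_eq_one (QuadraticAlgebra.algebraMap_injective.ne (by decide)) (idealQ_sq hp8.out)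

section

variable {π : GaussianInt} (h : π.norm = p)
include h

theorem isCoprime_sqrtd_mul_star : IsCoprime π (𝕚 * star π) :=
  (isCoprime_mul_unit_left_right isUnit_sqrtd _ _).2
    (isCoprime_star_of_norm_eq hp.out (ne_two_of_mod_eight p) h)

omit hp hp8 in
theorem mul_sqrtd_mul_star : π * (𝕚 * star π) = 𝕚 * p := by
  rw [mul_left_comm, mul_star_of_norm_eq h]

theorem idealP_sq : idealP p π ^ 2 = Ideal.span {algebraMap _ _ π} :=
  ramifiedIdeal_sq (mul_sqrtd_mul_star h) (isCoprime_sqrtd_mul_star h)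

theorem relNorm_idealP : Ideal.relNorm GaussianInt (idealP p π) = Ideal.span {π} :=
  relNorm_ramifiedIdeal (mul_sqrtd_mul_star h) (isCoprime_sqrtd_mul_star h)

theorem cls_idealP_sq : cls (idealP p π) ^ 2 = 1 :=
  cls_sq_eq_one (QuadraticAlgebra.algebraMap_injective.ne (prime_of_norm_eq hp.out h).ne_zero)
    (idealP_sq h)

theorem idealP_ne_zero : idealP p π ≠ 0 := ne_zero_of_sq_eq_span_singleton
  (QuadraticAlgebra.algebraMap_injective.ne (prime_of_norm_eq hp.out h).ne_zero) (idealP_sq h)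

theorem idealP_mul_idealP_star : idealP p π * idealP p (star π) = Ideal.span {ω} := by
  rw [← ramifiedIdeal_mul (mul_sqrtd_mul_star h) (isCoprime_sqrtd_mul_star h),
    ramifiedIdeal_unit_mul isUnit_sqrtd]

theorem cls_idealP_star : cls (idealP p (star π)) = cls (idealP p π) := by
  have hcls := congrArg cls (idealP_mul_idealP_star h)
  rw [cls_mul (idealP_ne_zero h) (idealP_ne_zero ((Zsqrtd.norm_conj π).trans h)),
    cls_span_singleton] at hcls
  exact mul_left_cancel (hcls.trans (sq (cls (idealP p π)) ▸ (cls_idealP_sq h).symm))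

omit hp8 in
theorem exists_associated_of_dvd_two_mul {x : GaussianInt} (hx : Prime x)
    (hdvd : x ∣ 2 * (𝕚 * p)) : ∃ j, Associated x (![1 + 𝕚, π, star π] j) := by
  have h2 : Prime (1 + 𝕚) := prime_of_norm_eq Nat.prime_two (by decide)
  have hπ := prime_of_norm_eq hp.out h
  have hπ' := prime_of_norm_eq hp.out ((Zsqrtd.norm_conj π).trans h)
  have heq : 2 * (𝕚 * p) = (1 + 𝕚) ^ 2 * (π * star π) := by
    rw [mul_star_of_norm_eq h]
    linear_combination -(p : GaussianInt) * sqrtd_sq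
  rw [heq] at hdvd
  rcases hx.dvd_or_dvd hdvd with h' | h'
  · exact ⟨0, hx.associated_of_dvd h2 (hx.dvd_of_dvd_pow h')⟩
  · rcases hx.dvd_or_dvd h' with h' | h'
    · exact ⟨1, hx.associated_of_dvd hπ h'⟩
    · exact ⟨2, hx.associated_of_dvd hπ' h'⟩

theorem idealQ_idealP_sq (j : Fin 3) : ![idealQ p, idealP p π, idealP p (star π)] j ^ 2 =
    Ideal.span {algebraMap _ _ (![1 + 𝕚, π, star π] j)} := by
  fin_cases j
  exacts [idealQ_sq hp8.out, idealP_sq h, idealP_sq ((Zsqrtd.norm_conj π).trans h)]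

theorem cls_mem_closure_pair_of_norm_eq_sq {K : Ideal (kOrder p)} {δ : kOrder p} {m : GaussianInt}
    (hδ0 : δ ≠ 0) (hK : K ^ 2 = Ideal.span {δ}) (hδ : QuadraticAlgebra.norm δ = m ^ 2) :
    cls K ∈ Subgroup.closure {cls (idealQ p), cls (idealP p π)} := by
  have hne : ∀ j, ![1 + 𝕚, π, star π] j ≠ 0 := by
    intro j
    fin_cases j
    exacts [(by decide : 1 + 𝕚 ≠ 0), (prime_of_norm_eq hp.out h).ne_zero,
      (prime_of_norm_eq hp.out ((Zsqrtd.norm_conj π).trans h)).ne_zero]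
  have hm : m ≠ 0 := fun hm =>
    hδ0 (quadraticAlgebra_norm_eq_zero_iff.1 (hδ.trans (by rw [hm, zero_pow two_ne_zero])))
  refine (Subgroup.closure_le _).2 ?_ (cls_mem_closure_of_norm_eq_sq (idealQ_idealP_sq h)
    (fun x => exists_associated_of_dvd_two_mul h) hne two_ne_zero hK hm hδ)
  rintro _ ⟨j, rfl⟩
  fin_cases j
  · exact Subgroup.subset_closure (Set.mem_insert _ _)
  · exact Subgroup.subset_closure (Set.mem_insert_of_mem _ rfl)
  · exact Subgroup.subset_closure (Set.mem_insert_of_mem _ (cls_idealP_star h))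

end

end

theorem gam_ne_zero (p : ℕ) (x₀ : ℤ) : gam p x₀ ≠ 0 :=
  fun h => one_ne_zero (congrArg QuadraticAlgebra.im h)

section

variable {p : ℕ} [hp : Fact p.Prime] [hp8 : Fact (p % 8 = 1)]
  {c x₀ : ℤ} (hc : c ^ 2 - 2 * x₀ ^ 2 = p)
include hc

theorem idealC_ne_zero : idealC p c x₀ ≠ 0 :=
  ne_zero_of_sq_eq_span_singleton (gam_ne_zero p x₀) (idealC_sq hc)

theorem cls_idealC_sq : cls (idealC p c x₀) ^ 2 = 1 :=
  cls_sq_eq_one (gam_ne_zero p x₀) (idealC_sq hc)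

variable {π : GaussianInt} (hπ : π.norm = p)
include hπ

theorem mem_closure_pair_or_mul_mem_of_sq_eq_one {x : ClassGroup (kOrder p)} (hx : x ^ 2 = 1) :
    x ∈ Subgroup.closure {cls (idealQ p), cls (idealP p π)} ∨
      x * cls (idealC p c x₀) ∈ Subgroup.closure {cls (idealQ p), cls (idealP p π)} := by
  obtain ⟨I, hI, rfl⟩ := exists_cls_eq x
  rw [← cls_pow hI, cls_eq_one_iff (pow_ne_zero 2 hI)] at hx
  obtain ⟨α, hα⟩ := hx
  have hα0 : α ≠ 0 := by
    rintro rfl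
    exact hI (eq_zero_of_pow_eq_zero (hα.trans (Ideal.span_singleton_eq_bot.2 rfl)))
  have hnorm := congrArg (Ideal.relNorm GaussianInt) hα
  rw [relNorm_span_singleton, map_pow, ← span_nrm, Ideal.span_singleton_pow,
    Ideal.span_singleton_eq_span_singleton] at hnorm
  obtain ⟨u, hu⟩ := hnorm
  obtain ⟨v, hv | hv⟩ := exists_eq_sq_or_eq_neg_sqrtd_mul_sq u.isUnit
  · refine Or.inl (cls_mem_closure_pair_of_norm_eq_sq hπ hα0 hα (m := nrm I * v) ?_)
    rw [← hu, hv, mul_pow]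
  · rw [← cls_mul hI (idealC_ne_zero hc)]
    refine Or.inr (cls_mem_closure_pair_of_norm_eq_sq hπ (mul_ne_zero hα0 (gam_ne_zero p x₀))
      (m := 𝕚 * (nrm I * c * v)) ?_ ?_)
    · rw [mul_pow, hα, idealC_sq hc, Ideal.span_singleton_mul_span_singleton]
    · rw [map_mul, ← hu, hv, norm_gam hc]
      ring

theorem cls_idealC_mem_closure_pair {s t : ℤ} (h : IsUnit (2 * s ^ 2 - p * t ^ 2)) :
    cls (idealC p c x₀) ∈ Subgroup.closure {cls (idealQ p), cls (idealP p π)} := by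
  let η : kOrder p := ⟨(1 + 𝕚) * s, t⟩
  have hη : QuadraticAlgebra.norm η = 𝕚 * ((2 * s ^ 2 - p * t ^ 2 : ℤ) : GaussianInt) := by
    rw [quadraticAlgebra_norm_eq]
    push_cast
    linear_combination (s : GaussianInt) ^ 2 * sqrtd_sq
  have hu : IsUnit η := by
    rw [QuadraticAlgebra.isUnit_iff_norm_isUnit, hη]
    exact isUnit_sqrtd.mul (h.map (Int.castRingHom GaussianInt))
  have hK : idealC p c x₀ ^ 2 = Ideal.span {gam p x₀ * η} := by
    rw [idealC_sq hc, Ideal.span_singleton_mul_right_unit hu]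
  have h0 : gam p x₀ * η ≠ 0 := mul_ne_zero (gam_ne_zero p x₀) hu.ne_zero
  have hn : QuadraticAlgebra.norm (gam p x₀ * η) =
      (c : GaussianInt) ^ 2 * ((2 * s ^ 2 - p * t ^ 2 : ℤ) : GaussianInt) := by
    rw [map_mul, norm_gam hc, hη]
    linear_combination -(c : GaussianInt) ^ 2 *
      ((2 * s ^ 2 - p * t ^ 2 : ℤ) : GaussianInt) * sqrtd_sq
  rcases Int.isUnit_iff.1 h with h | h <;> rw [h] at hn
  · refine cls_mem_closure_pair_of_norm_eq_sq hπ h0 hK (m := c) ?_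
    rw [hn, Int.cast_one, mul_one]
  · refine cls_mem_closure_pair_of_norm_eq_sq hπ h0 hK (m := 𝕚 * c) ?_
    rw [hn, mul_pow, sqrtd_sq, Int.cast_neg, Int.cast_one, mul_comm]

end

theorem exists_one_add_mul_sqrtd_eq {n s t : ℤ} (h : s ^ 2 + 1 = 2 * n * t ^ 2) :
    ∃ u : GaussianInt, 1 + s * 𝕚 = (1 + 𝕚) * u ∧ u.norm = n * t ^ 2 ∧ IsCoprime u (star u) := by
  have hodd : Odd s := by
    refine (Int.odd_pow.1 (?_ : Odd (s ^ 2))).resolve_right two_ne_zero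
    rw [eq_sub_of_add_eq h, mul_assoc]
    exact (even_two_mul _).sub_odd odd_one
  obtain ⟨k, rfl⟩ := hodd
  refine ⟨⟨k + 1, k⟩, ?_, ?_, ?_⟩
  · ext <;> simp
    ring
  · rw [gaussianInt_norm_eq]
    linarith
  · refine ⟨⟨k + 1 - (k ^ 2 + k), -k - (k ^ 2 + k)⟩, ⟨-(k ^ 2 + k), k ^ 2 + k⟩, ?_⟩
    ext <;> simp <;> ring

theorem exists_eq_mul_mul_sq_of_norm_eq {p : ℕ} (hp : p.Prime) {π u : GaussianInt}
    (hπ : π.norm = p) {t : ℤ} (hu : u.norm = p * t ^ 2) (hcop : IsCoprime u (star u)) :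
    ∃ ρ y w : GaussianInt, (ρ = π ∨ ρ = star π) ∧ IsUnit w ∧ u = ρ * (y ^ 2 * w) := by
  have hmul : u * star u = π * (star π * t ^ 2) := by
    rw [← Zsqrtd.norm_eq_mul_conj, hu, ← mul_assoc, mul_star_of_norm_eq hπ]
    push_cast
    rfl
  obtain ⟨ρ, hρ, v, rfl⟩ : ∃ ρ, (ρ = π ∨ ρ = star π) ∧ ρ ∣ u := by
    rcases (prime_of_norm_eq hp hπ).dvd_or_dvd (Dvd.intro _ hmul.symm) with hdvd | hdvd
    · exact ⟨π, Or.inl rfl, hdvd⟩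
    · exact ⟨star π, Or.inr rfl, star_star u ▸ map_dvd (starRingEnd GaussianInt) hdvd⟩
  have hρp : ρ.norm = p := by
    rcases hρ with rfl | rfl
    · exact hπ
    · exact (Zsqrtd.norm_conj π).trans hπ
  have hv : v * star v = (t : GaussianInt) ^ 2 := by
    rw [Zsqrtd.norm_mul, hρp] at hu
    rw [← Zsqrtd.norm_eq_mul_conj, mul_left_cancel₀ (mod_cast hp.ne_zero) hu, Int.cast_pow]
  rw [star_mul'] at hcop
  obtain ⟨y, w, rfl⟩ := exists_associated_pow_of_mul_eq_pow'
    hcop.of_mul_left_right.of_mul_right_right hv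
  exact ⟨ρ, y, w, hρ, w.isUnit, rfl⟩

theorem exists_span_singleton_sq_eq_span {p : ℕ} {s t : ℤ} (h : s ^ 2 + 1 = 2 * p * t ^ 2) :
    ∃ z : kOrder p, Ideal.span {z} ^ 2 = Ideal.span {algebraMap _ _ (2 * (1 + s * 𝕚))} := by
  have h' : (s : GaussianInt) ^ 2 + 1 = 2 * p * t ^ 2 := by
    exact_mod_cast congrArg (Int.cast : ℤ → GaussianInt) h
  let δ : kOrder p := ⟨s * 𝕚, 𝕚 * (1 - 𝕚) * t⟩
  have hδ : QuadraticAlgebra.norm δ = 1 ^ 2 := by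
    rw [quadraticAlgebra_norm_eq]
    linear_combination (s ^ 2 - 𝕚 * p * (1 - 𝕚) ^ 2 * t ^ 2 - p * t ^ 2 * (2 - 𝕚)) * sqrtd_sq - h'
  have hu : IsUnit δ := by
    rw [QuadraticAlgebra.isUnit_iff_norm_isUnit, hδ]
    exact isUnit_one.pow 2
  have hsq := span_star_add_mul_sq_eq_span (K := ⊤)
    (by rw [Ideal.top_pow, Ideal.span_singleton_eq_top.2 hu]) hδ
  rw [Ideal.mul_top, one_pow, one_mul] at hsq
  exact ⟨_, hsq⟩

section

variable {p : ℕ} [hp : Fact p.Prime] [hp8 : Fact (p % 8 = 1)] {π : GaussianInt} (hπ : π.norm = p)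
include hπ

theorem cls_idealQ_mul_cls_idealP_eq_one {s t : ℤ} (h : s ^ 2 + 1 = 2 * p * t ^ 2) :
    cls (idealQ p) * cls (idealP p π) = 1 := by
  obtain ⟨u, hs, hnorm, hcop⟩ := exists_one_add_mul_sqrtd_eq h
  obtain ⟨ρ, y, w, hρ, hw, rfl⟩ := exists_eq_mul_mul_sq_of_norm_eq hp.out hπ hnorm hcop
  obtain ⟨hρp, hcls⟩ : ρ.norm = p ∧ cls (idealP p ρ) = cls (idealP p π) := by
    rcases hρ with rfl | rfl
    · exact ⟨hπ, rfl⟩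
    · exact ⟨(Zsqrtd.norm_conj π).trans hπ, cls_idealP_star hπ⟩
  have hy : y ≠ 0 := by
    rintro rfl
    simpa using congrArg Zsqrtd.re hs
  let Y : kOrder p := algebraMap GaussianInt _ ((1 + 𝕚) * y)
  have hY : Y ≠ 0 := QuadraticAlgebra.algebraMap_injective.ne
    (mul_ne_zero (by decide : 1 + 𝕚 ≠ 0) hy)
  obtain ⟨z, hz⟩ := exists_span_singleton_sq_eq_span h
  have hQP : (Ideal.span {Y} * (idealQ p * idealP p ρ)) ^ 2 = Ideal.span {z} ^ 2 := by
    rw [mul_pow, mul_pow, idealQ_sq hp8.out, idealP_sq hρp, Ideal.span_singleton_pow,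
      Ideal.span_singleton_mul_span_singleton, Ideal.span_singleton_mul_span_singleton, ← map_mul,
      ← map_pow, ← map_mul, hz, hs, Ideal.span_singleton_eq_span_singleton]
    have heq : 2 * ((1 + 𝕚) * (ρ * (y ^ 2 * w))) =
        ((1 + 𝕚) * y) ^ 2 * ((1 + 𝕚) * ρ) * (-𝕚 * w) := by
      linear_combination (2 + 𝕚) * (1 + 𝕚) * ρ * y ^ 2 * w * sqrtd_sq
    rw [heq]
    exact (associated_mul_unit_right _ _ (isUnit_sqrtd.neg.mul hw)).map _
  rw [← hcls, ← cls_mul idealQ_ne_zero (idealP_ne_zero hρp), ← cls_span_singleton z,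
    ← pow_left_injective two_ne_zero hQP,
    cls_span_singleton_mul hY (mul_ne_zero idealQ_ne_zero (idealP_ne_zero hρp))]

variable {c x₀ : ℤ} (hc : c ^ 2 - 2 * x₀ ^ 2 = p)
include hc

theorem cls_idealC_mem_closure_pair_or_mul_eq_one :
    cls (idealC p c x₀) ∈ Subgroup.closure {cls (idealQ p), cls (idealP p π)} ∨
      cls (idealQ p) * cls (idealP p π) = 1 := by
  obtain ⟨α, β, s, t, hαβ, hα, h⟩ :=
    exists_mul_sq_eq_mul_sq_add_one (D := 2 * p) (by have := hp8.out; omega)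
  zify at h
  have hp0 := hp.out.pos
  obtain ⟨α, rfl⟩ | ⟨β, rfl⟩ := Nat.prime_two.dvd_mul.1 (Dvd.intro _ hαβ.symm)
  · have hαβ' : α * β = p := by linarith
    rcases (Nat.dvd_prime hp.out).1 (Dvd.intro _ hαβ') with rfl | rfl
    · obtain rfl : β = p := by linarith
      refine Or.inl (cls_idealC_mem_closure_pair hc hπ (s := s) (t := t) ?_)
      exact Int.isUnit_iff.2 (Or.inr (by push_cast at h; linarith))
    · exact absurd rfl hα
  · have hαβ' : α * β = p := by linarith
    rcases (Nat.dvd_prime hp.out).1 (Dvd.intro _ hαβ') with rfl | rfl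
    · obtain rfl : β = p := by linarith
      refine Or.inr (cls_idealQ_mul_cls_idealP_eq_one hπ (s := s) (t := t) ?_)
      push_cast at h
      linarith
    · obtain rfl : β = 1 := (Nat.mul_eq_left hp0.ne').1 hαβ'
      refine Or.inl (cls_idealC_mem_closure_pair hc hπ (s := t) (t := s) ?_)
      exact Int.isUnit_iff.2 (Or.inl (by push_cast at h; linarith))

theorem exists_two_torsion : ∃ g : ClassGroup (kOrder p), ∀ x, x ^ 2 = 1 →
    x = 1 ∨ x = cls (idealP p π) ∨ x = g ∨ x = g * cls (idealP p π) := by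
  rcases cls_idealC_mem_closure_pair_or_mul_eq_one hπ hc with hC | hQP
  · refine ⟨cls (idealQ p), fun x hx => mem_closure_pair_of_sq_eq_one cls_idealQ_sq
      (cls_idealP_sq hπ) ?_⟩
    exact (mem_closure_pair_or_mul_mem_of_sq_eq_one hc hπ hx).elim id
      fun h => (Subgroup.mul_mem_cancel_right _ hC).1 h
  · refine ⟨cls (idealC p c x₀), fun x hx => ?_⟩
    have hQ : cls (idealQ p) = cls (idealP p π) :=
      mul_right_cancel (hQP.trans (sq (cls (idealP p π)) ▸ (cls_idealP_sq hπ).symm))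
    refine mem_closure_pair_of_sq_eq_one (cls_idealC_sq hc) (cls_idealP_sq hπ) ?_
    have hC := Subgroup.subset_closure (Set.mem_insert (cls (idealC p c x₀)) {cls (idealP p π)})
    have hle : Subgroup.closure {cls (idealQ p), cls (idealP p π)} ≤
        Subgroup.closure {cls (idealC p c x₀), cls (idealP p π)} := by
      rw [hQ, Set.pair_eq_singleton]
      exact Subgroup.closure_mono (Set.subset_insert _ _)
    exact (mem_closure_pair_or_mul_mem_of_sq_eq_one hc hπ hx).elim (fun h => hle h)
      fun h => (Subgroup.mul_mem_cancel_right _ hC).1 (hle h)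

end

/-! ### Quadratic residues modulo `p` -/

theorem exists_intCast_eq_mul_of_not_isSquare {n : ℕ} (hn : ¬ IsSquare n) (r : ZMod n) :
    ∃ A B : ℤ, (A : ZMod n) = r * B ∧ (A ≠ 0 ∨ B ≠ 0) ∧ A ^ 2 < n ∧ B ^ 2 < n := by
  have : NeZero n := ⟨by rintro rfl; exact hn (.zero)⟩
  have hsqrt : n.sqrt ^ 2 < n := by
    rw [sq]
    exact n.sqrt_le.lt_of_ne fun h => hn ⟨_, h.symm⟩
  have hcard : Fintype.card (ZMod n) < Fintype.card (Fin (n.sqrt + 1) × Fin (n.sqrt + 1)) := by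
    rw [ZMod.card, Fintype.card_prod, Fintype.card_fin]
    exact n.lt_succ_sqrt
  obtain ⟨⟨i, j⟩, ⟨i', j'⟩, hne, heq⟩ := Fintype.exists_ne_map_eq_of_card_lt
    (fun x => ((x.1 : ℕ) : ZMod n) - r * ((x.2 : ℕ) : ZMod n)) hcard
  have hlt (a b : Fin (n.sqrt + 1)) : ((a : ℤ) - b) ^ 2 < n := by
    have habs : |(a : ℤ) - b| ≤ n.sqrt := abs_le.2 (by omega)
    exact (sq_le_sq' (abs_le.1 habs).1 (abs_le.1 habs).2).trans_lt (mod_cast hsqrt)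
  refine ⟨i - i', j - j', ?_, ?_, hlt i i', hlt j j'⟩
  · push_cast
    linear_combination heq
  · contrapose! hne
    ext <;> simp only <;> omega

theorem exists_sq_sub_two_mul_sq_eq {p : ℕ} (hp : p.Prime) (h2 : IsSquare (2 : ZMod p)) :
    ∃ c x₀ : ℤ, c ^ 2 - 2 * x₀ ^ 2 = p := by
  obtain ⟨r, hr⟩ := h2
  obtain ⟨A, B, hAB, hne, hA, hB⟩ := exists_intCast_eq_mul_of_not_isSquare hp.prime.not_isSquare r
  obtain ⟨k, hk⟩ : (p : ℤ) ∣ A ^ 2 - 2 * B ^ 2 := by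
    rw [← ZMod.intCast_zmod_eq_zero_iff_dvd]
    push_cast
    rw [hAB, hr]
    ring
  have hp0 : (0 : ℤ) < p := mod_cast hp.pos
  have hk0 : k ≠ 0 := by
    rintro rfl
    rw [mul_zero, sub_eq_zero] at hk
    obtain rfl := eq_zero_of_sq_eq_squarefree_mul_sq Int.prime_two.squarefree
      Int.prime_two.not_isUnit hk
    simp_all
  have hk1 : k < 1 := by nlinarith [sq_nonneg B, hp0]
  have hk2 : -2 < k := by nlinarith [sq_nonneg A, hp0]
  obtain rfl : k = -1 := by omega
  exact ⟨A + 2 * B, A + B, by linear_combination -hk⟩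

theorem intCast_sq_eq_two_mul_sq {p : ℕ} {c x₀ : ℤ} (hc : c ^ 2 - 2 * x₀ ^ 2 = p) :
    (c : ZMod p) ^ 2 = 2 * (x₀ : ZMod p) ^ 2 := by
  have h := congrArg (Int.cast : ℤ → ZMod p) hc
  push_cast at h
  rwa [ZMod.natCast_self, sub_eq_zero] at h

section

variable {p : ℕ} [hp : Fact p.Prime]

theorem legendreSym_natCast_eq_one_of_dvd_sub_sq (hp4 : p % 4 = 1) {n : ℕ} {m : ℤ} (hn : Odd n)
    (hn0 : (n : ZMod p) ≠ 0) (h : (n : ℤ) ∣ p - m ^ 2) : legendreSym p n = 1 := by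
  have hgcd : m.gcd n = 1 := by
    obtain ⟨k, hk⟩ := h
    have hcop := Nat.isCoprime_iff_coprime.2 ((ZMod.isUnit_iff_coprime n p).1 hn0.isUnit)
    rw [eq_add_of_sub_eq hk, IsCoprime.mul_add_left_right_iff] at hcop
    exact Int.isCoprime_iff_gcd_eq_one.1 ((IsCoprime.pow_right_iff two_pos).1 hcop).symm
  rw [jacobiSym.legendreSym.to_jacobiSym, jacobiSym.quadratic_reciprocity_one_mod_four' hn hp4,
    jacobiSym.mod_left' (Int.modEq_iff_dvd.2 h).symm, jacobiSym.sq_one' hgcd]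

variable [hp8 : Fact (p % 8 = 1)]

theorem isSquare_two_zmod : IsSquare (2 : ZMod p) :=
  (ZMod.exists_sq_eq_two_iff (ne_two_of_mod_eight p)).2 (Or.inl hp8.out)

theorem two_ne_zero_zmod : (2 : ZMod p) ≠ 0 :=
  Ring.two_ne_zero (by rw [ZMod.ringChar_zmod_n]; exact ne_two_of_mod_eight p)

theorem quadraticChar_two_zmod : quadraticChar (ZMod p) 2 = 1 :=
  (quadraticChar_one_iff_isSquare two_ne_zero_zmod).2 isSquare_two_zmod

theorem quadraticChar_eq_one_of_pow_four_eq_one {x : ZMod p} (hx : x ^ 4 = 1) :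
    quadraticChar (ZMod p) x = 1 := by
  have hx0 : x ≠ 0 := by
    rintro rfl
    exact zero_ne_one ((zero_pow four_ne_zero).symm.trans hx)
  obtain ⟨k, hk⟩ : ∃ k, p / 2 = 4 * k := ⟨p / 8, by have := hp8.out; omega⟩
  rw [quadraticChar_one_iff_isSquare hx0, ZMod.euler_criterion p hx0, hk, pow_mul, hx, one_pow]

theorem quadraticChar_map_eq_one_of_isUnit (f : GaussianInt →+* ZMod p) (u : GaussianInt)
    (hu : IsUnit u) : quadraticChar (ZMod p) (f u) = 1 := by
  refine quadraticChar_eq_one_of_pow_four_eq_one ?_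
  rw [← map_pow]
  rcases eq_one_or_of_isUnit_gaussianInt hu with rfl | rfl | rfl | rfl <;> exact map_one f

theorem quadraticChar_intCast_eq_one_of_dvd_sub_sq {n m : ℤ} (hn : (n : ZMod p) ≠ 0)
    (h : n ∣ p - m ^ 2) : quadraticChar (ZMod p) n = 1 := by
  obtain ⟨k, n', hodd, hk⟩ := Nat.exists_eq_two_pow_mul_odd (n := n.natAbs) (by aesop)
  have hn' : (n' : ℤ) ∣ n := Int.natCast_dvd.2 (hk ▸ Dvd.intro_left _ rfl)
  have hodd1 : quadraticChar (ZMod p) n' = 1 := by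
    have hn'0 : (n' : ZMod p) ≠ 0 := ne_zero_of_dvd_ne_zero hn (by
      simpa only [eq_intCast, Int.cast_natCast] using map_dvd (Int.castRingHom (ZMod p)) hn')
    have hleg :=
      legendreSym_natCast_eq_one_of_dvd_sub_sq (mod_four_eq_one p) hodd hn'0 (hn'.trans h)
    rwa [legendreSym, Int.cast_natCast] at hleg
  have habs : quadraticChar (ZMod p) n.natAbs = 1 := by
    rw [hk, Nat.cast_mul, Nat.cast_pow, Nat.cast_ofNat, map_mul, map_pow, quadraticChar_two_zmod,
      hodd1, one_pow, one_mul]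
  rcases n.natAbs_eq with hsign | hsign
  · rw [hsign, Int.cast_natCast, habs]
  · rw [hsign, Int.cast_neg, Int.cast_natCast, neg_eq_neg_one_mul, map_mul, habs, mul_one]
    exact quadraticChar_eq_one_of_pow_four_eq_one (by norm_num)

section

variable {c x₀ : ℤ} (hc : c ^ 2 - 2 * x₀ ^ 2 = p)
include hc

theorem intCast_ne_zero_of_sq_sub_two_mul_sq : (c : ZMod p) ≠ 0 ∧ (x₀ : ZMod p) ≠ 0 := by
  have hsq := intCast_sq_eq_two_mul_sq hc
  have hiff : (c : ZMod p) = 0 ↔ (x₀ : ZMod p) = 0 := by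
    rw [← sq_eq_zero_iff, hsq, mul_eq_zero, sq_eq_zero_iff, or_iff_right two_ne_zero_zmod]
  have hcop := (isCoprime_of_sq_sub_two_mul_sq hc).map (Int.castRingHom (ZMod p))
  have hc0 : (c : ZMod p) ≠ 0 := fun h0 => by
    simp [h0, hiff.1 h0] at hcop
  exact ⟨hc0, hc0 ∘ hiff.2⟩

theorem quadraticChar_intCast_eq_two_pow :
    ((quadraticChar (ZMod p) c : ℤ) : ZMod p) = 2 ^ ((p - 1) / 4) := by
  have hp2 : ringChar (ZMod p) ≠ 2 := by
    rw [ZMod.ringChar_zmod_n]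
    exact ne_two_of_mod_eight p
  have hcard : Fintype.card (ZMod p) / 2 = 2 * ((p - 1) / 4) := by
    have := hp8.out
    rw [ZMod.card]
    omega
  have hx := quadraticChar_eq_pow_of_char_ne_two' hp2 (x₀ : ZMod p)
  rw [quadraticChar_intCast_eq_one_of_dvd_sub_sq (intCast_ne_zero_of_sq_sub_two_mul_sq hc).2
    (m := c) ⟨-2 * x₀, by linear_combination -hc⟩, Int.cast_one, hcard, pow_mul] at hx
  rw [quadraticChar_eq_pow_of_char_ne_two' hp2, hcard, pow_mul, intCast_sq_eq_two_mul_sq hc,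
    mul_pow, ← hx, mul_one]

end

end

section

variable {p : ℕ} [hp : Fact p.Prime] [hp8 : Fact (p % 8 = 1)]

theorem quadraticChar_map_star_eq_one {π : GaussianInt} (hπ : π.norm = p)
    {f : GaussianInt →+* ZMod p} (hf : f π = 0) : quadraticChar (ZMod p) (f (star π)) = 1 := by
  have htrace : f (star π) = 2 * (π.re : ZMod p) := by
    have hadd : π + star π = 2 * π.re := by
      ext <;> simp [two_mul]
    rw [← zero_add (f (star π)), ← hf, ← map_add, hadd, map_mul, map_ofNat, map_intCast]
  have hne : f (star π) ≠ 0 := fun h0 => by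
    have hcop := (isCoprime_star_of_norm_eq hp.out (ne_two_of_mod_eight p) hπ).map f
    rw [hf, h0] at hcop
    exact not_isCoprime_zero_zero hcop
  rw [htrace] at hne ⊢
  rw [map_mul, quadraticChar_two_zmod, one_mul]
  refine quadraticChar_intCast_eq_one_of_dvd_sub_sq (right_ne_zero_of_mul hne) (m := π.im)
    ⟨π.re, ?_⟩
  rw [← hπ, gaussianInt_norm_eq]
  ring

theorem exists_norm_eq_and_map_eq_zero :
    ∃ (π : GaussianInt) (f : GaussianInt →+* ZMod p), π.norm = p ∧ f π = 0 := by
  have hp4 : p % 4 ≠ 3 := by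
    rw [mod_four_eq_one]
    decide
  obtain ⟨π, hπ⟩ := exists_gaussianInt_norm_eq hp.out hp4
  obtain ⟨r, hr⟩ := ZMod.exists_sq_eq_neg_one_iff.2 hp4
  let f : GaussianInt →+* ZMod p := Zsqrtd.lift ⟨r, by rw [← hr, Int.cast_neg, Int.cast_one]⟩
  have hmul : f π * f (star π) = 0 := by
    rw [← map_mul, mul_star_of_norm_eq hπ, map_natCast, ZMod.natCast_self]
  rcases mul_eq_zero.1 hmul with h | h
  · exact ⟨π, f, hπ, h⟩
  · exact ⟨star π, f, (Zsqrtd.norm_conj π).trans hπ, h⟩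

end

/-! ### The class of `𝔓` is not trivial -/

theorem norm_norm_kOrder {p : ℕ} (α : kOrder p) : (QuadraticAlgebra.norm α).norm =
    (α.re.norm - p * α.im.norm) ^ 2 +
      2 * p * ((α.im * star α.re).re + (α.im * star α.re).im) ^ 2 := by
  rw [quadraticAlgebra_norm_eq]
  simp only [gaussianInt_norm_eq]
  simp [sq]
  ring

theorem sq_add_two_mul_mul_sq_ne {n : ℕ} (hn : ¬ IsSquare n) (X Y : ℤ) :
    X ^ 2 + 2 * n * Y ^ 2 ≠ n := by
  intro h
  have hn0 : (0 : ℤ) < n := mod_cast Nat.pos_of_ne_zero (by rintro rfl; exact hn .zero)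
  obtain rfl : Y = 0 := by
    by_contra hY
    have : 0 < Y ^ 2 := by positivity
    nlinarith [sq_nonneg X]
  exact hn ⟨X.natAbs, by zify; rw [abs_mul_abs_self]; linarith⟩

theorem cls_idealP_ne_one {p : ℕ} [hp : Fact p.Prime] [hp8 : Fact (p % 8 = 1)] {π : GaussianInt}
    (hπ : π.norm = p) : cls (idealP p π) ≠ 1 := by
  intro h
  obtain ⟨α, hα⟩ := (cls_eq_one_iff (idealP_ne_zero hπ)).1 h
  have hrel := relNorm_idealP hπ
  rw [hα, relNorm_span_singleton, Ideal.span_singleton_eq_span_singleton] at hrel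
  obtain ⟨u, hu⟩ := hrel
  have hnorm := congrArg Zsqrtd.norm hu
  rw [Zsqrtd.norm_mul, (Zsqrtd.norm_eq_one_iff' (by decide) _).2 u.isUnit, mul_one,
    norm_norm_kOrder, hπ] at hnorm
  exact sq_add_two_mul_mul_sq_ne hp.out.prime.not_isSquare _ _ hnorm

/-! ### Genus characters -/

theorem exists_prime_modEq_eight_and_natCast_eq {p r : ℕ} [hp : Fact p.Prime]
    (hr : r.Coprime 8) (hp2 : p ≠ 2) {a : ZMod p} (ha : a ≠ 0) :
    ∃ l : ℕ, l.Prime ∧ l ≡ r [MOD 8] ∧ (l : ZMod p) = a := by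
  have hcop : Nat.Coprime 8 p :=
    ((Nat.coprime_primes Nat.prime_two hp.out).2 hp2.symm).pow_left 3
  obtain ⟨k, hk8, hkp⟩ := Nat.chineseRemainder hcop r a.val
  have hka : (k : ZMod p) = a := by
    rw [(ZMod.natCast_eq_natCast_iff k a.val p).2 hkp, ZMod.natCast_zmod_val]
  have hk : k.Coprime (8 * p) := by
    refine Nat.Coprime.mul_right (hk8.gcd_eq.trans hr) ?_
    rw [← ZMod.isUnit_iff_coprime, hka]
    exact ha.isUnit
  obtain ⟨l, -, hl, hlk⟩ := Nat.forall_exists_prime_gt_and_modEq 0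
    (mul_ne_zero (by decide : 8 ≠ 0) hp.out.ne_zero) hk
  refine ⟨l, hl, (hlk.of_mul_right p).trans hk8, ?_⟩
  rw [← hka]
  exact (ZMod.natCast_eq_natCast_iff _ _ _).2 (hlk.of_mul_left 8)

theorem exists_dvd_sq_sub_of_legendreSym_eq_one {l : ℕ} [hl : Fact l.Prime] (hl2 : l ≠ 2) {n : ℤ}
    (h : legendreSym l n = 1) : ∃ y : ℤ, (l : ℤ) ∣ y ^ 2 - n ∧ IsCoprime (l : ℤ) (2 * y) := by
  have hn : (n : ZMod l) ≠ 0 := fun h0 => by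
    rw [(legendreSym.eq_zero_iff l n).2 h0] at h
    exact zero_ne_one h
  obtain ⟨t, ht⟩ := (legendreSym.eq_one_iff l hn).1 h
  obtain ⟨y, rfl⟩ := ZMod.intCast_surjective t
  refine ⟨y, ?_, ?_⟩
  · rw [← ZMod.intCast_zmod_eq_zero_iff_dvd]
    push_cast
    rw [ht]
    ring
  · refine (Nat.prime_iff_prime_int.1 hl.out).irreducible.coprime_iff_not_dvd.2 fun hdvd => ?_
    rw [← ZMod.intCast_zmod_eq_zero_iff_dvd, Int.cast_mul, Int.cast_ofNat] at hdvd
    have h2 : (2 : ZMod l) ≠ 0 := Ring.two_ne_zero (by rwa [ZMod.ringChar_zmod_n])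
    exact hn (ht.trans (mul_eq_zero_of_left ((mul_eq_zero.1 hdvd).resolve_left h2) _))

theorem exists_prime_dvd_sq_sub_two_mul {p : ℕ} [hp : Fact p.Prime] (hp4 : p % 4 = 1) {r : ℕ}
    (hr : r = 3 ∨ r = 5) : ∃ (l : ℕ) (y : ℤ), l.Prime ∧ l % 8 = r ∧
      quadraticChar (ZMod p) l = -1 ∧ (l : ℤ) ∣ y ^ 2 - 2 * p ∧ IsCoprime (l : ℤ) (2 * y) := by
  have hp2 : p ≠ 2 := by omega
  obtain ⟨a, ha⟩ := quadraticChar_exists_neg_one ((ZMod.ringChar_zmod_n p).trans_ne hp2)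
  have ha0 : a ≠ 0 := by
    rintro rfl
    simp at ha
  obtain ⟨l, hl, hlr, rfl⟩ := exists_prime_modEq_eight_and_natCast_eq (p := p)
    (show r.Coprime 8 by rcases hr with rfl | rfl <;> decide) hp2 ha0
  have hl8 : l % 8 = r := by
    have : r % 8 = r := by omega
    exact Eq.trans hlr this
  have := Fact.mk hl
  have hl2 : l ≠ 2 := by omega
  have hlp : legendreSym l p = -1 := by
    rw [legendreSym.quadratic_reciprocity_one_mod_four hp4 hl2, legendreSym, Int.cast_natCast, ha]
  have hl2' : legendreSym l 2 = -1 := by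
    rw [legendreSym.at_two hl2, ZMod.χ₈_nat_eq_if_mod_eight, if_neg (by omega), if_neg (by omega)]
  obtain ⟨y, hy⟩ := exists_dvd_sq_sub_of_legendreSym_eq_one hl2 (n := 2 * p)
    (by rw [legendreSym.mul, hlp, hl2']; rfl)
  exact ⟨l, y, hl, hl8, ha, hy⟩

theorem map_sqrtd_mul_eq_zero {p : ℕ} (f : GaussianInt →+* ZMod p) : f (𝕚 * p) = 0 := by
  rw [map_mul, map_natCast, ZMod.natCast_self, mul_zero]

section

variable {p : ℕ} [hp : Fact p.Prime] [hp8 : Fact (p % 8 = 1)] (f : GaussianInt →+* ZMod p)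

/-- The genus character of `ℤ[i][θ]` at the prime divisor of `p` in `ℤ[i]` that is the kernel
of `f`. -/
def kGenusChar : ClassGroup (kOrder p) →* ℤˣ :=
  genusChar (quadraticChar_map_eq_one_of_isUnit f) (map_sqrtd_mul_eq_zero f)

theorem coe_kGenusChar_cls {I : Ideal (kOrder p)} {b : GaussianInt}
    (hb : Ideal.relNorm GaussianInt I = Ideal.span {b}) (hb0 : f b ≠ 0) :
    (kGenusChar f (cls I) : ℤ) = quadraticChar (ZMod p) (f b) :=
  genusChar_cls _ _ hb hb0

theorem kGenusChar_cls {I : Ideal (kOrder p)} {b : GaussianInt} {s : ℤˣ}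
    (hb : Ideal.relNorm GaussianInt I = Ideal.span {b}) (hs : quadraticChar (ZMod p) (f b) = s) :
    kGenusChar f (cls I) = s := by
  have hb0 : f b ≠ 0 := fun h0 => by
    rw [h0, MulChar.map_zero] at hs
    exact s.ne_zero hs.symm
  exact Units.ext ((coe_kGenusChar_cls f hb hb0).trans hs)

theorem kGenusChar_idealP {π : GaussianInt} (hπ : π.norm = p) (hf : f π = 0) :
    kGenusChar f (cls (idealP p π)) = 1 ∧
      kGenusChar (f.comp (starRingEnd GaussianInt)) (cls (idealP p π)) = 1 := by
  have hstar := quadraticChar_map_star_eq_one hπ hf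
  constructor
  · rw [← cls_idealP_star hπ]
    exact kGenusChar_cls f (relNorm_idealP ((Zsqrtd.norm_conj π).trans hπ)) hstar
  · exact kGenusChar_cls _ (relNorm_idealP hπ) hstar

theorem kGenusChar_idealC {c x₀ : ℤ} (hc : c ^ 2 - 2 * x₀ ^ 2 = p) {s : ℤˣ}
    (hs : quadraticChar (ZMod p) c = s) : kGenusChar f (cls (idealC p c x₀)) = s :=
  kGenusChar_cls f (relNorm_idealC hc) (by rw [map_intCast, hs])

omit hp8 in
theorem map_mul_map_star (z : GaussianInt) :
    f z * f.comp (starRingEnd GaussianInt) z = (z.norm : ZMod p) := by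
  rw [RingHom.comp_apply, starRingEnd_apply, ← map_mul, ← Zsqrtd.norm_eq_mul_conj, map_intCast]

theorem exists_relNorm_eq_span_of_dvd_sq_sub_two_mul {μ : GaussianInt} {l y : ℤ} (hμ : μ ∣ l)
    (h : l ∣ y ^ 2 - 2 * p) (hl : IsCoprime l (2 * y)) :
    ∃ J : Ideal (kOrder p), Ideal.relNorm GaussianInt J = Ideal.span {μ} := by
  have hcop : IsCoprime (l : GaussianInt) (2 * y) := by
    simpa only [Int.cast_mul, Int.cast_ofNat] using hl.intCast (R := GaussianInt)
  have hdvd : (l : GaussianInt) ∣ y ^ 2 - 𝕚 * p * (1 - 𝕚) ^ 2 := by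
    have heq : y ^ 2 - 𝕚 * p * (1 - 𝕚) ^ 2 = ((y ^ 2 - 2 * p : ℤ) : GaussianInt) := by
      push_cast
      linear_combination (2 - 𝕚) * p * sqrtd_sq
    exact heq ▸ map_dvd (Int.castRingHom GaussianInt) h
  exact exists_relNorm_eq_span (hμ.trans hdvd) (hcop.of_isCoprime_of_dvd_left hμ)

theorem exists_kGenusChar_eq_neg_one :
    ∃ x : ClassGroup (kOrder p), ∀ f : GaussianInt →+* ZMod p, kGenusChar f x = -1 := by
  obtain ⟨l, y, -, -, hq, hdvd, hcop⟩ :=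
    exists_prime_dvd_sq_sub_two_mul (mod_four_eq_one p) (Or.inl rfl)
  obtain ⟨J, hJ⟩ := exists_relNorm_eq_span_of_dvd_sq_sub_two_mul (p := p) dvd_rfl hdvd hcop
  refine ⟨cls J, fun f => kGenusChar_cls f hJ ?_⟩
  rw [map_intCast, Int.cast_natCast, hq]
  rfl

theorem exists_kGenusChar_mul_eq_neg_one : ∃ y : ClassGroup (kOrder p),
    kGenusChar f y * kGenusChar (f.comp (starRingEnd GaussianInt)) y = -1 := by
  obtain ⟨l, y, hl, hl8, hq, hdvd, hcop⟩ :=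
    exists_prime_dvd_sq_sub_two_mul (mod_four_eq_one p) (Or.inr rfl)
  obtain ⟨μ, hμ⟩ := exists_gaussianInt_norm_eq hl (by omega)
  have hμl : μ ∣ (l : ℤ) := ⟨star μ, by rw [mul_star_of_norm_eq hμ, Int.cast_natCast]⟩
  obtain ⟨J, hJ⟩ := exists_relNorm_eq_span_of_dvd_sq_sub_two_mul (p := p) hμl hdvd hcop
  have hmul : f μ * f.comp (starRingEnd GaussianInt) μ = l := by
    rw [map_mul_map_star, hμ, Int.cast_natCast]
  have hl0 : (l : ZMod p) ≠ 0 := fun h0 => by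
    rw [h0, MulChar.map_zero] at hq
    exact absurd hq (by decide)
  rw [← hmul] at hl0
  refine ⟨cls J, Units.ext ?_⟩
  rw [Units.val_mul, coe_kGenusChar_cls _ hJ (left_ne_zero_of_mul hl0),
    coe_kGenusChar_cls _ hJ (right_ne_zero_of_mul hl0), ← map_mul, hmul, hq]
  rfl

end

/-! ### Square roots of the class of a ramified prime -/

/-- The ring endomorphism of `ℤ[i][θ]` extending conjugation of `ℤ[i]` with `θ ↦ iθ`; it fixes
`√(2p) = (1 - i)θ`. -/
def twist (p : ℕ) : kOrder p →+* kOrder p where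
  toFun z := ⟨star z.re, 𝕚 * star z.im⟩
  map_one' := by ext <;> simp
  map_zero' := by ext <;> simp
  map_add' x y := by ext <;> simp [mul_add]
  map_mul' x y := by ext <;> simp <;> ring

theorem map_twist_idealP (p : ℕ) (π : GaussianInt) :
    (idealP p π).map (twist p) = idealP p (star π) := by
  have hπ : twist p (algebraMap _ _ π) = algebraMap _ _ (star π) := by ext <;> simp [twist]
  have hω : twist p ω = algebraMap _ _ 𝕚 * ω := by ext <;> simp [twist]
  rw [idealP, ramifiedIdeal, Ideal.map_span, Set.image_pair, hπ, hω, idealP, ramifiedIdeal,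
    Ideal.span_insert, Ideal.span_insert,
    Ideal.span_singleton_mul_left_unit (isUnit_sqrtd.map (algebraMap _ _))]

theorem mul_twist {p : ℕ} (α : kOrder p) : α * twist p α =
    ⟨((α.re.norm - p * α.im.norm : ℤ) : GaussianInt),
      (((α.im * star α.re).re + (α.im * star α.re).im : ℤ) : GaussianInt) * (1 + 𝕚)⟩ := by
  ext <;> simp [twist, gaussianInt_norm_eq, sq] <;> ring

theorem mul_gam_eq_mul_omega {p : ℕ} (x₀ X Y : ℤ) :
    (⟨((p * X : ℤ) : GaussianInt), (Y : GaussianInt) * (1 + 𝕚)⟩ : kOrder p) * gam p x₀ =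
      ⟨((p * X + 2 * Y * x₀ : ℤ) : GaussianInt), ((Y - X * x₀ : ℤ) : GaussianInt) * (1 + 𝕚)⟩
        * ω := by
  ext <;> simp [gam] <;> ring

section

variable {p : ℕ} [hp : Fact p.Prime] [hp8 : Fact (p % 8 = 1)] {π : GaussianInt} (hπ : π.norm = p)
include hπ

theorem norm_norm_eq_of_sq_mul_idealP_eq_span {I : Ideal (kOrder p)} {b : GaussianInt}
    (hb : Ideal.relNorm GaussianInt I = Ideal.span {b}) {α : kOrder p}
    (hα : I ^ 2 * idealP p π = Ideal.span {α}) :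
    (QuadraticAlgebra.norm α).norm = b.norm ^ 2 * p := by
  have h := congrArg (Ideal.relNorm GaussianInt) hα
  rw [map_mul, map_pow, hb, relNorm_idealP hπ, relNorm_span_singleton, Ideal.span_singleton_pow,
    Ideal.span_singleton_mul_span_singleton, Ideal.span_singleton_eq_span_singleton] at h
  obtain ⟨u, hu⟩ := h
  rw [← hu, Zsqrtd.norm_mul, Zsqrtd.norm_mul, (Zsqrtd.norm_eq_one_iff' (by decide) _).2 u.isUnit,
    mul_one, hπ, sq, Zsqrtd.norm_mul, sq]

-- With `τ` the twist, `I · τ(I) · C` has square `(δ)` for `δ = α τ(α) γ / θ`; the norm of `δ` is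
-- a square because both `α τ(α)` and the norm of `γ` are essentially rational.
theorem exists_sq_eq_span_and_norm_eq_sq {c x₀ : ℤ} (hc : c ^ 2 - 2 * x₀ ^ 2 = p)
    {I : Ideal (kOrder p)} {b : GaussianInt} (hb : Ideal.relNorm GaussianInt I = Ideal.span {b})
    {α : kOrder p} (hα : I ^ 2 * idealP p π = Ideal.span {α}) :
    ∃ (K : Ideal (kOrder p)) (δ : kOrder p) (U V : ℤ), K ^ 2 = Ideal.span {δ} ∧ δ.re = U ∧
      QuadraticAlgebra.norm δ = (((b.norm * c) ^ 2 : ℤ) : GaussianInt) ∧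
      U ^ 2 + 2 * p * V ^ 2 = (b.norm * c) ^ 2 := by
  have hαα := mul_twist α
  have hN := norm_norm_eq_of_sq_mul_idealP_eq_span hπ hb hα
  rw [norm_norm_kOrder] at hN
  generalize α.re.norm - p * α.im.norm = X at hN hαα
  generalize (α.im * star α.re).re + (α.im * star α.re).im = Y at hN hαα
  obtain ⟨X, rfl⟩ : (p : ℤ) ∣ X := (Nat.prime_iff_prime_int.1 hp.out).dvd_of_dvd_pow (n := 2)
    ⟨b.norm ^ 2 - 2 * Y ^ 2, by linear_combination hN⟩
  have hXY : p * X ^ 2 + 2 * Y ^ 2 = b.norm ^ 2 :=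
    mul_left_cancel₀ (mod_cast hp.out.ne_zero : (p : ℤ) ≠ 0) (by linear_combination hN)
  let U := p * X + 2 * Y * x₀
  let V := Y - X * x₀
  have hUV : U ^ 2 + 2 * p * V ^ 2 = (b.norm * c) ^ 2 := by
    linear_combination (p + 2 * x₀ ^ 2) * hXY - b.norm ^ 2 * hc
  let δ : kOrder p := ⟨(U : GaussianInt), (V : GaussianInt) * (1 + 𝕚)⟩
  refine ⟨I * I.map (twist p) * idealC p c x₀, δ, U, V, ?_, rfl, ?_, hUV⟩
  · have hτ := congrArg (Ideal.map (twist p)) hα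
    rw [Ideal.map_mul, Ideal.map_pow, map_twist_idealP, Ideal.map_span, Set.image_singleton] at hτ
    have hδ : α * twist p α * gam p x₀ = δ * ω := by rw [hαα, mul_gam_eq_mul_omega]
    refine mul_right_cancel₀ (span_singleton_ne_zero omega_ne_zero) ?_
    rw [Ideal.span_singleton_mul_span_singleton, ← hδ, ← Ideal.span_singleton_mul_span_singleton,
      ← Ideal.span_singleton_mul_span_singleton, ← hα, ← hτ, ← idealC_sq hc,
      ← idealP_mul_idealP_star hπ]
    ring
  · rw [quadraticAlgebra_norm_eq, ← hUV]
    push_cast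
    linear_combination (-2 - 𝕚) * p * (V : GaussianInt) ^ 2 * sqrtd_sq

theorem exists_eq_mul_sq_mul_pow_of_sq_eq_span {T : ℤ} (hT : ¬ π ∣ (T : GaussianInt))
    {J : Ideal (kOrder p)} (hJ : J ^ 2 = Ideal.span {algebraMap GaussianInt _ T}) :
    ∃ (w y : GaussianInt) (d : ℕ),
      IsUnit w ∧ y ≠ 0 ∧ (T : GaussianInt) = w * y ^ 2 * (1 + 𝕚) ^ d := by
  have hT0 : (T : GaussianInt) ≠ 0 := fun h0 => hT (h0 ▸ dvd_zero π)
  obtain ⟨w, y, s, hw, hy, hTs, -⟩ := exists_eq_span_mul_prod_of_sq_eq_span (idealQ_idealP_sq hπ)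
    (fun x => exists_associated_of_dvd_two_mul hπ) hT0 hJ
  have hs : ∀ j ∈ s, j = 0 := by
    intro j hj
    have hdvd : ![1 + 𝕚, π, star π] j ∣ T :=
      hTs ▸ (Multiset.dvd_prod (Multiset.mem_map_of_mem _ hj)).mul_left _
    fin_cases j
    · rfl
    · exact absurd hdvd hT
    · refine absurd ?_ hT
      simpa [starRingEnd_apply] using map_dvd (starRingEnd GaussianInt) hdvd
  rw [Multiset.eq_replicate_card.2 hs, Multiset.map_replicate, Multiset.prod_replicate] at hTs
  exact ⟨w, y, _, hw, hy, hTs⟩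

end

theorem even_of_sq_eq_prime_pow_mul_sq {q d t y : ℕ} (hq : q.Prime) (hy : y ≠ 0)
    (h : t ^ 2 = q ^ d * y ^ 2) : Even d := by
  have hfac := congrArg (fun n => n.factorization q) h
  simp only [Nat.factorization_mul (pow_ne_zero d hq.ne_zero) (pow_ne_zero 2 hy),
    Nat.factorization_pow, Finsupp.add_apply, Finsupp.smul_apply, smul_eq_mul,
    hq.factorization_self] at hfac
  rw [Nat.even_iff]
  omega

theorem even_of_intCast_eq_mul_sq_mul_pow {T : ℤ} {w y : GaussianInt} {d : ℕ} (hw : IsUnit w)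
    (hy : y ≠ 0) (h : (T : GaussianInt) = w * y ^ 2 * (1 + 𝕚) ^ d) : Even d := by
  have hnorm := congrArg (fun z => (Zsqrtd.normMonoidHom z).natAbs) h
  have h2 : Zsqrtd.normMonoidHom (1 + 𝕚) = 2 := rfl
  have hw1 : Zsqrtd.normMonoidHom w = 1 := (Zsqrtd.norm_eq_one_iff' (by decide) w).2 hw
  have hT : Zsqrtd.normMonoidHom (T : GaussianInt) = T * T := Zsqrtd.norm_intCast T
  simp only [map_mul, map_pow, Int.natAbs_mul, Int.natAbs_pow, h2, hw1, hT] at hnorm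
  refine even_of_sq_eq_prime_pow_mul_sq (t := T.natAbs) Nat.prime_two
    (Int.natAbs_ne_zero.2 (mt (GaussianInt.norm_eq_zero (x := y)).1 hy)) ?_
  rw [sq, hnorm, Int.natAbs_one, one_mul, mul_comm]
  rfl

section

variable {p : ℕ} [hp : Fact p.Prime] [hp8 : Fact (p % 8 = 1)] {π : GaussianInt} (hπ : π.norm = p)
  {f : GaussianInt →+* ZMod p} (hf : f π = 0)
include hπ hf

theorem quadraticChar_intCast_eq_one_of_sq_eq_span {T : ℤ} (hT : (T : ZMod p) ≠ 0)
    {J : Ideal (kOrder p)} (hJ : J ^ 2 = Ideal.span {algebraMap GaussianInt _ T}) :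
    quadraticChar (ZMod p) T = 1 := by
  have hπT : ¬ π ∣ (T : GaussianInt) := fun h => hT <| by
    rw [← map_intCast f, ← zero_dvd_iff, ← hf]
    exact map_dvd f h
  obtain ⟨w, y, d, hw, hy, hTy⟩ := exists_eq_mul_sq_mul_pow_of_sq_eq_span hπ hπT hJ
  obtain ⟨d, rfl⟩ := even_of_intCast_eq_mul_sq_mul_pow hw hy hTy
  have hpow : (1 + 𝕚) ^ (d + d) = 2 ^ d * 𝕚 ^ d := by
    rw [← two_mul, pow_mul, ← mul_pow]
    exact congrArg (· ^ d) (by linear_combination sqrtd_sq)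
  have hfy : f y ≠ 0 := fun h0 => hT <| by
    rw [← map_intCast f, hTy, map_mul, map_mul, map_pow, h0, zero_pow two_ne_zero, mul_zero,
      zero_mul]
  rw [← map_intCast f, hTy, hpow]
  simp only [map_mul, map_pow, map_ofNat]
  rw [quadraticChar_two_zmod, quadraticChar_map_eq_one_of_isUnit f w hw,
    quadraticChar_map_eq_one_of_isUnit f 𝕚 isUnit_sqrtd, ← map_pow, quadraticChar_sq_one' hfy]
  simp only [one_pow, mul_one]

omit hπ hf in
theorem exists_sq_eq_and_quadraticChar_eq {U V n : ℤ} (h : U ^ 2 + 2 * p * V ^ 2 = n ^ 2) :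
    ∃ m : ℤ, m ^ 2 = n ^ 2 ∧ quadraticChar (ZMod p) m = quadraticChar (ZMod p) n ∧
      (U : ZMod p) = m := by
  have hsq : (U : ZMod p) ^ 2 = (n : ZMod p) ^ 2 := by
    have hcast := congrArg (Int.cast : ℤ → ZMod p) h
    push_cast at hcast
    rwa [ZMod.natCast_self, mul_zero, zero_mul, add_zero] at hcast
  rcases sq_eq_sq_iff_eq_or_eq_neg.1 hsq with hU | hU
  · exact ⟨n, rfl, rfl, hU⟩
  · refine ⟨-n, neg_sq n, ?_, by rw [hU, Int.cast_neg]⟩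
    rw [Int.cast_neg, neg_eq_neg_one_mul, map_mul,
      quadraticChar_eq_one_of_pow_four_eq_one (by ring), one_mul]

-- Hilbert 90 turns `K` into an ideal whose square is generated by `m²·2(m + U) ≡ (2m)²m`.
theorem quadraticChar_eq_one_of_norm_eq_sq {K : Ideal (kOrder p)} {δ : kOrder p} {U V n : ℤ}
    (hK : K ^ 2 = Ideal.span {δ}) (hU : δ.re = U)
    (hδ : QuadraticAlgebra.norm δ = ((n ^ 2 : ℤ) : GaussianInt))
    (hUV : U ^ 2 + 2 * p * V ^ 2 = n ^ 2) (hn : (n : ZMod p) ≠ 0) :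
    quadraticChar (ZMod p) n = 1 := by
  obtain ⟨m, hm, hmn, hmU⟩ := exists_sq_eq_and_quadraticChar_eq hUV
  have hm0 : (m : ZMod p) ≠ 0 := by
    rwa [ne_eq, ← quadraticChar_eq_zero_iff, hmn, quadraticChar_eq_zero_iff]
  have h2m : 2 * (m : ZMod p) ≠ 0 := mul_ne_zero two_ne_zero_zmod hm0
  let T : ℤ := m ^ 2 * (2 * (m + U))
  have hT : (T : ZMod p) = (2 * m) ^ 2 * m := by
    simp only [T]
    push_cast
    rw [hmU]
    ring
  have hJ := span_star_add_mul_sq_eq_span (m := (m : GaussianInt)) hK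
    (by rw [hδ, ← hm, Int.cast_pow])
  have hcast : (m : GaussianInt) ^ 2 * (2 * (m + δ.re)) = T := by
    rw [hU]
    push_cast [T]
    rfl
  rw [hcast] at hJ
  have hTchar := quadraticChar_intCast_eq_one_of_sq_eq_span hπ hf
    (hT ▸ mul_ne_zero (pow_ne_zero 2 h2m) hm0) hJ
  rwa [hT, map_mul, quadraticChar_sq_one' h2m, one_mul, hmn] at hTchar

theorem kGenusChar_mul_eq_of_sq_eq_cls_idealP {c x₀ : ℤ} (hc : c ^ 2 - 2 * x₀ ^ 2 = p) {s : ℤˣ}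
    (hs : quadraticChar (ZMod p) c = s) {W : ClassGroup (kOrder p)}
    (hW : W ^ 2 = cls (idealP p π)) :
    kGenusChar f W * kGenusChar (f.comp (starRingEnd GaussianInt)) W = s := by
  obtain ⟨I, hI, rfl, hcop⟩ := exists_cls_eq_of_sup_eq_top W (span_singleton_ne_zero omega_ne_zero)
  have hnrm (F : GaussianInt →+* ZMod p) : F (nrm I) ≠ 0 :=
    map_nrm_ne_zero_of_sup_eq_top (map_sqrtd_mul_eq_zero F) hcop
  obtain ⟨α, hα⟩ := (cls_eq_one_iff (mul_ne_zero (pow_ne_zero 2 hI) (idealP_ne_zero hπ))).1 (by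
    rw [cls_mul (pow_ne_zero 2 hI) (idealP_ne_zero hπ), cls_pow hI, hW, ← sq, cls_idealP_sq hπ])
  obtain ⟨K, δ, U, V, hK, hU, hδ, hUV⟩ :=
    exists_sq_eq_span_and_norm_eq_sq hπ hc (span_nrm I).symm hα
  have hnc : (((nrm I).norm * c : ℤ) : ZMod p) ≠ 0 := by
    rw [Int.cast_mul, ← map_mul_map_star f]
    exact mul_ne_zero (mul_ne_zero (hnrm _) (hnrm _)) (intCast_ne_zero_of_sq_sub_two_mul_sq hc).1
  have hchar := quadraticChar_eq_one_of_norm_eq_sq hπ hf hK hU hδ hUV hnc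
  rw [Int.cast_mul, map_mul, hs, ← map_mul_map_star f, map_mul,
    ← coe_kGenusChar_cls _ (span_nrm I).symm (hnrm f),
    ← coe_kGenusChar_cls _ (span_nrm I).symm (hnrm _)] at hchar
  rw [← mul_right_inj s, Int.units_mul_self, mul_comm]
  exact Units.ext hchar

end

/-! ### The 2-Sylow subgroup of the class group -/

section

variable {p : ℕ} [hp : Fact p.Prime] [hp8 : Fact (p % 8 = 1)]

theorem eq_neg_one_iff_two_pow_eq_neg_one {c x₀ : ℤ} (hc : c ^ 2 - 2 * x₀ ^ 2 = p) {s : ℤˣ}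
    (hs : quadraticChar (ZMod p) c = s) : s = -1 ↔ (2 : ZMod p) ^ ((p - 1) / 4) = -1 := by
  rw [← quadraticChar_intCast_eq_two_pow hc, hs]
  rcases Int.units_eq_one_or s with rfl | rfl
  · have hne : (1 : ZMod p) ≠ -1 := (Ring.neg_one_ne_one_of_char_ne_two (by
      rw [ZMod.ringChar_zmod_n]; exact ne_two_of_mod_eight p)).symm
    simpa using hne
  · simp

theorem sylow_two_classGroup_kOrder_iff :
    (∀ P : Sylow 2 (ClassGroup (kOrder p)),
      Nonempty (P ≃* Multiplicative (ZMod 2 × ZMod 4))) ↔ (2 : ZMod p) ^ ((p - 1) / 4) = -1 := by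
  obtain ⟨π, f, hπ, hf⟩ := exists_norm_eq_and_map_eq_zero (p := p)
  obtain ⟨c, x₀, hc⟩ := exists_sq_sub_two_mul_sq_eq hp.out isSquare_two_zmod
  obtain ⟨g, hg⟩ := exists_two_torsion hπ hc
  obtain ⟨s, hs⟩ : ∃ s : ℤˣ, quadraticChar (ZMod p) c = s := by
    rcases quadraticChar_dichotomy (intCast_ne_zero_of_sq_sub_two_mul_sq hc).1 with h | h
    · exact ⟨1, h⟩
    · exact ⟨-1, h⟩
  have : Finite (ClassGroup (kOrder p)) := Finite.of_equiv (ClassGroup (𝓞 (kfield p)))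
    (ClassGroup.mulEquiv (RingOfIntegers.equiv (kOrder p))).toEquiv
  obtain ⟨x, hx⟩ := exists_kGenusChar_eq_neg_one (p := p)
  rw [← eq_neg_one_iff_two_pow_eq_neg_one hc hs]
  exact sylow_two_mulEquiv_iff ⟨x, hx _, hx _⟩ (exists_kGenusChar_mul_eq_neg_one f)
    (cls_idealP_sq hπ) (cls_idealP_ne_one hπ) (kGenusChar_idealP f hπ hf) hg
    (fun W hW => kGenusChar_mul_eq_of_sq_eq_cls_idealP hπ hf hc hs hW)
    ⟨cls (idealC p c x₀), cls_idealC_sq hc, kGenusChar_idealC f hc hs⟩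

end

theorem statement_9 (p : ℕ) (hp : p.Prime) (hp8 : p % 8 = 1) :
    (∀ P : Sylow 2 (ClassGroup (𝓞 (kfield p))),
      Nonempty (P ≃* Multiplicative (ZMod 2 × ZMod 4))) ↔
      (((2 : ZMod p) ^ ((p - 1) / 4) = -1 ∧ (-1 : ℤ) ^ ((p - 1) / 8) = -1) ∨
       ((2 : ZMod p) ^ ((p - 1) / 4) = -1 ∧ (-1 : ℤ) ^ ((p - 1) / 8) = 1)) := by
  have := Fact.mk hp
  have := Fact.mk hp8
  let e := ClassGroup.mulEquiv (RingOfIntegers.equiv (K := kfield p) (kOrder p))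
  rw [← and_or_left, and_iff_left (neg_one_pow_eq_or ℤ _).symm, ← sylow_two_classGroup_kOrder_iff]
  exact ⟨nonempty_sylow_mulEquiv_of_mulEquiv e, nonempty_sylow_mulEquiv_of_mulEquiv e.symm⟩
end
end

section
/- Let p = c² − 32d² be a prime with p ≡ 1 (mod 8), and let π = c + 4d√2 ∈ ℤ[√2], which generates a prime ideal (π) of ℤ[√2] of residue field 𝔽_p. Then the image of the fundamental unit ε₀ = 1 + √2 in the residue field ℤ[√2]/(π) is a nonzero square if and only if (2/p)₄ = (p/2)₄. -/
/-!
Let `s` and `i` be square roots of `2` and `-1` in a finite field with `q = 8m + 1` elements. Then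
`(1 + s + i)² = 2 (1 + s) (1 + i)`, and `2 = s²` is a square, so `1 + s` is a square exactly when
`1 + i` is. As `(1 + i)⁴ = -4`, Euler's criterion turns this into `(-4)^m = 1`, that is,
`2^(2m) = (-1)^m`. The residue field of `π` is such a field with `q = p`, because `π` has norm `p`.
-/

open Complex NumberField IntermediateField nonZeroDivisors

noncomputable section

/-- ℚ(√2) as a subfield of ℂ. -/
def Q2 : IntermediateField ℚ ℂ := ℚ⟮(Real.sqrt 2 : ℂ)⟯

section SquareRoots

variable {R : Type*} [CommRing R]

theorem one_add_ne_zero_of_sq_eq_two [Nontrivial R] {s : R} (hs : s ^ 2 = 2) : 1 + s ≠ 0 :=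
  left_ne_zero_of_mul_eq_one (b := s - 1) (by linear_combination hs)

theorem one_add_ne_zero_of_sq_eq_neg_one (h2 : (2 : R) ≠ 0) {i : R} (hi : i ^ 2 = -1) :
    1 + i ≠ 0 := by
  have hmul : (1 + i) * (1 - i) = 2 := by linear_combination -hi
  exact left_ne_zero_of_mul (hmul ▸ h2)

theorem one_add_pow_four_of_sq_eq_neg_one {i : R} (hi : i ^ 2 = -1) : (1 + i) ^ 4 = -4 := by
  linear_combination (i ^ 2 + 4 * i + 5) * hi

theorem one_add_add_sq_of_sq_eq_two_of_sq_eq_neg_one {s i : R} (hs : s ^ 2 = 2)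
    (hi : i ^ 2 = -1) : (1 + s + i) ^ 2 = 2 * ((1 + s) * (1 + i)) := by
  linear_combination hs + hi

end SquareRoots

theorem exists_ne_zero_and_sq_eq_iff_isSquare {M : Type*} [MonoidWithZero M] {u : M}
    (hu : u ≠ 0) : (∃ z : M, z ≠ 0 ∧ z ^ 2 = u) ↔ IsSquare u := by
  rw [isSquare_iff_exists_sq]
  constructor
  · rintro ⟨z, -, hz⟩
    exact ⟨z, hz.symm⟩
  · rintro ⟨z, rfl⟩
    exact ⟨z, ne_zero_pow two_ne_zero hu, rfl⟩

theorem isSquare_iff_isSquare_of_isSquare_mul {G : Type*} [CommGroupWithZero G] {a b : G}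
    (ha : a ≠ 0) (hb : b ≠ 0) (hab : IsSquare (a * b)) : IsSquare a ↔ IsSquare b :=
  ⟨fun h ↦ mul_div_cancel_left₀ b ha ▸ hab.div h, fun h ↦ mul_div_cancel_right₀ a hb ▸ hab.div h⟩

theorem isSquare_map_iff {M N E : Type*} [MulOneClass M] [MulOneClass N] [EquivLike E M N]
    [MulEquivClass E M N] (e : E) {x : M} : IsSquare (e x) ↔ IsSquare x :=
  ⟨fun h ↦ by simpa using h.map (e : M ≃* N).symm, fun h ↦ h.map e⟩

section FiniteField

variable {F : Type*} [Field F]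

theorem isSquare_one_add_iff_of_sq_eq_two_of_sq_eq_neg_one (h2 : (2 : F) ≠ 0) {s i : F}
    (hs : s ^ 2 = 2) (hi : i ^ 2 = -1) : IsSquare (1 + s) ↔ IsSquare (1 + i) := by
  refine isSquare_iff_isSquare_of_isSquare_mul (one_add_ne_zero_of_sq_eq_two hs)
    (one_add_ne_zero_of_sq_eq_neg_one h2 hi) ?_
  have hprod : (1 + s) * (1 + i) = (1 + s + i) ^ 2 / s ^ 2 := by
    rw [one_add_add_sq_of_sq_eq_two_of_sq_eq_neg_one hs hi, hs, mul_div_cancel_left₀ _ h2]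
  rw [hprod]
  exact (IsSquare.sq _).div (IsSquare.sq _)

theorem isSquare_one_add_iff_of_sq_eq_two [Fintype F] (hF : Fintype.card F % 8 = 1) {s : F}
    (hs : s ^ 2 = 2) :
    IsSquare (1 + s) ↔
      (2 : F) ^ ((Fintype.card F - 1) / 4) = (-1) ^ ((Fintype.card F - 1) / 8) := by
  obtain ⟨m, hm⟩ : ∃ m, Fintype.card F = 8 * m + 1 := ⟨Fintype.card F / 8, by omega⟩
  have hchar : ringChar F ≠ 2 := by rw [Ne, FiniteField.even_card_iff_char_two]; omega
  have h2 : (2 : F) ≠ 0 := Ring.two_ne_zero hchar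
  obtain ⟨i, hi⟩ : ∃ i : F, -1 = i ^ 2 :=
    (isSquare_iff_exists_sq _).mp (FiniteField.isSquare_neg_one_iff.mpr (by omega))
  calc IsSquare (1 + s)
    _ ↔ IsSquare (1 + i) :=
      isSquare_one_add_iff_of_sq_eq_two_of_sq_eq_neg_one h2 hs hi.symm
    _ ↔ (1 + i) ^ (4 * m) = 1 := by
      rw [FiniteField.isSquare_iff hchar (one_add_ne_zero_of_sq_eq_neg_one h2 hi.symm),
        show Fintype.card F / 2 = 4 * m by omega]
    _ ↔ (-1 : F) ^ m * 2 ^ (2 * m) = 1 := by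
      rw [pow_mul, one_add_pow_four_of_sq_eq_neg_one hi.symm, pow_mul, ← mul_pow]
      norm_num
    _ ↔ (2 : F) ^ (2 * m) = (-1) ^ m := by
      rw [mul_eq_one_iff_inv_eq₀ (by simp), ← inv_pow, inv_neg_one, eq_comm]
    _ ↔ _ := by rw [show (Fintype.card F - 1) / 4 = 2 * m by omega,
      show (Fintype.card F - 1) / 8 = m by omega]

end FiniteField

theorem statement_11_general {R : Type*} [CommRing R] {I : Ideal R} {p : ℕ} (hp : p.Prime)
    (hp8 : p % 8 = 1) (hI : Nat.card (R ⧸ I) = p) {ε₀ : R} (hε₀ : (ε₀ - 1) ^ 2 = 2) :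
    (∃ z : R ⧸ I, z ≠ 0 ∧ z ^ 2 = Ideal.Quotient.mk I ε₀) ↔
      (2 : ZMod p) ^ ((p - 1) / 4) = (-1 : ZMod p) ^ ((p - 1) / 8) := by
  have : Fact p.Prime := ⟨hp⟩
  have : Finite (R ⧸ I) := Nat.finite_of_card_ne_zero (hI ▸ hp.ne_zero)
  have := Fintype.ofFinite (R ⧸ I)
  let φ : ZMod p ≃+* R ⧸ I := ZMod.ringEquivOfPrime _ hp (by rw [← Nat.card_eq_fintype_card, hI])
  obtain ⟨s, hs⟩ : ∃ s : ZMod p, φ s = Ideal.Quotient.mk I (ε₀ - 1) := φ.surjective _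
  have hs2 : s ^ 2 = 2 := φ.injective (by rw [map_pow, hs, ← map_pow, hε₀, map_ofNat, map_ofNat])
  have hε : Ideal.Quotient.mk I ε₀ = φ (1 + s) := by simp [hs]
  have hne : φ (1 + s) ≠ 0 := φ.map_ne_zero_iff.mpr (one_add_ne_zero_of_sq_eq_two hs2)
  rw [hε, exists_ne_zero_and_sq_eq_iff_isSquare hne, isSquare_map_iff,
    isSquare_one_add_iff_of_sq_eq_two (by rwa [ZMod.card]) hs2, ZMod.card]

section QuadraticExtension

variable {K L : Type*} [Field K] [Field L] [Algebra K L] {d : K} {s : L}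

theorem minpoly_eq_X_sq_sub_C (hd : ¬IsSquare d) (hs : s ^ 2 = algebraMap K L d) :
    minpoly K s = Polynomial.X ^ 2 - Polynomial.C d := by
  have hirr : Irreducible (Polynomial.X ^ 2 - Polynomial.C d) :=
    X_pow_sub_C_irreducible_of_prime Nat.prime_two fun b hb ↦ hd ⟨b, by rw [← hb, sq]⟩
  exact (minpoly.eq_of_irreducible_of_monic hirr (by simp [hs])
    (Polynomial.monic_X_pow_sub_C d two_ne_zero)).symm

theorem isQuadraticExtension_adjoin_simple (hd : ¬IsSquare d) (hs : s ^ 2 = algebraMap K L d) :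
    Algebra.IsQuadraticExtension K K⟮s⟯ where
  finrank_eq_two' := by
    have hint : IsIntegral K s := .of_pow two_pos (hs ▸ isIntegral_algebraMap)
    rw [adjoin.finrank hint, minpoly_eq_X_sq_sub_C hd hs, Polynomial.natDegree_X_pow_sub_C]

theorem norm_algebraMap_add_algebraMap_mul [Algebra.IsQuadraticExtension K L]
    (hd : ¬IsSquare d) (hs : s ^ 2 = algebraMap K L d) (a b : K) :
    Algebra.norm K (algebraMap K L a + algebraMap K L b * s) = a ^ 2 - d * b ^ 2 := by
  have : Fact (∀ r : K, r ^ 2 ≠ d + 0 * r) := ⟨fun r hr ↦ hd ⟨r, by linear_combination -hr⟩⟩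
  let f : QuadraticAlgebra K d 0 →ₐ[K] L :=
    QuadraticAlgebra.lift ⟨s, by rw [← sq, hs, Algebra.algebraMap_eq_smul_one, zero_smul, add_zero]⟩
  have hrank : Module.finrank K (QuadraticAlgebra K d 0) = Module.finrank K L := by
    rw [QuadraticAlgebra.finrank_eq_two, Algebra.IsQuadraticExtension.finrank_eq_two K L]
  have hf : Function.Bijective f := ⟨f.toRingHom.injective,
    (LinearMap.injective_iff_surjective_of_finrank_eq_finrank (f := f.toLinearMap) hrank).mp
      f.toRingHom.injective⟩
  have hfab : f ⟨a, b⟩ = algebraMap K L a + algebraMap K L b * s := by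
    simp [f, QuadraticAlgebra.lift, Algebra.smul_def]
  rw [← hfab, ← AlgEquiv.coe_ofBijective f hf, Algebra.norm_eq_of_algEquiv, Algebra.norm_apply]
  refine (QuadraticAlgebra.det_toLinearMap_eq_norm _).trans ?_
  rw [QuadraticAlgebra.norm_def]
  ring

end QuadraticExtension

theorem ofReal_sqrt_two_sq : (Real.sqrt 2 : ℂ) ^ 2 = 2 := by
  rw [← ofReal_pow, Real.sq_sqrt zero_le_two, ofReal_ofNat]

theorem not_isSquare_two_rat : ¬IsSquare (2 : ℚ) := by norm_num

instance : Algebra.IsQuadraticExtension ℚ Q2 :=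
  isQuadraticExtension_adjoin_simple not_isSquare_two_rat (by simp [ofReal_sqrt_two_sq])

instance : NumberField Q2 where
  to_charZero := inferInstance
  to_finiteDimensional := inferInstance

namespace Q2

theorem sub_one_sq_eq_two {ε₀ : 𝓞 Q2} (hε₀ : ((ε₀ : Q2) : ℂ) = 1 + (Real.sqrt 2 : ℂ)) :
    (ε₀ - 1) ^ 2 = 2 := by
  refine RingOfIntegers.ext (Subtype.ext ?_)
  push_cast
  rw [hε₀, add_sub_cancel_left, ofReal_sqrt_two_sq]
  rfl

theorem norm_eq_sq_sub_two_mul_sq {x : Q2} {a b : ℚ}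
    (hx : (x : ℂ) = a + b * (Real.sqrt 2 : ℂ)) : Algebra.norm ℚ x = a ^ 2 - 2 * b ^ 2 := by
  let s : Q2 := AdjoinSimple.gen ℚ (Real.sqrt 2 : ℂ)
  have hs : s ^ 2 = algebraMap ℚ Q2 2 := Subtype.ext ofReal_sqrt_two_sq
  have hxs : x = algebraMap ℚ Q2 a + algebraMap ℚ Q2 b * s := Subtype.ext hx
  rw [hxs, norm_algebraMap_add_algebraMap_mul not_isSquare_two_rat hs]

theorem natCard_quotient_span_singleton {π : 𝓞 Q2} {a b : ℤ}
    (hπ : ((π : Q2) : ℂ) = a + b * (Real.sqrt 2 : ℂ)) :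
    Nat.card (𝓞 Q2 ⧸ Ideal.span {π}) = (a ^ 2 - 2 * b ^ 2).natAbs := by
  have hnorm : Algebra.norm ℤ π = a ^ 2 - 2 * b ^ 2 := by
    have h := Algebra.coe_norm_int π
    rw [norm_eq_sq_sub_two_mul_sq (a := a) (b := b) (by simpa using hπ)] at h
    exact_mod_cast h
  rw [← hnorm, ← Ideal.absNorm_span_singleton, Ideal.absNorm_apply, Submodule.cardQuot_apply]

end Q2

theorem statement_11 (p : ℕ) (hp : p.Prime) (hp8 : p % 8 = 1)
    (c d : ℤ) (hcd : (p : ℤ) = c ^ 2 - 32 * d ^ 2)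
    -- π = c + 4d√2 as an element of the ring of integers of ℚ(√2) :
    (π : 𝓞 Q2) (hπ : ((π : Q2) : ℂ) = (c : ℂ) + 4 * (d : ℂ) * (Real.sqrt 2 : ℂ))
    (hprime : (Ideal.span {π} : Ideal (𝓞 Q2)).IsPrime)
    -- ε₀ = 1 + √2 :
    (ε₀ : 𝓞 Q2) (hε₀ : ((ε₀ : Q2) : ℂ) = 1 + (Real.sqrt 2 : ℂ)) :
    (∃ z : 𝓞 Q2 ⧸ (Ideal.span {π} : Ideal (𝓞 Q2)), z ≠ 0 ∧
        z ^ 2 = Ideal.Quotient.mk (Ideal.span {π}) ε₀) ↔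
      (2 : ZMod p) ^ ((p - 1) / 4) = (-1 : ZMod p) ^ ((p - 1) / 8) := by
  have hcard : Nat.card (𝓞 Q2 ⧸ Ideal.span {π}) = p := by
    rw [Q2.natCard_quotient_span_singleton (a := c) (b := 4 * d) (by push_cast; exact hπ)]
    lia
  exact statement_11_general hp hp8 hcard (Q2.sub_one_sq_eq_two hε₀)
end
end

section
/- Let p = c² − 32d² be a prime with p ≡ 1 (mod 8), and let π = c + 4d√2 ∈ ℤ[√2], which generates a prime ideal (π) of ℤ[√2] of residue field 𝔽_p. Then the image of 2 + √2 in the residue field ℤ[√2]/(π) is a nonzero square if and only if (p/2)₄ = 1. -/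
/-!
Since `π` has norm `c² - 32d² = p`, the residue ring `K` of `(π)` is a finite domain with `p`
elements, hence a field, in which the image `s` of `√2` satisfies `s² = 2`. Over an algebraic
closure, `2 + s = (ζ + ζ⁻¹)²` for some `ζ` with `ζ² + ζ⁻² = s`, and then `ζ⁴ + ζ⁻⁴ = s² - 2 = 0`, so
that `ζ⁸ = -1`. As `-1` is a square in `K`, the element `2 + s` is a square in `K` exactly when `-1`
is an eighth power in `K`, which by Euler's criterion for eighth powers means
`(-1) ^ ((p - 1) / 8) = 1`.
-/

/- STATEMENT 12: Let p = c² − 32d² be a prime, p ≡ 1 (mod 8), π = c + 4d√2 ∈ ℤ[√2]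
(the ring of integers of ℚ(√2)), generating a prime ideal (π). The image of 2 + √2 in
ℤ[√2]/(π) is a nonzero square iff (p/2)₄ = 1. -/

open Complex NumberField IntermediateField nonZeroDivisors

noncomputable section

theorem exists_pow_eq_iff_pow_natCard_div_eq_one {G : Type*} [CommGroup G] [IsCyclic G] [Finite G]
    {n : ℕ} (hn : n ∣ Nat.card G) {a : G} : (∃ y, y ^ n = a) ↔ a ^ (Nat.card G / n) = 1 := by
  have h_le : (powMonoidHom n : G →* G).range ≤ (powMonoidHom (Nat.card G / n) : G →* G).ker := by
    rintro _ ⟨y, rfl⟩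
    rw [MonoidHom.mem_ker, powMonoidHom_apply, powMonoidHom_apply, ← pow_mul,
      Nat.mul_div_cancel' hn, pow_card_eq_one']
  have h_card : Nat.card (powMonoidHom (Nat.card G / n) : G →* G).ker ≤
      Nat.card (powMonoidHom n : G →* G).range := by
    rw [IsCyclic.card_powMonoidHom_ker, IsCyclic.card_powMonoidHom_range,
      Nat.gcd_eq_right (Nat.div_dvd_of_dvd hn), Nat.gcd_eq_right hn]
  exact SetLike.ext_iff.mp (Subgroup.eq_of_le_of_card_ge h_le h_card) a

theorem exists_pow_eq_iff_pow_natCard_sub_one_div_eq_one {K : Type*} [Field K] [Finite K] {n : ℕ}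
    (hn : n ∣ Nat.card K - 1) {a : K} (ha : a ≠ 0) :
    (∃ y, y ^ n = a) ↔ a ^ ((Nat.card K - 1) / n) = 1 := by
  have h_pos : 0 < Nat.card K - 1 := Nat.sub_pos_of_lt Finite.one_lt_card
  have hn0 : n ≠ 0 := (Nat.pos_of_dvd_of_pos hn h_pos).ne'
  have h_units := exists_pow_eq_iff_pow_natCard_div_eq_one (G := Kˣ) (n := n) (a := Units.mk0 a ha)
    (by rwa [Nat.card_units])
  rw [Nat.card_units] at h_units
  simp only [Units.ext_iff, Units.val_pow_eq_pow_val, Units.val_mk0, Units.val_one] at h_units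
  rw [← h_units]
  constructor
  · rintro ⟨y, rfl⟩
    exact ⟨Units.mk0 y (ne_zero_pow hn0 ha), rfl⟩
  · rintro ⟨y, hy⟩
    exact ⟨y, hy⟩

-- In a field, this says that `x + x⁻¹ = t` implies `x² + x⁻² = t² - 2`.
theorem sq_sq_add_one_eq_of_sq_add_one_eq {R : Type*} [CommRing R] {x t : R}
    (h : x ^ 2 + 1 = t * x) : (x ^ 2) ^ 2 + 1 = (t ^ 2 - 2) * x ^ 2 := by
  linear_combination (x ^ 2 + 1 + t * x) * h

theorem two_ne_zero_of_odd_natCard {R : Type*} [Ring R] [Nontrivial R] (hR : Odd (Nat.card R)) :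
    (2 : R) ≠ 0 := by
  intro h
  have : Finite R := Nat.finite_of_card_ne_zero hR.pos.ne'
  have := Fintype.ofFinite R
  obtain ⟨k, hk⟩ := hR
  have h_cast : ((2 * k + 1 : ℕ) : R) = 0 := by
    rw [← hk, Nat.card_eq_fintype_card, Nat.cast_card_eq_zero]
  rw [Nat.cast_succ, Nat.cast_mul, Nat.cast_ofNat, h, zero_mul, zero_add] at h_cast
  exact one_ne_zero h_cast

theorem two_add_ne_zero_of_sq_eq_two {R : Type*} [CommRing R] [NeZero (2 : R)] {s : R}
    (hs : s ^ 2 = 2) : 2 + s ≠ 0 := fun h =>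
  two_ne_zero (α := R) (by linear_combination (2 - s) * h + hs)

theorem isSquare_two_add_of_pow_eight_eq_neg_one {R : Type*} [CommRing R] [NoZeroDivisors R]
    {s ζ : R} (hs : s ^ 2 = 2) (hζ : ζ ^ 8 = -1) : IsSquare (2 + s) := by
  -- Since `ζ⁻¹ = -ζ⁷`, this is `(ζ² + ζ⁻²)² = 2`; the roots below are `ζ + ζ⁻¹` and `ζ³ + ζ⁻³`.
  have h_sq : (ζ ^ 2 - ζ ^ 6) ^ 2 = s ^ 2 := by
    linear_combination (ζ ^ 4 - 2) * hζ - hs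
  rcases sq_eq_sq_iff_eq_or_eq_neg.mp h_sq with h | h
  · exact ⟨ζ - ζ ^ 7, by linear_combination (2 - ζ ^ 6) * hζ - h⟩
  · exact ⟨ζ ^ 3 - ζ ^ 5, by linear_combination (2 - ζ ^ 2) * hζ + h⟩

theorem exists_pow_eight_eq_neg_one_of_isSquare_two_add {K : Type*} [Field K] [NeZero (2 : K)]
    {s : K} (hs : s ^ 2 = 2) (h_neg_one : IsSquare (-1 : K)) (h_two_add : IsSquare (2 + s)) :
    ∃ ζ : K, ζ ^ 8 = -1 := by
  have h_sub_two : IsSquare (s - 2) := by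
    have h : s - 2 = -1 * s ^ 2 / (2 + s) := by
      rw [eq_div_iff (two_add_ne_zero_of_sq_eq_two hs)]
      linear_combination 2 * hs
    rw [h]
    exact (h_neg_one.mul (IsSquare.sq s)).div h_two_add
  obtain ⟨z, hz⟩ := h_two_add
  obtain ⟨u, hu⟩ := h_sub_two
  obtain ⟨ζ, hζ⟩ : ∃ ζ : K, 1 * (ζ * ζ) + -z * ζ + 1 = 0 :=
    exists_quadratic_eq_zero one_ne_zero ⟨u, by rw [discrim]; linear_combination hu - hz⟩
  have h_one : ζ ^ 2 + 1 = z * ζ := by linear_combination hζ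
  have h_two : (ζ ^ 2) ^ 2 + 1 = s * ζ ^ 2 := by
    linear_combination sq_sq_add_one_eq_of_sq_add_one_eq h_one - ζ ^ 2 * hz
  have h_four : ((ζ ^ 2) ^ 2) ^ 2 + 1 = (s ^ 2 - 2) * (ζ ^ 2) ^ 2 :=
    sq_sq_add_one_eq_of_sq_add_one_eq h_two
  exact ⟨ζ, by linear_combination h_four + ζ ^ 4 * hs⟩

theorem isSquare_two_add_iff_neg_one_pow_eq_one {K : Type*} [Field K] [Finite K]
    (hK : Nat.card K % 8 = 1) {s : K} (hs : s ^ 2 = 2) :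
    IsSquare (2 + s) ↔ (-1 : ℤ) ^ ((Nat.card K - 1) / 8) = 1 := by
  have h2 : (2 : K) ≠ 0 := two_ne_zero_of_odd_natCard (by rw [Nat.odd_iff]; lia)
  have : NeZero (2 : K) := ⟨h2⟩
  have h_ne : (-1 : K) ≠ 1 := fun h => h2 (by linear_combination -h)
  have h_neg_one : IsSquare (-1 : K) := by
    have := Fintype.ofFinite K
    rw [FiniteField.isSquare_neg_one_iff, ← Nat.card_eq_fintype_card]
    lia
  calc IsSquare (2 + s)
    _ ↔ ∃ ζ : K, ζ ^ 8 = -1 :=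
      ⟨exists_pow_eight_eq_neg_one_of_isSquare_two_add hs h_neg_one,
        fun ⟨_, hζ⟩ => isSquare_two_add_of_pow_eight_eq_neg_one hs hζ⟩
    _ ↔ (-1 : K) ^ ((Nat.card K - 1) / 8) = 1 :=
      exists_pow_eq_iff_pow_natCard_sub_one_div_eq_one (by lia) (neg_ne_zero.mpr one_ne_zero)
    _ ↔ (-1 : ℤ) ^ ((Nat.card K - 1) / 8) = 1 := by
      rw [neg_one_pow_eq_one_iff_even h_ne, neg_one_pow_eq_one_iff_even (by decide)]

theorem norm_add_mul_gen_of_dim_eq_two {R S : Type*} [CommRing R] [CommRing S] [Algebra R S]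
    (pb : PowerBasis R S) (h_dim : pb.dim = 2) {D : R} (h_gen : pb.gen ^ 2 = algebraMap R S D)
    (a b : R) :
    Algebra.norm R (algebraMap R S a + algebraMap R S b * pb.gen) = a ^ 2 - D * b ^ 2 := by
  let B := pb.basis.reindex (finCongr h_dim)
  have hB0 : B 0 = 1 := by simp [B]
  have hB1 : B 1 = pb.gen := by simp [B]
  set x := algebraMap R S a + algebraMap R S b * pb.gen
  have h0 : x * B 0 = a • B 0 + b • B 1 := by
    rw [hB0, hB1, mul_one, Algebra.smul_def, Algebra.smul_def, mul_one]
  have h1 : x * B 1 = (D * b) • B 0 + a • B 1 := by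
    rw [hB0, hB1, Algebra.smul_def, Algebra.smul_def, map_mul]
    linear_combination algebraMap R S b * h_gen
  have h_matrix : Algebra.leftMulMatrix B x = !![a, D * b; b, a] := by
    ext i j
    fin_cases i <;> fin_cases j <;> simp [Algebra.leftMulMatrix_eq_repr_mul, h0, h1]
  rw [Algebra.norm_eq_matrix_det B, h_matrix, Matrix.det_fin_two_of]
  ring

theorem minpoly_eq_X_sq_sub_C_s12 {K L : Type*} [Field K] [Ring L] [Nontrivial L] [Algebra K L]
    {D : K} (hD : ¬IsSquare D) {θ : L} (hθ : θ ^ 2 = algebraMap K L D) :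
    minpoly K θ = Polynomial.X ^ 2 - Polynomial.C D := by
  refine (minpoly.eq_of_irreducible_of_monic ?_ ?_ ?_).symm
  · exact X_pow_sub_C_irreducible_of_prime Nat.prime_two fun b hb => hD ⟨b, by rw [← hb, sq]⟩
  · simp [hθ]
  · exact Polynomial.monic_X_pow_sub_C D two_ne_zero

theorem minpoly_ofReal_sqrt_two :
    minpoly ℚ (Real.sqrt 2 : ℂ) = Polynomial.X ^ 2 - Polynomial.C 2 :=
  minpoly_eq_X_sq_sub_C_s12 (by norm_num) (by rw [ofReal_sqrt_two_sq, map_ofNat])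

theorem isIntegral_ofReal_sqrt_two : IsIntegral ℚ (Real.sqrt 2 : ℂ) :=
  .of_pow two_pos <| by
    rw [ofReal_sqrt_two_sq, ← map_ofNat (algebraMap ℚ ℂ) 2]
    exact isIntegral_algebraMap

/-- The basis `1, √2` of `ℚ(√2)` over `ℚ`, as the power basis generated by `√2`. -/
def Q2.powerBasis : PowerBasis ℚ Q2 :=
  IntermediateField.adjoin.powerBasis isIntegral_ofReal_sqrt_two

instance Q2.numberField : NumberField Q2 where
  to_charZero := inferInstance
  to_finiteDimensional := Q2.powerBasis.finite

theorem Q2.coe_powerBasis_gen : (Q2.powerBasis.gen : ℂ) = Real.sqrt 2 :=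
  AdjoinSimple.coe_gen ℚ (Real.sqrt 2 : ℂ)

theorem Q2.powerBasis_dim : Q2.powerBasis.dim = 2 := by
  rw [Q2.powerBasis, adjoin.powerBasis_dim, minpoly_ofReal_sqrt_two,
    Polynomial.natDegree_X_pow_sub_C]

theorem Q2.norm_eq {x : Q2} {a b : ℚ} (hx : (x : ℂ) = a + b * Real.sqrt 2) :
    Algebra.norm ℚ x = a ^ 2 - 2 * b ^ 2 := by
  have h_gen : Q2.powerBasis.gen ^ 2 = algebraMap ℚ Q2 2 := by
    apply Subtype.ext
    rw [map_ofNat, SubmonoidClass.coe_pow, Q2.coe_powerBasis_gen, ofReal_sqrt_two_sq]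
    rfl
  have h_eq : x = algebraMap ℚ Q2 a + algebraMap ℚ Q2 b * Q2.powerBasis.gen := by
    apply Subtype.ext
    simp [hx, Q2.coe_powerBasis_gen]
  rw [h_eq, norm_add_mul_gen_of_dim_eq_two Q2.powerBasis Q2.powerBasis_dim h_gen]

theorem Q2.natCard_quotient_span_singleton_s12 {x : 𝓞 Q2} {a b : ℤ}
    (hx : ((x : Q2) : ℂ) = a + b * Real.sqrt 2) :
    Nat.card (𝓞 Q2 ⧸ (Ideal.span {x} : Ideal (𝓞 Q2))) = (a ^ 2 - 2 * b ^ 2).natAbs := by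
  have h_norm : Algebra.norm ℤ x = a ^ 2 - 2 * b ^ 2 := by
    have h : ((Algebra.norm ℤ x : ℤ) : ℚ) = a ^ 2 - 2 * b ^ 2 := by
      rw [Algebra.coe_norm_int]
      exact Q2.norm_eq (by exact_mod_cast hx)
    exact_mod_cast h
  rw [← Submodule.cardQuot_apply, ← Ideal.absNorm_apply, Ideal.absNorm_span_singleton, h_norm]

theorem Q2.sub_two_sq {x : 𝓞 Q2} (hx : ((x : Q2) : ℂ) = 2 + Real.sqrt 2) : (x - 2) ^ 2 = 2 := by
  apply RingOfIntegers.ext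
  apply Subtype.ext
  have h_two : ((2 : Q2) : ℂ) = 2 := rfl
  simp only [map_pow, map_sub, map_ofNat, SubmonoidClass.coe_pow, AddSubgroupClass.coe_sub]
  rw [hx, h_two, add_sub_cancel_left, ofReal_sqrt_two_sq]

theorem statement_12_general {R : Type*} [CommRing R] (P : Ideal R) [P.IsPrime]
    (hP : Nat.card (R ⧸ P) % 8 = 1) {s : R} (hs : s ^ 2 = 2) :
    (∃ z : R ⧸ P, z ≠ 0 ∧ z ^ 2 = Ideal.Quotient.mk P (2 + s)) ↔
      (-1 : ℤ) ^ ((Nat.card (R ⧸ P) - 1) / 8) = 1 := by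
  have : Finite (R ⧸ P) := Nat.finite_of_card_ne_zero (by lia)
  let _ : Field (R ⧸ P) := (Finite.isField_of_domain (R ⧸ P)).toField
  have hs' : Ideal.Quotient.mk P s ^ 2 = 2 := by rw [← map_pow, hs, map_ofNat]
  have : NeZero (2 : R ⧸ P) := ⟨two_ne_zero_of_odd_natCard (by rw [Nat.odd_iff]; lia)⟩
  rw [← isSquare_two_add_iff_neg_one_pow_eq_one hP hs', map_add, map_ofNat]
  constructor
  · rintro ⟨z, -, hz⟩
    exact ⟨z, by rw [← hz, sq]⟩
  · rintro ⟨z, hz⟩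
    have hz0 : z * z ≠ 0 := hz ▸ two_add_ne_zero_of_sq_eq_two hs'
    exact ⟨z, left_ne_zero_of_mul hz0, by rw [hz, sq]⟩

theorem statement_12 (p : ℕ) (hp : p.Prime) (hp8 : p % 8 = 1)
    (c d : ℤ) (hcd : (p : ℤ) = c ^ 2 - 32 * d ^ 2)
    -- π = c + 4d√2 as an element of the ring of integers of ℚ(√2) :
    (π : 𝓞 Q2) (hπ : ((π : Q2) : ℂ) = (c : ℂ) + 4 * (d : ℂ) * (Real.sqrt 2 : ℂ))
    (hprime : (Ideal.span {π} : Ideal (𝓞 Q2)).IsPrime)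
    -- τ = 2 + √2 :
    (τ : 𝓞 Q2) (hτ : ((τ : Q2) : ℂ) = 2 + (Real.sqrt 2 : ℂ)) :
    (∃ z : 𝓞 Q2 ⧸ (Ideal.span {π} : Ideal (𝓞 Q2)), z ≠ 0 ∧
        z ^ 2 = Ideal.Quotient.mk (Ideal.span {π}) τ) ↔
      (-1 : ℤ) ^ ((p - 1) / 8) = 1 := by
  obtain rfl : Nat.card (𝓞 Q2 ⧸ (Ideal.span {π} : Ideal (𝓞 Q2))) = p := by
    rw [Q2.natCard_quotient_span_singleton_s12 (b := 4 * d) (by rw [hπ]; push_cast; rfl)]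
    lia
  simpa only [add_sub_cancel] using statement_12_general (Ideal.span {π}) hp8 (Q2.sub_two_sq hτ)
end
end
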